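/- Let k ≥ 2 be an integer and let G be a 2-connected graph containing a triangle. If G has minimum degree at least k and at least k+2 vertices, then G contains k cycles of consecutive lengths, i.e., there exists an integer m such that G contains cycles of lengths m, m+1, ..., m+k-1. -/

import Mathlib

open SimpleGraph

/-- `G` is `k`-connected: more than `k` vertices, and deleting any set of fewer than
`k` vertices leaves a connected graph. -/
def KConnected {V : Type*} (G : SimpleGraph V) (k : ℕ) : Prop :=
  k < Nat.card V ∧ ∀ S : Set V, S.Finite → S.ncard < k → (G.induce Sᶜ).Connected

/-- `G + xy`: the graph `G` with the edge `xy` added (equal to `G` if already present). -/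
def AddEdge {V : Type*} (G : SimpleGraph V) (x y : V) : SimpleGraph V :=
  G ⊔ SimpleGraph.fromEdgeSet {s(x, y)}

/-- `G` has a cycle of length `n`. -/
def HasCycleLength {V : Type*} (G : SimpleGraph V) (n : ℕ) : Prop :=
  ∃ (v : V) (c : G.Walk v v), c.IsCycle ∧ c.length = n

/-- `G` contains `k` cycles of consecutive lengths. -/
def HasConsecCycles {V : Type*} (G : SimpleGraph V) (k : ℕ) : Prop :=
  ∃ m : ℕ, ∀ i < k, HasCycleLength G (m + i)

/-!
Consider a connected set `C` and two roots outside it with neighbourhoods `X` and `Y` in `C`, such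
that adding the roots and an edge between them gives a 2-connected graph in which every vertex of
`C` except one has degree greater than `k`. Then `k` of the root-to-root path lengths through `C`
form an increasing sequence with gaps at most two (a variant of the admissible paths of Gao, Huo,
Liu and Ma). The proof is by induction on the size of `C`. Cut vertices, and roots with a single
neighbour, are handled by recursing into a part of `C`. Otherwise a core is chosen, a large clique
or a maximal complete bipartite graph at a root neighbourhood: deleting it costs the other vertices
few neighbours, the induction hypothesis applies to what remains, and the loss is made up for by
routing through the core, which realises many lengths itself.

A triangle produces a set `H` in which paths have `L ≥ 2` consecutive lengths: a maximum clique if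
there is a `K₄`, and otherwise two triangles sharing an edge or a single triangle. A component
outside `H` provides `k - L + 1` path lengths with gaps at most `2 ≤ L`, so the sums cover `k`
consecutive integers.
-/

section Development

open Finset
open scoped Classical

variable {V : Type*} {G : SimpleGraph V}

/-! ### Paths inside a vertex set -/

/-- `G` has a path from `u` to `v` with `n` edges whose vertices all lie in `C`. -/
def HasPathIn (G : SimpleGraph V) (C : Finset V) (u v : V) (n : ℕ) : Prop :=
  ∃ p : G.Walk u v, p.IsPath ∧ (∀ w ∈ p.support, w ∈ C) ∧ p.length = n

namespace HasPathIn

variable {C D : Finset V} {u v w x : V} {m n : ℕ}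

theorem mono (h : HasPathIn G C u v n) (hCD : C ⊆ D) : HasPathIn G D u v n :=
  let ⟨p, hp, hC, hn⟩ := h
  ⟨p, hp, fun w hw => hCD (hC w hw), hn⟩

theorem refl (hv : v ∈ C) : HasPathIn G C v v 0 :=
  ⟨.nil, .nil, by simpa using hv, rfl⟩

theorem left_mem (h : HasPathIn G C u v n) : u ∈ C :=
  let ⟨p, _, hC, _⟩ := h
  hC u p.start_mem_support

theorem symm (h : HasPathIn G C u v n) : HasPathIn G C v u n :=
  let ⟨p, hp, hC, hn⟩ := h
  ⟨p.reverse, hp.reverse, by simpa using hC, by simpa using hn⟩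

theorem append (h : HasPathIn G C u v m) (hvw : G.Adj v w) (h' : HasPathIn G D w x n)
    (hCD : Disjoint C D) : HasPathIn G (C ∪ D) u x (m + n + 1) := by
  obtain ⟨p, hp, hC, rfl⟩ := h
  obtain ⟨q, hq, hD, rfl⟩ := h'
  refine ⟨p.append (.cons hvw q), ?_, fun y hy => ?_, ?_⟩
  · rw [Walk.isPath_def, Walk.support_append, Walk.support_cons, List.tail_cons,
      List.nodup_append']
    exact ⟨hp.support_nodup, hq.support_nodup,
      fun y hy hy' => disjoint_left.1 hCD (hC y hy) (hD y hy')⟩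
  · rw [Walk.support_append, Walk.support_cons, List.tail_cons, List.mem_append] at hy
    exact mem_union.2 (hy.imp (hC y) (hD y))
  · rw [Walk.length_append, Walk.length_cons, Nat.add_assoc]

theorem cons (hu : u ∈ C) (huw : G.Adj u w) (h : HasPathIn G (C.erase u) w v n) :
    HasPathIn G C u v (n + 1) := by
  have := (refl (mem_singleton_self u)).append huw h (by simp)
  simpa [insert_erase hu] using this

theorem of_adj (hu : u ∈ C) (hv : v ∈ C) (huv : G.Adj u v) : HasPathIn G C u v 1 :=
  .cons hu huv (.refl (mem_erase.2 ⟨huv.ne', hv⟩))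

theorem of_adj_adj (hu : u ∈ C) (hv : v ∈ C) (hw : w ∈ C) (huv : G.Adj u v) (hvw : G.Adj v w)
    (huw : u ≠ w) : HasPathIn G C u w 2 :=
  .cons hu huv (.of_adj (mem_erase.2 ⟨huv.ne', hv⟩) (mem_erase.2 ⟨huw.symm, hw⟩) hvw)

theorem of_walk (p : G.Walk u v) (hp : ∀ w ∈ p.support, w ∈ C) : ∃ n, HasPathIn G C u v n :=
  ⟨_, p.bypass, p.bypass_isPath, fun w hw => hp w (p.support_bypass_subset_support hw), rfl⟩

theorem exists_concat (h : HasPathIn G C u v n) (hvw : G.Adj v w) (hw : w ∈ C) :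
    ∃ m, HasPathIn G C u w m := by
  obtain ⟨p, -, hC, -⟩ := h
  exact of_walk (p.concat hvw) (by simpa [Walk.support_concat, or_imp, forall_and] using ⟨hC, hw⟩)

theorem mem_of_closed {M : Finset V} (h : HasPathIn G C u v n) (hu : u ∈ M)
    (hM : ∀ x ∈ M, ∀ y ∈ C, G.Adj x y → y ∈ M) : v ∈ M := by
  obtain ⟨p, -, hC, -⟩ := h
  induction p with
  | nil => exact hu
  | cons hxy q ih =>
    rw [Walk.support_cons, List.forall_mem_cons] at hC
    exact ih (hM _ hu _ (hC.2 _ q.start_mem_support) hxy) hC.2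

end HasPathIn

/-- The graph induced on `C` is connected (in particular `C` is nonempty). -/
def ConnectedIn (G : SimpleGraph V) (C : Finset V) : Prop :=
  (G.induce (C : Set V)).Connected

/-- The vertex set of the component of `v` in the graph induced on `C`. -/
noncomputable def componentIn (G : SimpleGraph V) (C : Finset V) (v : V) : Finset V :=
  {w ∈ C | ∃ n, HasPathIn G C v w n}

section Connectivity

variable {C H M : Finset V} {c u v w : V}

theorem connectedIn_iff :
    ConnectedIn G C ↔ C.Nonempty ∧ ∀ u ∈ C, ∀ v ∈ C, ∃ n, HasPathIn G C u v n := by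
  rw [ConnectedIn, connected_iff, and_comm]
  refine and_congr (by simp [Finset.Nonempty]) ⟨fun h u hu v hv => ?_, fun h u v => ?_⟩
  · obtain ⟨p⟩ := h ⟨u, hu⟩ ⟨v, hv⟩
    refine HasPathIn.of_walk (p.map (Embedding.induce _).toHom) fun w hw => ?_
    obtain ⟨x, -, rfl⟩ := List.mem_map.1 (Walk.support_map _ p ▸ hw)
    exact x.2
  · obtain ⟨n, p, -, hC, -⟩ := h u u.2 v v.2
    exact ⟨p.induce _ hC⟩

theorem ConnectedIn.nonempty (h : ConnectedIn G C) : C.Nonempty :=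
  (connectedIn_iff.1 h).1

theorem ConnectedIn.exists_path (h : ConnectedIn G C) (hu : u ∈ C) (hv : v ∈ C) :
    ∃ n, HasPathIn G C u v n :=
  (connectedIn_iff.1 h).2 u hu v hv

theorem ConnectedIn.subset_of_closed (h : ConnectedIn G C) (hMC : M ⊆ C) (hM : M.Nonempty)
    (hcl : ∀ u ∈ M, ∀ w ∈ C, G.Adj u w → w ∈ M) : C ⊆ M := by
  obtain ⟨u, hu⟩ := hM
  intro v hv
  obtain ⟨n, p⟩ := h.exists_path (hMC hu) hv
  exact p.mem_of_closed hu hcl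

theorem ConnectedIn.exists_adj (h : ConnectedIn G C) (hMC : M ⊆ C) (hM : M.Nonempty) (hw : w ∈ C)
    (hwM : w ∉ M) : ∃ u ∈ M, ∃ v ∈ C, v ∉ M ∧ G.Adj u v := by
  by_contra! hcl
  exact hwM (h.subset_of_closed hMC hM (by grind) hw)

theorem componentIn_subset : componentIn G C v ⊆ C := filter_subset _ _

theorem mem_componentIn_self (hv : v ∈ C) : v ∈ componentIn G C v :=
  mem_filter.2 ⟨hv, 0, .refl hv⟩

theorem mem_componentIn_of_adj (hu : u ∈ componentIn G C v) (hw : w ∈ C) (huw : G.Adj u w) :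
    w ∈ componentIn G C v := by
  obtain ⟨-, n, hn⟩ := mem_filter.1 hu
  exact mem_filter.2 ⟨hw, hn.exists_concat huw hw⟩

theorem componentIn_subset_of_closed (hv : v ∈ M)
    (hM : ∀ u ∈ M, ∀ w ∈ C, G.Adj u w → w ∈ M) : componentIn G C v ⊆ M := fun _ hw =>
  let ⟨_, _, hn⟩ := mem_filter.1 hw
  hn.mem_of_closed hv hM

theorem connectedIn_of_forall_closed (hC : C.Nonempty)
    (h : ∀ M ⊆ C, M.Nonempty → (∀ u ∈ M, ∀ w ∈ C, G.Adj u w → w ∈ M) → C ⊆ M) :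
    ConnectedIn G C :=
  connectedIn_iff.2 ⟨hC, fun u hu _ hv =>
    (mem_filter.1 (h (componentIn G C u) componentIn_subset ⟨u, mem_componentIn_self hu⟩
      (fun _ hx _ hy => mem_componentIn_of_adj hx hy) hv)).2⟩

theorem connectedIn_componentIn (hv : v ∈ C) : ConnectedIn G (componentIn G C v) := by
  refine connectedIn_of_forall_closed ⟨v, mem_componentIn_self hv⟩ fun M hM ⟨m, hm⟩ hcl => ?_
  refine componentIn_subset_of_closed ?_ fun u hu w hw huw =>
    hcl u hu w (mem_componentIn_of_adj (hM hu) hw huw) huw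
  by_contra hvM
  have hdisj : componentIn G C v ⊆ componentIn G C v \ M :=
    componentIn_subset_of_closed (mem_sdiff.2 ⟨mem_componentIn_self hv, hvM⟩)
      fun u hu w hw huw => by
        have huC := (mem_sdiff.1 hu).1
        exact mem_sdiff.2 ⟨mem_componentIn_of_adj huC hw huw,
          fun hwM => (mem_sdiff.1 hu).2 (hcl w hwM u huC huw.symm)⟩
  exact (mem_sdiff.1 (hdisj (hM hm))).2 hm

theorem componentIn_eq_of_mem (hu : u ∈ componentIn G C v) :
    componentIn G C u = componentIn G C v := by
  have huC := componentIn_subset hu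
  have hsub : componentIn G C u ⊆ componentIn G C v :=
    componentIn_subset_of_closed hu fun x hx y hy => mem_componentIn_of_adj hx hy
  refine hsub.antisymm ((connectedIn_componentIn ?_).subset_of_closed hsub
    ⟨u, mem_componentIn_self huC⟩ fun _ hx _ hy =>
      mem_componentIn_of_adj hx (componentIn_subset hy))
  obtain ⟨n, hn⟩ := (mem_filter.1 hu).2
  exact hn.left_mem

theorem mem_componentIn_sdiff (hu : u ∈ componentIn G (C \ H) v) : u ∈ C ∧ u ∉ H :=
  mem_sdiff.1 (componentIn_subset hu)

theorem componentIn_sdiff_subset : componentIn G (C \ H) v ⊆ C :=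
  componentIn_subset.trans sdiff_subset

theorem mem_componentIn_sdiff_or_of_adj (hu : u ∈ componentIn G (C \ H) v) (hw : w ∈ C)
    (huw : G.Adj u w) : w ∈ componentIn G (C \ H) v ∨ w ∈ H :=
  or_iff_not_imp_right.2 fun hwH => mem_componentIn_of_adj hu (mem_sdiff.2 ⟨hw, hwH⟩) huw

end Connectivity

/-! ### Admissible lengths -/

/-- `P` holds at the `k` terms of an increasing sequence with gaps at most two. -/
def Admissible (k : ℕ) (P : ℕ → Prop) : Prop :=
  ∃ f : ℕ → ℕ, (∀ i < k, P (f i)) ∧ ∀ i, i + 1 < k → f i < f (i + 1) ∧ f (i + 1) ≤ f i + 2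

namespace Admissible

variable {a k l r : ℕ} {P Q R : ℕ → Prop}

theorem imp (h : Admissible k P) (hPQ : ∀ n, P n → Q n) : Admissible k Q :=
  let ⟨f, hf, hgap⟩ := h
  ⟨f, fun i hi => hPQ _ (hf i hi), hgap⟩

theorem mono (h : Admissible k P) (hl : l ≤ k) : Admissible l P :=
  let ⟨f, hf, hgap⟩ := h
  ⟨f, fun i hi => hf i (hi.trans_le hl), fun i hi => hgap i (hi.trans_le hl)⟩

theorem one {n : ℕ} (h : P n) : Admissible 1 P :=
  ⟨fun _ => n, fun _ _ => h, fun _ hi => by omega⟩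

theorem of_interval (h : ∀ i < k, P (a + i)) : Admissible k P :=
  ⟨fun i => a + i, h, fun i _ => by dsimp only; omega⟩

theorem of_step_two (h : ∀ i < k, P (a + 2 * i)) : Admissible k P :=
  ⟨fun i => a + 2 * i, h, fun i _ => by dsimp only; omega⟩

theorem of_zero_of_interval (h0 : P 0) (h : ∀ i < k, P (2 + i)) : Admissible (k + 1) P := by
  refine ⟨fun i => if i = 0 then 0 else i + 1, fun i hi => ?_, fun i hi => ?_⟩
  · dsimp only
    split_ifs with hi0
    · exact h0
    · rw [show i + 1 = 2 + (i - 1) by omega]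
      exact h _ (by omega)
  · rcases i.eq_zero_or_pos with rfl | hpos
    · simp
    · simp [hpos.ne']

/-- Run through the first sequence with the second at its start, then through the second with the
first at its end. -/
theorem add {b : ℕ} (hP : Admissible a P) (hQ : Admissible b Q) (ha : 1 ≤ a) (hb : 1 ≤ b)
    (hk : k + 1 ≤ a + b) (hR : ∀ t s, P t → Q s → R (t + s + r)) : Admissible k R := by
  obtain ⟨f, hf, hfgap⟩ := hP
  obtain ⟨g, hg, hggap⟩ := hQ
  refine ⟨fun i => if i < a then f i + g 0 + r else f (a - 1) + g (i - (a - 1)) + r,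
    fun i hi => ?_, fun i hi => ?_⟩
  · dsimp only
    split_ifs with h
    exacts [hR _ _ (hf i h) (hg 0 hb), hR _ _ (hf _ (by omega)) (hg _ (by omega))]
  · dsimp only
    split_ifs with h h'
    · have := hfgap i h'
      omega
    · obtain rfl : i = a - 1 := by omega
      have := hggap 0 (by omega)
      rw [show a - 1 + 1 - (a - 1) = 0 + 1 by omega]
      omega
    · omega
    · have := hggap (i - (a - 1)) (by omega)
      rw [show i + 1 - (a - 1) = i - (a - 1) + 1 by omega]
      omega

end Admissible

/-- Some path with `n` edges inside `C` joins a vertex of `X` to a vertex of `Y`. -/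
def Linked (G : SimpleGraph V) (C X Y : Finset V) (n : ℕ) : Prop :=
  ∃ u ∈ X, ∃ v ∈ Y, HasPathIn G C u v n

namespace Linked

variable {C D H S T X X' Y Y' E : Finset V} {c : V} {k n s t : ℕ}

theorem symm (h : Linked G C X Y n) : Linked G C Y X n :=
  let ⟨u, hu, v, hv, p⟩ := h
  ⟨v, hv, u, hu, p.symm⟩

theorem mono (h : Linked G C X Y n) (hC : C ⊆ D) (hX : X ⊆ X') (hY : Y ⊆ Y') :
    Linked G D X' Y' n :=
  let ⟨u, hu, v, hv, p⟩ := h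
  ⟨u, hX hu, v, hY hv, p.mono hC⟩

theorem singleton (c : V) : Linked G {c} {c} {c} 0 :=
  ⟨c, mem_singleton_self c, c, mem_singleton_self c, .refl (mem_singleton_self c)⟩

theorem prepend (hE : ∀ e ∈ E, Linked G H X {e} t) (h : Linked G D S T s)
    (hS : ∀ u ∈ S, ∃ e ∈ E, G.Adj e u) (hd : Disjoint H D) :
    Linked G (H ∪ D) X T (t + s + 1) := by
  obtain ⟨u, hu, v, hv, p⟩ := h
  obtain ⟨e, he, heu⟩ := hS u hu
  obtain ⟨x, hx, e', he', q⟩ := hE e he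
  obtain rfl := mem_singleton.1 he'
  exact ⟨x, hx, v, hv, q.append heu p hd⟩

theorem append (h : Linked G D X S s) (hc : Linked G H {c} Y t) (hS : ∀ u ∈ S, G.Adj u c)
    (hd : Disjoint D H) : Linked G (D ∪ H) X Y (s + t + 1) := by
  have := prepend (E := {c}) (fun e he => mem_singleton.1 he ▸ hc.symm) h.symm
    (fun u hu => ⟨c, mem_singleton_self c, (hS u hu).symm⟩) hd.symm
  rw [union_comm, Nat.add_comm s t]
  exact this.symm

end Linked

theorem Admissible.linked_symm {C X Y : Finset V} {k : ℕ} (h : Admissible k (Linked G C Y X)) :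
    Admissible k (Linked G C X Y) :=
  h.imp fun _ => Linked.symm

theorem ConnectedIn.exists_linked {C X Y : Finset V} (h : ConnectedIn G C) (hX : X ⊆ C)
    (hY : Y ⊆ C) (neX : X.Nonempty) (neY : Y.Nonempty) : ∃ n, Linked G C X Y n := by
  obtain ⟨u, hu⟩ := neX
  obtain ⟨v, hv⟩ := neY
  obtain ⟨n, p⟩ := h.exists_path (hX hu) (hY hv)
  exact ⟨n, u, hu, v, hv, p⟩

/-- The number of neighbours of `v` in `D`. -/
noncomputable def degIn (G : SimpleGraph V) (v : V) (D : Finset V) : ℕ := #{w ∈ D | G.Adj v w}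

/-- The indicator function of `X`, counting the edge to a root with neighbourhood `X`. -/
noncomputable def ind (X : Finset V) (v : V) : ℕ := if v ∈ X then 1 else 0

/-- The vertices of `D` with a neighbour in `E`. -/
noncomputable def nbrsIn (G : SimpleGraph V) (E D : Finset V) : Finset V :=
  {v ∈ D | ∃ e ∈ E, G.Adj e v}

section Degrees

variable {C D E K X Y : Finset V} {c u v : V} {m : ℕ}

theorem ind_le_one : ind X v ≤ 1 := by
  unfold ind
  split_ifs <;> simp

theorem ind_of_mem (h : v ∈ X) : ind X v = 1 := if_pos h

theorem ind_of_notMem (h : v ∉ X) : ind X v = 0 := if_neg h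

theorem ind_congr (h : v ∈ X ↔ v ∈ Y) : ind X v = ind Y v := by
  simp only [ind, h]

theorem ind_inter_of_mem (hv : v ∈ Y) : ind (X ∩ Y) v = ind X v :=
  ind_congr (by simp [hv])

theorem mem_nbrsIn : v ∈ nbrsIn G E D ↔ v ∈ D ∧ ∃ e ∈ E, G.Adj e v := mem_filter

theorem nbrsIn_subset : nbrsIn G E D ⊆ D := filter_subset _ _

theorem mem_nbrsIn_singleton : v ∈ nbrsIn G {c} D ↔ v ∈ D ∧ G.Adj c v := by
  simp [mem_nbrsIn]

theorem ind_nbrsIn_of_subset (hv : v ∈ D) (hDC : D ⊆ C) :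
    ind (nbrsIn G E C) v = ind (nbrsIn G E D) v :=
  ind_congr (by simp [mem_nbrsIn, hv, hDC hv])

theorem degIn_le_of_forall_adj (h : ∀ w ∈ C, G.Adj v w → w ∈ D) : degIn G v C ≤ degIn G v D :=
  card_le_card fun w hw =>
    let ⟨hwC, hvw⟩ := mem_filter.1 hw
    mem_filter.2 ⟨h w hwC hvw, hvw⟩

theorem degIn_le_add (h : ∀ w ∈ C, G.Adj v w → w ∈ D ∨ w ∈ E) :
    degIn G v C ≤ degIn G v D + degIn G v E := by
  refine (degIn_le_of_forall_adj (D := D ∪ E) (by simpa using h)).trans ?_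
  rw [degIn, filter_union]
  exact card_union_le _ _

theorem degIn_le_card : degIn G v C ≤ #C := card_filter_le _ _

theorem degIn_empty : degIn G v ∅ = 0 := rfl

theorem degIn_lt_card (h : ∃ w ∈ K, ¬ G.Adj v w) : degIn G v K < #K :=
  card_lt_card (filter_ssubset.2 h)

theorem degIn_lt_card_of_mem (h : v ∈ K) : degIn G v K < #K :=
  degIn_lt_card ⟨v, h, G.irrefl⟩

theorem degIn_eq_zero : degIn G v E = 0 ↔ ∀ e ∈ E, ¬ G.Adj v e := by
  rw [degIn, card_eq_zero, filter_eq_empty_iff]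

theorem degIn_eq_zero_of_notMem_nbrsIn (hv : v ∈ C) (h : v ∉ nbrsIn G E C) : degIn G v E = 0 :=
  degIn_eq_zero.2 fun e he hve => h (mem_nbrsIn.2 ⟨hv, e, he, hve.symm⟩)

theorem mem_nbrsIn_of_degIn_pos (hv : v ∈ C) (h : 0 < degIn G v E) : v ∈ nbrsIn G E C :=
  by_contra fun h' => h.ne' (degIn_eq_zero_of_notMem_nbrsIn hv h')

theorem degIn_le_mul_ind (hv : v ∈ C) (h : degIn G v E ≤ m) :
    degIn G v E ≤ m * ind (nbrsIn G E C) v := by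
  by_cases hvE : v ∈ nbrsIn G E C
  · rwa [ind_of_mem hvE, mul_one]
  · simp [degIn_eq_zero_of_notMem_nbrsIn hv hvE]

end Degrees

/-! ### Lobes and rooted sets -/

/-- `M` is a nonempty union of components of `C - c`. -/
structure IsLobe (G : SimpleGraph V) (C : Finset V) (c : V) (M : Finset V) : Prop where
  subset : M ⊆ C
  notMem : c ∉ M
  nonempty : M.Nonempty
  closed : ∀ u ∈ M, ∀ w ∈ C, G.Adj u w → w ∈ M ∨ w = c

namespace IsLobe

variable {C D M N : Finset V} {c d v : V}

theorem componentIn_sdiff (hv : v ∈ C) (hvc : v ≠ c) :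
    IsLobe G C c (componentIn G (C \ {c}) v) where
  subset := componentIn_sdiff_subset
  notMem h := (mem_componentIn_sdiff h).2 (mem_singleton_self c)
  nonempty := ⟨v, mem_componentIn_self (by simp [hv, hvc])⟩
  closed _ hu _ hw huw :=
    (mem_componentIn_sdiff_or_of_adj hu hw huw).imp_right mem_singleton.1

theorem componentIn_subset (h : IsLobe G C c M) (hv : v ∈ M) :
    componentIn G (C \ {c}) v ⊆ M :=
  componentIn_subset_of_closed hv fun u hu w hw huw => by
    rw [mem_sdiff, mem_singleton] at hw
    exact (h.closed u hu w hw.1 huw).resolve_right hw.2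

theorem notMem_of_adj_sdiff {u w : V} (h : IsLobe G C c M) (hu : u ∈ C \ M) (huc : u ≠ c)
    (huw : G.Adj u w) : w ∉ M := fun hw => by
  rw [mem_sdiff] at hu
  exact (h.closed w hw u hu.1 huw.symm).elim hu.2 huc

theorem sdiff_insert (h : IsLobe G C c M) (hne : (C \ insert c M).Nonempty) :
    IsLobe G C c (C \ insert c M) where
  subset := sdiff_subset
  notMem := by simp
  nonempty := hne
  closed u hu w hw huw := by
    have := h.closed w
    grind [huw.symm]

theorem nbrsIn_nonempty (h : IsLobe G C c M) (hC : ConnectedIn G C) (hc : c ∈ C) :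
    (nbrsIn G {c} M).Nonempty := by
  obtain ⟨u, hu, w, hw, hwM, huw⟩ := hC.exists_adj h.subset h.nonempty hc h.notMem
  obtain rfl := (h.closed u hu w hw huw).resolve_left hwM
  exact ⟨u, mem_nbrsIn_singleton.2 ⟨hu, huw.symm⟩⟩

theorem degIn_le (h : IsLobe G C c M) (hv : v ∈ M) :
    degIn G v C ≤ degIn G v M + ind (nbrsIn G {c} M) v := by
  have hle : degIn G v C ≤ degIn G v M + degIn G v {c} := degIn_le_add fun w hw hvw =>
    (h.closed v hv w hw hvw).imp_right mem_singleton.2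
  have hc : degIn G v {c} ≤ 1 * ind (nbrsIn G {c} M) v := degIn_le_mul_ind hv degIn_le_card
  omega

theorem degIn_le_sdiff (h : IsLobe G C c M) (hv : v ∈ C \ M) (hvc : v ≠ c) :
    degIn G v C ≤ degIn G v (C \ M) :=
  degIn_le_of_forall_adj fun _ hw hvw => mem_sdiff.2 ⟨hw, h.notMem_of_adj_sdiff hv hvc hvw⟩

theorem connectedIn_sdiff (h : IsLobe G C c M) (hC : ConnectedIn G C) (hc : c ∈ C) :
    ConnectedIn G (C \ M) := by
  have hcM : c ∈ C \ M := mem_sdiff.2 ⟨hc, h.notMem⟩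
  refine connectedIn_of_forall_closed ⟨c, hcM⟩ fun N hN hne hcl => ?_
  have hcN : c ∈ N := by
    by_contra hcN
    refine hcN (hC.subset_of_closed (hN.trans sdiff_subset) hne (fun u hu w hw huw => ?_) hc)
    exact hcl u hu w (mem_sdiff.2 ⟨hw, h.notMem_of_adj_sdiff (hN hu) (ne_of_mem_of_not_mem hu hcN)
      huw⟩) huw
  have hsub : C ⊆ N ∪ M := by
    refine hC.subset_of_closed (union_subset (hN.trans sdiff_subset) h.subset)
      (hne.mono subset_union_left) fun u hu w hw huw => ?_
    by_cases hwM : w ∈ M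
    · exact mem_union_right _ hwM
    rcases mem_union.1 hu with hu | hu
    · exact mem_union_left _ (hcl u hu w (mem_sdiff.2 ⟨hw, hwM⟩) huw)
    · exact mem_union_left _ (((h.closed u hu w hw huw).resolve_left hwM) ▸ hcN)
  exact fun v hv => (mem_union.1 (hsub (mem_sdiff.1 hv).1)).resolve_right (mem_sdiff.1 hv).2

theorem of_sdiff (h : IsLobe G C c M) (hN : IsLobe G (C \ M) d N) (hc : c ∉ N) :
    IsLobe G C d N where
  subset := hN.subset.trans sdiff_subset
  notMem := hN.notMem
  nonempty := hN.nonempty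
  closed u hu w hw huw := hN.closed u hu w (mem_sdiff.2 ⟨hw,
    h.notMem_of_adj_sdiff (hN.subset hu) (ne_of_mem_of_not_mem hu hc) huw⟩) huw

theorem union_of_sdiff (h : IsLobe G C c M) (hN : IsLobe G (C \ M) d N) (hd : d ∉ M)
    (hc : c ∈ N) : IsLobe G C d (N ∪ M) where
  subset := union_subset (hN.subset.trans sdiff_subset) h.subset
  notMem := by simp [hN.notMem, hd]
  nonempty := hN.nonempty.mono subset_union_left
  closed u hu w hw huw := by
    by_cases hwM : w ∈ M
    · exact .inl (mem_union_right _ hwM)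
    rcases mem_union.1 hu with hu | hu
    · exact (hN.closed u hu w (mem_sdiff.2 ⟨hw, hwM⟩) huw).imp_left (mem_union_left _)
    · exact .inl (mem_union_left _ (((h.closed u hu w hw huw).resolve_left hwM) ▸ hc))

theorem trans (h : IsLobe G C c M) (hN : IsLobe G M d N)
    (hav : ∀ u ∈ N, u ∉ nbrsIn G {c} M) : IsLobe G C d N where
  subset := hN.subset.trans h.subset
  notMem := hN.notMem
  nonempty := hN.nonempty
  closed u hu w hw huw := by
    refine hN.closed u hu w ((h.closed u (hN.subset hu) w hw huw).resolve_right ?_) huw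
    rintro rfl
    exact hav u hu (mem_nbrsIn_singleton.2 ⟨hN.subset hu, huw.symm⟩)

end IsLobe

/-- A lobe which avoids both attachment sets `S` and `T`. -/
def IsFreeLobe (G : SimpleGraph V) (D S T : Finset V) (c : V) (M : Finset V) : Prop :=
  IsLobe G D c M ∧ ∀ u ∈ M, u ∉ S ∧ u ∉ T

theorem IsFreeLobe.symm {D S T M : Finset V} {c : V} (h : IsFreeLobe G D S T c M) :
    IsFreeLobe G D T S c M :=
  ⟨h.1, fun u hu => (h.2 u hu).symm⟩

/-- A connected set `C` with two nonempty attachment sets, thought of as the neighbourhoods in `C`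
of two roots outside `C`. -/
structure IsAttached (G : SimpleGraph V) (C X Y : Finset V) : Prop where
  connected : ConnectedIn G C
  subset_left : X ⊆ C
  subset_right : Y ⊆ C
  nonempty_left : X.Nonempty
  nonempty_right : Y.Nonempty

/-- Adding to `C` two adjacent roots with neighbourhoods `X` and `Y` gives a `2`-connected graph in
which every vertex of `C` other than `z` has degree greater than `k`. -/
structure IsRooted (G : SimpleGraph V) (k : ℕ) (z : V) (C X Y : Finset V) : Prop extends
    IsAttached G C X Y where
  not_isFreeLobe : ∀ c ∈ C, ∀ M, ¬ IsFreeLobe G C X Y c M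
  le_degIn : ∀ v ∈ C, v ≠ z → k + 1 ≤ degIn G v C + ind X v + ind Y v
  exists_ne : ∃ v ∈ C, v ≠ z

/-- The induction hypothesis: rooted sets with fewer than `n` vertices have `k` admissible lengths
of paths between their roots. -/
def AdmissibleBelow (G : SimpleGraph V) (n : ℕ) : Prop :=
  ∀ ⦃k : ℕ⦄ ⦃z : V⦄ ⦃C X Y : Finset V⦄, #C < n → IsRooted G k z C X Y →
    Admissible k (Linked G C X Y)

theorem IsAttached.symm {C X Y : Finset V} (h : IsAttached G C X Y) : IsAttached G C Y X :=
  ⟨h.connected, h.subset_right, h.subset_left, h.nonempty_right, h.nonempty_left⟩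

theorem IsRooted.symm {k : ℕ} {z : V} {C X Y : Finset V} (h : IsRooted G k z C X Y) :
    IsRooted G k z C Y X where
  toIsAttached := h.toIsAttached.symm
  not_isFreeLobe c hc M hM := h.not_isFreeLobe c hc M hM.symm
  le_degIn v hv hvz := by
    have := h.le_degIn v hv hvz
    omega
  exists_ne := h.exists_ne

section Extension

variable {n k L r : ℕ} {z c : V} {D S T M : Finset V} {P Q : ℕ → Prop}

theorem IsAttached.isRooted_sdiff (h : IsAttached G D S T)
    (hz : ∀ c ∈ D, ∀ M, IsFreeLobe G D S T c M → z ∈ M) (hc : c ∈ D)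
    (hM : IsFreeLobe G D S T c M)
    (hmax : ∀ d ∈ D, ∀ N, IsFreeLobe G D S T d N → #N ≤ #M)
    (hdeg : ∀ v ∈ D, v ≠ z → k + 1 ≤ degIn G v D + ind S v + ind T v)
    (hne : ∃ v ∈ D \ M, v ≠ c) : IsRooted G k c (D \ M) S T where
  connected := hM.1.connectedIn_sdiff h.connected hc
  subset_left v hv := mem_sdiff.2 ⟨h.subset_left hv, fun hvM => (hM.2 v hvM).1 hv⟩
  subset_right v hv := mem_sdiff.2 ⟨h.subset_right hv, fun hvM => (hM.2 v hvM).2 hv⟩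
  nonempty_left := h.nonempty_left
  nonempty_right := h.nonempty_right
  exists_ne := hne
  not_isFreeLobe d hd N hN := by
    obtain ⟨hdD, hdM⟩ := mem_sdiff.1 hd
    by_cases hcN : c ∈ N
    · have hle := hmax d hdD (N ∪ M) ⟨hM.1.union_of_sdiff hN.1 hdM hcN, fun u hu =>
        (mem_union.1 hu).elim (hN.2 u) (hM.2 u)⟩
      exact hM.1.notMem (eq_of_subset_of_card_le subset_union_right hle ▸ mem_union_left _ hcN)
    · have hzN := hz d hdD N ⟨hM.1.of_sdiff hN.1 hcN, hN.2⟩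
      exact (mem_sdiff.1 (hN.1.subset hzN)).2 (hz c hc M hM)
  le_degIn v hv hvc := by
    have := hdeg v (mem_sdiff.1 hv).1 fun hvz => (mem_sdiff.1 hv).2 (hvz ▸ hz c hc M hM)
    have := hM.1.degIn_le_sdiff hv hvc
    omega

theorem IsAttached.isRooted_or_isFreeLobe (h : IsAttached G D S T)
    (hz : ∀ c ∈ D, ∀ M, IsFreeLobe G D S T c M → z ∈ M)
    (hdeg : ∀ v ∈ D, v ≠ z → k + 1 ≤ degIn G v D + ind S v + ind T v)
    (hne : ∃ v ∈ D, v ≠ z) :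
    (∃ D' ⊆ D, ∃ z', IsRooted G k z' D' S T) ∨
      ∃ c ∈ D, ∃ M, IsFreeLobe G D S T c M ∧ z ∈ M ∧ D = insert c M := by
  by_cases hfree : ∃ M, ∃ c ∈ D, IsFreeLobe G D S T c M
  swap
  · push Not at hfree
    exact .inl ⟨D, subset_rfl, z, h, fun c hc M => hfree M c hc, hdeg, hne⟩
  obtain ⟨M, hM, hmax⟩ := exists_max_image {M ∈ D.powerset | ∃ c ∈ D, IsFreeLobe G D S T c M} card
    (by
      obtain ⟨M, c, hc, hM⟩ := hfree
      exact ⟨M, mem_filter.2 ⟨mem_powerset.2 hM.1.subset, c, hc, hM⟩⟩)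
  obtain ⟨-, c, hc, hM⟩ := mem_filter.1 hM
  by_cases hne' : ∃ v ∈ D \ M, v ≠ c
  · refine .inl ⟨D \ M, sdiff_subset, c, h.isRooted_sdiff hz hc hM (fun d hd N hN => ?_) hdeg hne'⟩
    exact hmax N (mem_filter.2 ⟨mem_powerset.2 hN.1.subset, d, hd, hN⟩)
  · push Not at hne'
    refine .inr ⟨c, hc, M, hM, hz c hc M hM, subset_antisymm (fun v hv => ?_)
      (insert_subset hc hM.1.subset)⟩
    by_cases hvM : v ∈ M
    · exact mem_insert_of_mem hvM
    · exact mem_insert.2 (.inl (hne' v (mem_sdiff.2 ⟨hv, hvM⟩)))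

/-- Paths through `D` found by induction are combined with the `L` path lengths `P` outside `D`;
here `L - 1` bounds the degree which the vertices of `D` lose. -/
theorem IsAttached.admissible_or_isFreeLobe (h : IsAttached G D S T) (ih : AdmissibleBelow G n)
    (hn : #D < n) (hne : ∃ v ∈ D, v ≠ z)
    (hz : ∀ c ∈ D, ∀ M, IsFreeLobe G D S T c M → z ∈ M)
    (hdeg : ∀ v ∈ D, v ≠ z → k + 2 ≤ degIn G v D + ind S v + ind T v + L)
    (hL : 1 ≤ L) (hP : Admissible L P)
    (hPQ : ∀ t s, P t → Linked G D S T s → Q (t + s + r)) :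
    Admissible k Q ∨ ∃ c ∈ D, ∃ M, IsFreeLobe G D S T c M ∧ z ∈ M ∧ D = insert c M := by
  by_cases hk : k ≤ L
  · obtain ⟨s, hs⟩ :=
      h.connected.exists_linked h.subset_left h.subset_right h.nonempty_left h.nonempty_right
    exact .inl (hP.add (.one hs) hL le_rfl (by omega) hPQ)
  refine (h.isRooted_or_isFreeLobe (k := k + 1 - L) hz (fun v hv hvz => ?_) hne).imp_left ?_
  · have := hdeg v hv hvz
    omega
  · rintro ⟨D', hD', z', hroot⟩
    exact hP.add (ih ((card_le_card hD').trans_lt hn) hroot) hL (by omega) (by omega)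
      fun t s ht hs => hPQ t s ht (hs.mono hD' subset_rfl subset_rfl)

theorem IsAttached.admissible_of_not_isFreeLobe (h : IsAttached G D S T)
    (ih : AdmissibleBelow G n) (hn : #D < n) (hne : ∃ v ∈ D, v ≠ z)
    (hfree : ∀ c ∈ D, ∀ M, ¬ IsFreeLobe G D S T c M)
    (hdeg : ∀ v ∈ D, v ≠ z → k + 2 ≤ degIn G v D + ind S v + ind T v + L)
    (hL : 1 ≤ L) (hP : Admissible L P)
    (hPQ : ∀ t s, P t → Linked G D S T s → Q (t + s + r)) : Admissible k Q := by
  refine (h.admissible_or_isFreeLobe ih hn hne (fun c hc M hM => (hfree c hc M hM).elim) hdeg hL hP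
    hPQ).resolve_right ?_
  rintro ⟨c, hc, M, hM, -⟩
  exact hfree c hc M hM

end Extension

/-- A rooted set with at least two attachments at each root, in which every lobe meets both
attachment sets and the exceptional vertex `z` is in neither. -/
structure IsReducedRooted (G : SimpleGraph V) (k : ℕ) (z : V) (C X Y : Finset V) : Prop where
  connected : ConnectedIn G C
  subset_left : X ⊆ C
  subset_right : Y ⊆ C
  notMem_left : z ∉ X
  notMem_right : z ∉ Y
  two_le_card_left : 2 ≤ #X
  two_le_card_right : 2 ≤ #Y
  lobe_left : ∀ c ∈ C, ∀ M, IsLobe G C c M → ∃ u ∈ M, u ∈ X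
  lobe_right : ∀ c ∈ C, ∀ M, IsLobe G C c M → ∃ u ∈ M, u ∈ Y
  le_degIn : ∀ v ∈ C, v ≠ z → k + 1 ≤ degIn G v C + ind X v + ind Y v

theorem IsReducedRooted.symm {k : ℕ} {z : V} {C X Y : Finset V} (h : IsReducedRooted G k z C X Y) :
    IsReducedRooted G k z C Y X where
  connected := h.connected
  subset_left := h.subset_right
  subset_right := h.subset_left
  notMem_left := h.notMem_right
  notMem_right := h.notMem_left
  two_le_card_left := h.two_le_card_right
  two_le_card_right := h.two_le_card_left
  lobe_left := h.lobe_right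
  lobe_right := h.lobe_left
  le_degIn v hv hvz := by
    have := h.le_degIn v hv hvz
    omega

namespace IsRooted

variable {k : ℕ} {c w z : V} {C M S X Y : Finset V}

theorem admissible_of_isLobe (h : IsRooted G k z C X Y) (ih : AdmissibleBelow G #C) (hc : c ∈ C)
    (hl : IsLobe G C c M) (hM : ConnectedIn G M) (hSM : S ⊆ M) (hSX : S ⊆ X) (hS : S.Nonempty)
    (hY : ∃ y ∈ Y, y ∉ M) (hne : ∃ v ∈ M, v ≠ z)
    (hind : ∀ v ∈ M, v ≠ z → ind X v + ind Y v ≤ ind S v)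
    (hlobe : ∀ d ∈ M, ∀ N ⊆ M, IsLobe G C d N → ∃ u ∈ N, u ∈ S) :
    Admissible k (Linked G C X Y) := by
  obtain ⟨y, hy, hyM⟩ := hY
  obtain ⟨t, ht⟩ := (hl.connectedIn_sdiff h.connected hc).exists_path
    (mem_sdiff.2 ⟨hc, hl.notMem⟩) (mem_sdiff.2 ⟨h.subset_right hy, hyM⟩)
  have hatt : IsAttached G M S (nbrsIn G {c} M) :=
    ⟨hM, hSM, nbrsIn_subset, hS, hl.nbrsIn_nonempty h.connected hc⟩
  refine hatt.admissible_of_not_isFreeLobe (L := 1) (r := t + 1) (P := fun s => s = 0) ih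
    (card_lt_card ⟨hl.subset, fun hs => hl.notMem (hs hc)⟩) hne (fun d hd N hN => ?_)
    (fun v hv hvz => ?_) le_rfl (.one rfl) ?_
  · obtain ⟨u, hu, huS⟩ := hlobe d hd N hN.1.subset (hl.trans hN.1 fun u hu => (hN.2 u hu).2)
    exact (hN.2 u hu).1 huS
  · have := h.le_degIn v (hl.subset hv) hvz
    have := hl.degIn_le hv
    have := hind v hv hvz
    omega
  · rintro _ s rfl hs
    have := hs.append (Y := Y) ⟨c, mem_singleton_self c, y, hy, ht⟩
      (fun u hu => (mem_nbrsIn_singleton.1 hu).2.symm) disjoint_sdiff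
    rw [zero_add, ← add_assoc]
    exact this.mono (union_subset hl.subset sdiff_subset) hSX subset_rfl

theorem admissible_of_subset_pair (h : IsRooted G k z C X Y) (hC : C ⊆ {w, z}) :
    Admissible k (Linked G C X Y) := by
  obtain ⟨v, hv, hvz⟩ := h.exists_ne
  obtain rfl : v = w := by simpa [hvz] using hC hv
  have hz : ∀ x ∈ C, G.Adj v x → x = z := fun x hx hvx => by simpa [hvx.ne'] using hC hx
  by_cases hk : k ≤ 1
  · obtain ⟨n, hn⟩ :=
      h.connected.exists_linked h.subset_left h.subset_right h.nonempty_left h.nonempty_right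
    exact (Admissible.one hn).mono hk
  have hdeg := h.le_degIn v hv hvz
  have hle : degIn G v C ≤ 1 :=
    (degIn_le_of_forall_adj fun x hx hvx => mem_singleton.2 (hz x hx hvx)).trans degIn_le_card
  have hX := ind_le_one (X := X) (v := v)
  have hY := ind_le_one (X := Y) (v := v)
  have hvX : v ∈ X := by_contra fun h' => by rw [ind_of_notMem h'] at hdeg; omega
  have hvY : v ∈ Y := by_contra fun h' => by rw [ind_of_notMem h'] at hdeg; omega
  obtain ⟨hzC, hadj⟩ : z ∈ C ∧ G.Adj v z := by
    by_contra h'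
    have : degIn G v C = 0 := degIn_eq_zero.2 fun x hx hvx => h' (hz x hx hvx ▸ ⟨hx, hvx⟩)
    omega
  have hzXY : z ∈ X ∨ z ∈ Y := by
    by_contra! h'
    refine h.not_isFreeLobe v hv {z} ⟨⟨?_, ?_, ⟨z, ?_⟩, fun u _ x hx _ => ?_⟩, ?_⟩
    all_goals grind
  have hvzC : HasPathIn G C v z 1 := .cons hv hadj (.refl (mem_erase.2 ⟨hvz.symm, hzC⟩))
  refine Admissible.mono (k := 2) (.of_interval (a := 0) fun i hi => ?_) (by omega)
  interval_cases i
  · exact ⟨v, hvX, v, hvY, .refl hv⟩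
  · exact hzXY.elim (fun hzX => ⟨z, hzX, v, hvY, hvzC.symm⟩) fun hzY => ⟨v, hvX, z, hzY, hvzC⟩

theorem admissible_of_right_singleton (ih : AdmissibleBelow G #C)
    (h : IsRooted G k z C X {w}) : Admissible k (Linked G C X {w}) := by
  have hw : w ∈ C := h.subset_right (mem_singleton_self w)
  by_cases hv : ∃ v ∈ C, v ≠ w ∧ v ≠ z
  swap
  · push Not at hv
    exact h.admissible_of_subset_pair (w := w) fun v hvC => by
      rw [mem_insert, mem_singleton]
      exact or_iff_not_imp_left.2 (hv v hvC)
  obtain ⟨v, hv, hvw, hvz⟩ := hv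
  have hvCw : v ∈ C \ {w} := by simp [hv, hvw]
  have hl := IsLobe.componentIn_sdiff (G := G) hv hvw
  have hlobe : ∀ d ∈ C, ∀ N ⊆ componentIn G (C \ {w}) v, IsLobe G C d N →
      ∃ u ∈ N, u ∈ X ∩ componentIn G (C \ {w}) v := fun d hd N hN hlN => by
    by_contra! hcon
    refine h.not_isFreeLobe d hd N ⟨hlN, fun u hu => ⟨fun hX => ?_, ?_⟩⟩
    · exact hcon u hu (mem_inter.2 ⟨hX, hN hu⟩)
    · rw [mem_singleton]
      rintro rfl
      exact hl.notMem (hN hu)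
  obtain ⟨u, -, hu⟩ := hlobe w hw _ subset_rfl hl
  refine h.admissible_of_isLobe ih hw hl (connectedIn_componentIn hvCw) inter_subset_right
    inter_subset_left ⟨u, hu⟩ ⟨w, mem_singleton_self w, hl.notMem⟩
    ⟨v, mem_componentIn_self hvCw, hvz⟩ (fun x hx _ => ?_) (fun d hd => hlobe d (hl.subset hd))
  have hxw : ind {w} x = 0 := ind_of_notMem fun hxw => hl.notMem (mem_singleton.1 hxw ▸ hx)
  have hxX : ind X x = ind (X ∩ componentIn G (C \ {w}) v) x := ind_congr (by simp [hx])
  omega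

theorem admissible_of_card_right_lt_two (h : IsRooted G k z C X Y) (ih : AdmissibleBelow G #C)
    (hY : #Y < 2) : Admissible k (Linked G C X Y) := by
  have := h.nonempty_right.card_pos
  obtain ⟨w, rfl⟩ := card_eq_one.1 (show #Y = 1 by omega)
  exact h.admissible_of_right_singleton ih

theorem admissible_of_card_left_lt_two (h : IsRooted G k z C X Y) (ih : AdmissibleBelow G #C)
    (hX : #X < 2) : Admissible k (Linked G C X Y) :=
  (h.symm.admissible_of_card_right_lt_two ih hX).linked_symm

theorem eq_componentIn_of_isLobe (h : IsRooted G k z C X Y) (hc : c ∈ C) (hl : IsLobe G C c M)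
    (hav : ∀ u ∈ M, u ≠ z → u ∉ X ∧ u ∉ Y) : z ∈ M ∧ M = componentIn G (C \ {c}) z := by
  have hzM : z ∈ M := by
    by_contra hzM
    exact h.not_isFreeLobe c hc M ⟨hl, fun u hu => hav u hu (ne_of_mem_of_not_mem hu hzM)⟩
  refine ⟨hzM, Subset.antisymm (fun x hx => ?_) (hl.componentIn_subset hzM)⟩
  have hxc : x ≠ c := ne_of_mem_of_not_mem hx hl.notMem
  have hxC : x ∈ componentIn G (C \ {c}) x :=
    mem_componentIn_self (by simp [hl.subset hx, hxc])
  by_contra hxz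
  refine h.not_isFreeLobe c hc _ ⟨.componentIn_sdiff (hl.subset hx) hxc, fun u hu =>
    hav u (hl.componentIn_subset hx hu) ?_⟩
  rintro rfl
  exact hxz (componentIn_eq_of_mem hu ▸ hxC)

theorem admissible_or_exists_mem_of_isLobe (h : IsRooted G k z C X Y) (ih : AdmissibleBelow G #C)
    (hX : 2 ≤ #X) (hY : 2 ≤ #Y) (hc : c ∈ C) (hl : IsLobe G C c M) (hne : ∃ v ∈ M, v ≠ z) :
    Admissible k (Linked G C X Y) ∨ ∃ u ∈ M, u ≠ z ∧ (u ∈ X ∨ u ∈ Y) := by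
  refine or_iff_not_imp_right.2 fun hcon => ?_
  push Not at hcon
  obtain ⟨hzM, hM⟩ := h.eq_componentIn_of_isLobe hc hl hcon
  have hzXY : z ∈ X ∨ z ∈ Y := by
    by_contra! hz
    refine h.not_isFreeLobe c hc M ⟨hl, fun u hu => ?_⟩
    obtain rfl | huz := eq_or_ne u z
    exacts [hz, hcon u hu huz]
  have hMconn : ConnectedIn G M := hM ▸ connectedIn_componentIn
    (by simp [hl.subset hzM, ne_of_mem_of_not_mem hzM hl.notMem])
  have of_mem_left : ∀ X Y, IsRooted G k z C X Y → 2 ≤ #Y → z ∈ X →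
      (∀ u ∈ M, u ≠ z → u ∉ X ∧ u ∉ Y) → Admissible k (Linked G C X Y) := by
    intro X Y h hY hzX hav
    obtain ⟨y, hyY, hyz⟩ := exists_mem_ne hY z
    refine h.admissible_of_isLobe ih hc hl hMconn (singleton_subset_iff.2 hzM)
      (singleton_subset_iff.2 hzX) (singleton_nonempty z)
      ⟨y, hyY, fun hyM => (hav y hyM hyz).2 hyY⟩ hne (fun v hv hvz => ?_) fun d hd N hN hlN => ?_
    · simp [ind_of_notMem (hav v hv hvz).1, ind_of_notMem (hav v hv hvz).2]
    · by_contra! hcon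
      exact h.not_isFreeLobe d (hl.subset hd) N ⟨hlN, fun u hu =>
        hav u (hN hu) fun huz => hcon u hu (mem_singleton.2 huz)⟩
  rcases hzXY with hz | hz
  · exact of_mem_left X Y h hY hz hcon
  · exact (of_mem_left Y X h.symm hX hz fun u hu huz => (hcon u hu huz).symm).linked_symm

theorem sdiff_singleton (h : IsRooted G k z C X Y) (hX : 2 ≤ #X) (hY : 2 ≤ #Y) (hc : c ∈ C)
    (hl : IsLobe G C c {z}) (hne : ∃ v ∈ C \ {z}, v ≠ c)
    (hlobe : ∀ d ∈ C, ∀ N, IsLobe G C d N → (∃ v ∈ N, v ≠ z) →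
      ∃ u ∈ N, u ≠ z ∧ (u ∈ X ∨ u ∈ Y)) :
    IsRooted G k c (C \ {z}) (X \ {z}) (Y \ {z}) where
  connected := hl.connectedIn_sdiff h.connected hc
  subset_left := sdiff_subset_sdiff h.subset_left subset_rfl
  subset_right := sdiff_subset_sdiff h.subset_right subset_rfl
  nonempty_left := by
    obtain ⟨x, hx, hxz⟩ := exists_mem_ne hX z
    exact ⟨x, by simp [hx, hxz]⟩
  nonempty_right := by
    obtain ⟨y, hy, hyz⟩ := exists_mem_ne hY z
    exact ⟨y, by simp [hy, hyz]⟩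
  not_isFreeLobe d hd N hN := by
    obtain ⟨hdC, hdz⟩ := mem_sdiff.1 hd
    have hcz : c ≠ z := fun hcz => hl.notMem (mem_singleton.2 hcz)
    by_cases hcN : c ∈ N
    · obtain ⟨u, hu, huz, huXY⟩ := hlobe d hdC (N ∪ {z}) (hl.union_of_sdiff hN.1 hdz hcN)
        ⟨c, mem_union_left _ hcN, hcz⟩
      have := hN.2 u
      grind
    · refine h.not_isFreeLobe d hdC N ⟨hl.of_sdiff hN.1 hcN, fun u hu => ?_⟩
      have := hN.2 u hu
      have := hN.1.subset hu
      grind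
  le_degIn v hv hvc := by
    obtain ⟨hvC, hvz⟩ := mem_sdiff.1 hv
    have hdeg := h.le_degIn v hvC (by simpa using hvz)
    have := hl.degIn_le_sdiff hv hvc
    rw [ind_congr (Y := X \ {z}) (by simp_all), ind_congr (X := Y) (Y := Y \ {z}) (by simp_all)]
      at hdeg
    omega
  exists_ne := hne

theorem admissible_or_forall_isLobe (h : IsRooted G k z C X Y) (ih : AdmissibleBelow G #C)
    (hX : 2 ≤ #X) (hY : 2 ≤ #Y) :
    Admissible k (Linked G C X Y) ∨
      ∀ c ∈ C, ∀ M, IsLobe G C c M → ∃ u ∈ M, u ≠ z ∧ (u ∈ X ∨ u ∈ Y) := by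
  refine or_iff_not_imp_left.2 fun hadm => ?_
  have hlobe : ∀ c ∈ C, ∀ M, IsLobe G C c M → (∃ v ∈ M, v ≠ z) →
      ∃ u ∈ M, u ≠ z ∧ (u ∈ X ∨ u ∈ Y) := fun c hc M hl hne =>
    (h.admissible_or_exists_mem_of_isLobe ih hX hY hc hl hne).resolve_left hadm
  refine fun c hc M hl => hlobe c hc M hl ?_
  by_contra! hv
  obtain rfl : M = {z} := eq_singleton_iff_nonempty_unique_mem.2 ⟨hl.nonempty, hv⟩
  refine hadm ?_
  by_cases hne : ∃ v ∈ C \ {z}, v ≠ c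
  · have hlt : #(C \ {z}) < #C :=
      card_lt_card (sdiff_ssubset hl.subset (singleton_nonempty z))
    exact (ih hlt (h.sdiff_singleton hX hY hc hl hne hlobe)).imp fun _ hn =>
      hn.mono sdiff_subset sdiff_subset sdiff_subset
  · exact h.admissible_of_subset_pair (w := c) fun v hv => by
      push Not at hne
      by_cases hvz : v = z
      · simp [hvz]
      · simp [hne v (by simp [hv, hvz])]

theorem admissible_or_exists_mem_right (h : IsRooted G k z C X Y) (ih : AdmissibleBelow G #C)
    (hY : 2 ≤ #Y)
    (hlobe : ∀ c ∈ C, ∀ M, IsLobe G C c M → ∃ u ∈ M, u ≠ z ∧ (u ∈ X ∨ u ∈ Y)) :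
    Admissible k (Linked G C X Y) ∨ ∀ c ∈ C, ∀ M, IsLobe G C c M → ∃ u ∈ M, u ∈ Y \ {z} := by
  refine or_iff_not_imp_right.2 fun hcon => ?_
  push Not at hcon
  obtain ⟨c, hc, M, hl, hMY⟩ := hcon
  obtain ⟨u, hu, huz, huXY⟩ := hlobe c hc M hl
  have huc : u ≠ c := ne_of_mem_of_not_mem hu hl.notMem
  have hlD := IsLobe.componentIn_sdiff (G := G) (hl.subset hu) huc
  have huD : u ∈ componentIn G (C \ {c}) u :=
    mem_componentIn_self (by simp [hl.subset hu, huc])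
  have hD : ConnectedIn G (componentIn G (C \ {c}) u) :=
    connectedIn_componentIn (componentIn_subset huD)
  have hDM := hl.componentIn_subset hu
  set D := componentIn G (C \ {c}) u
  have hDY : ∀ v ∈ D, v ≠ z → v ∉ Y := fun v hv hvz hvY =>
    hMY v (hDM hv) (by simp [hvY, hvz])
  obtain ⟨y, hyY, hyz⟩ := exists_mem_ne hY z
  refine h.admissible_of_isLobe ih hc hlD hD (S := X ∩ D) inter_subset_right inter_subset_left
    ⟨u, mem_inter.2 ⟨huXY.resolve_right (hDY u huD huz), huD⟩⟩ ⟨y, hyY, fun hm => hDY y hm hyz hyY⟩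
    ⟨u, huD, huz⟩ (fun v hv hvz => ?_) fun d hd N hN hlN => ?_
  · rw [ind_of_notMem (hDY v hv hvz), add_zero]
    exact (ind_congr (by simp [hv])).le
  · obtain ⟨v, hv, hvz, hvXY⟩ := hlobe d (hlD.subset hd) N hlN
    exact ⟨v, hv, mem_inter.2 ⟨hvXY.resolve_right (hDY v (hN hv) hvz), hN hv⟩⟩

theorem admissible_or_isReducedRooted (h : IsRooted G k z C X Y) (ih : AdmissibleBelow G #C) :
    Admissible k (Linked G C X Y) ∨ IsReducedRooted G k z C (X \ {z}) (Y \ {z}) := by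
  refine or_iff_not_imp_left.2 fun hadm => ?_
  have hY : 2 ≤ #Y := le_of_not_gt fun hY => hadm (h.admissible_of_card_right_lt_two ih hY)
  have hX : 2 ≤ #X := le_of_not_gt fun hX => hadm (h.admissible_of_card_left_lt_two ih hX)
  have hlobe := (h.admissible_or_forall_isLobe ih hX hY).resolve_left hadm
  have hlY := (h.admissible_or_exists_mem_right ih hY hlobe).resolve_left hadm
  have hlX := (h.symm.admissible_or_exists_mem_right ih hX fun c hc M hM =>
    let ⟨u, hu, huz, huXY⟩ := hlobe c hc M hM
    ⟨u, hu, huz, huXY.symm⟩).resolve_left fun h => hadm h.linked_symm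
  obtain ⟨x, hxX, hxz⟩ := exists_mem_ne hX z
  obtain ⟨y, hyY, hyz⟩ := exists_mem_ne hY z
  have hdeg : ∀ v ∈ C, v ≠ z → k + 1 ≤ degIn G v C + ind (X \ {z}) v + ind (Y \ {z}) v := by
    intro v hv hvz
    have := h.le_degIn v hv hvz
    rwa [ind_congr (Y := X \ {z}) (by simp [hvz]),
      ind_congr (X := Y) (Y := Y \ {z}) (by simp [hvz])] at this
  have hroot : IsRooted G k z C (X \ {z}) (Y \ {z}) :=
    { connected := h.connected
      subset_left := sdiff_subset.trans h.subset_left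
      subset_right := sdiff_subset.trans h.subset_right
      nonempty_left := ⟨x, by simp [hxX, hxz]⟩
      nonempty_right := ⟨y, by simp [hyY, hyz]⟩
      not_isFreeLobe c hc M hM :=
        let ⟨u, hu, huX⟩ := hlX c hc M hM.1
        (hM.2 u hu).1 huX
      le_degIn := hdeg
      exists_ne := h.exists_ne }
  have hadm' : ¬ Admissible k (Linked G C (X \ {z}) (Y \ {z})) := fun h' =>
    hadm (h'.imp fun _ hn => hn.mono subset_rfl sdiff_subset sdiff_subset)
  exact ⟨h.connected, hroot.subset_left, hroot.subset_right, by simp, by simp,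
    le_of_not_gt fun hX => hadm' (hroot.admissible_of_card_left_lt_two ih hX),
    le_of_not_gt fun hY => hadm' (hroot.admissible_of_card_right_lt_two ih hY), hlX, hlY, hdeg⟩

end IsRooted

/-! ### Separating pairs -/

/-- `M` is a nonempty union of components of `C - {a, c}`. -/
structure IsPairLobe (G : SimpleGraph V) (C : Finset V) (a c : V) (M : Finset V) : Prop where
  subset : M ⊆ C
  notMem_left : a ∉ M
  notMem_right : c ∉ M
  nonempty : M.Nonempty
  closed : ∀ u ∈ M, ∀ w ∈ C, G.Adj u w → w ∈ M ∨ w = a ∨ w = c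

theorem IsPairLobe.degIn_le {C M : Finset V} {a c v : V} (h : IsPairLobe G C a c M) (hv : v ∈ M) :
    degIn G v C ≤ degIn G v (insert a M) + ind (nbrsIn G {c} M) v := by
  have hle : degIn G v C ≤ degIn G v (insert a M) + degIn G v {c} :=
    degIn_le_add fun w hw hvw => by
      have := h.closed v hv w hw hvw
      grind
  have hc : degIn G v {c} ≤ 1 * ind (nbrsIn G {c} M) v := degIn_le_mul_ind hv degIn_le_card
  omega

theorem IsPairLobe.erase {C M : Finset V} {a c d : V} (h : IsPairLobe G C a c M)
    (hd : ∀ u ∈ M, u ≠ d → ¬ G.Adj c u) (hM : (M.erase d).Nonempty) :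
    IsPairLobe G C d a (M.erase d) where
  subset := (erase_subset _ _).trans h.subset
  notMem_left := notMem_erase d M
  notMem_right ha := h.notMem_left (mem_of_mem_erase ha)
  nonempty := hM
  closed u hu w hw huw := by
    obtain ⟨hud, hu⟩ := mem_erase.1 hu
    have := h.closed u hu w hw huw
    have := hd u hu hud
    have := huw.symm
    grind

theorem IsLobe.isPairLobe_erase {C M : Finset V} {a d : V} (h : IsLobe G C a M)
    (hM : (M.erase d).Nonempty) : IsPairLobe G C d a (M.erase d) where
  subset := (erase_subset _ _).trans h.subset
  notMem_left := notMem_erase d M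
  notMem_right ha := h.notMem (mem_of_mem_erase ha)
  nonempty := hM
  closed u hu w hw huw := by
    have := h.closed u (mem_of_mem_erase hu) w hw huw
    grind

theorem IsLobe.connectedIn_insert {C M : Finset V} {a : V} (h : IsLobe G C a M)
    (hC : ConnectedIn G C) (ha : a ∈ C) : ConnectedIn G (insert a M) := by
  by_cases hne : (C \ insert a M).Nonempty
  · have hl : IsLobe G C a (C \ insert a M) := by
      refine ⟨sdiff_subset, by simp, hne, fun u hu w hw huw => ?_⟩
      have := h.closed w
      have := huw.symm
      grind
    simpa only [Finset.sdiff_sdiff_eq_self (insert_subset ha h.subset)] using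
      hl.connectedIn_sdiff hC ha
  · rwa [← (insert_subset ha h.subset).antisymm (sdiff_eq_empty_iff_subset.1
      (not_nonempty_iff_eq_empty.1 hne))] at hC

theorem IsFreeLobe.exists_eq_of_insert_eq {M N T X : Finset V} {a c : V}
    (hN : IsFreeLobe G (insert a M) (X ∩ insert a M) T c N) (hc : c ∈ insert a M) (haN : a ∈ N)
    (hD : insert a M = insert c N) (hX : ∃ x ∈ insert a M, x ∈ X) (hT : T ⊆ M)
    (hTne : T.Nonempty) :
    a ∉ X ∧ ∃ d ∈ M, d ∈ X ∧ d ∈ T ∧ ∀ u ∈ M, u ≠ d → u ∉ X ∧ u ∉ T := by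
  have hca : c ≠ a := fun h => hN.1.notMem (h ▸ haN)
  have hav : ∀ u ∈ insert a M, u ≠ c → u ∉ X ∧ u ∉ T := fun u hu huc => by
    have := hN.2 u ((mem_insert.1 (hD ▸ hu)).resolve_left huc)
    simpa [hu] using this
  obtain ⟨x, hx, hxX⟩ := hX
  obtain ⟨t, ht⟩ := hTne
  refine ⟨(hav a (mem_insert_self a M) hca.symm).1, c, (mem_insert.1 hc).resolve_left hca, ?_, ?_,
    fun u hu => hav u (mem_insert_of_mem hu)⟩
  · by_contra hcX
    exact (hav x hx fun h => hcX (h ▸ hxX)).1 hxX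
  · by_contra hcT
    exact (hav t (mem_insert_of_mem (hT ht)) fun h => hcT (h ▸ ht)).2 ht

namespace IsReducedRooted

variable {k r : ℕ} {a c z : V} {C X Y M N T : Finset V}

/-- Recurse into `insert a M`, where `T` are the vertices of `M` from which a path to `Y` can leave
and `a` is the new exceptional vertex. -/
theorem admissible_or_exists_eq (h : IsReducedRooted G k z C X Y) (ih : AdmissibleBelow G #C)
    (hM : insert a M ⊂ C) (hz : z ∉ M) (haM : a ∉ M) (hT : T ⊆ M) (hTne : T.Nonempty)
    (hexit : ∀ u ∈ M, ∀ w ∈ C, G.Adj u w → w ∈ M ∨ w = a ∨ u ∈ T)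
    (hdeg : ∀ v ∈ M, degIn G v C + ind Y v ≤ degIn G v (insert a M) + ind T v)
    (hconn : ConnectedIn G (insert a M)) (hX : ∃ x ∈ insert a M, x ∈ X)
    (hlink : ∀ s, Linked G (insert a M) X T s → Linked G C X Y (s + r)) :
    Admissible k (Linked G C X Y) ∨
      a ∉ X ∧ ∃ d ∈ M, d ∈ X ∧ d ∈ T ∧ ∀ u ∈ M, u ≠ d → u ∉ X ∧ u ∉ T := by
  have hatt : IsAttached G (insert a M) (X ∩ insert a M) T :=
    ⟨hconn, inter_subset_right, hT.trans (subset_insert _ _),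
      hX.imp fun x hx => mem_inter.2 hx.symm, hTne⟩
  have hfree : ∀ d ∈ insert a M, ∀ N, IsFreeLobe G (insert a M) (X ∩ insert a M) T d N →
      a ∈ N := fun d hd N ⟨hl, hN⟩ => by
    by_contra haN
    obtain ⟨u, hu, huX⟩ := h.lobe_left d (hM.1 hd) N ⟨hl.subset.trans hM.1, hl.notMem, hl.nonempty,
      fun u hu w hw huw => by
        have huM := mem_of_mem_insert_of_ne (hl.subset hu) (ne_of_mem_of_not_mem hu haN)
        refine hl.closed u hu w ?_ huw
        have := hexit u huM w hw huw
        have := hN u hu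
        grind⟩
    exact (hN u hu).1 (mem_inter.2 ⟨huX, hl.subset hu⟩)
  refine (hatt.admissible_or_isFreeLobe (z := a) (k := k) (L := 1) (r := r) (P := fun s => s = 0)
    ih (card_lt_card hM) ?_ hfree (fun v hv hva => ?_) le_rfl (.one rfl) ?_).imp_right ?_
  · obtain ⟨t, ht⟩ := hTne
    exact ⟨t, mem_insert_of_mem (hT ht), ne_of_mem_of_not_mem (hT ht) haM⟩
  · have hvM := mem_of_mem_insert_of_ne hv hva
    have := h.le_degIn v (hM.1 hv) (ne_of_mem_of_not_mem hvM hz)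
    have := hdeg v hvM
    have : ind X v = ind (X ∩ insert a M) v := ind_congr (by simp [hvM])
    omega
  · rintro _ s rfl hs
    rw [zero_add]
    exact hlink s (hs.mono subset_rfl inter_subset_left subset_rfl)
  · rintro ⟨d, hd, N, hN, haN, hD⟩
    exact hN.exists_eq_of_insert_eq hd haN hD hX hT hTne

theorem not_isLobe_of_disjoint (h : IsReducedRooted G k z C X Y) (hY : Disjoint M Y)
    (hc : c ∈ C) : ¬ IsLobe G C c M := fun hl =>
  let ⟨_, hu, huY⟩ := h.lobe_right c hc M hl
  disjoint_left.1 hY hu huY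

theorem exists_path_right_of_isPairLobe (h : IsReducedRooted G k z C X Y) (ha : a ∈ C) (hc : c ∈ C)
    (hac : a ≠ c) (hM : IsPairLobe G C a c M) (hY : Disjoint M Y) :
    ∃ y ∈ Y, ∃ t, HasPathIn G (C \ insert a M) c y t := by
  have hcC : c ∈ C \ insert a M := by simp [hc, hac.symm, hM.notMem_right]
  have hl : IsLobe G C a (componentIn G (C \ insert a M) c ∪ M) := by
    refine ⟨union_subset componentIn_sdiff_subset hM.subset, ?_,
      hM.nonempty.mono subset_union_right, fun u hu w hw huw => ?_⟩
    · rw [mem_union, not_or]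
      exact ⟨fun h => (mem_componentIn_sdiff h).2 (mem_insert_self a M), hM.notMem_left⟩
    · rcases mem_union.1 hu with hu | hu
      · have := mem_componentIn_sdiff_or_of_adj hu hw huw
        grind
      · have := hM.closed u hu w hw huw
        have := mem_componentIn_self (G := G) hcC
        grind
  obtain ⟨y, hy, hyY⟩ := h.lobe_right a ha _ hl
  obtain hy | hy := mem_union.1 hy
  · exact ⟨y, hyY, (mem_filter.1 hy).2⟩
  · exact (disjoint_left.1 hY hy hyY).elim

theorem connectedIn_insert_of_isPairLobe (h : IsReducedRooted G k z C X Y) (hc : c ∈ C)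
    (hM : IsPairLobe G C a c M) (hY : Disjoint M Y) : ConnectedIn G (insert a M) := by
  refine connectedIn_of_forall_closed ⟨a, mem_insert_self a M⟩ fun N hN hne hcl => ?_
  by_cases haN : a ∈ N
  · refine insert_subset haN (sdiff_eq_empty_iff_subset.1 ?_)
    by_contra hMN
    refine h.not_isLobe_of_disjoint (hY.mono_left sdiff_subset) hc ⟨sdiff_subset.trans hM.subset,
      fun hcM => hM.notMem_right (mem_sdiff.1 hcM).1, nonempty_iff_ne_empty.2 hMN,
      fun u hu w hw huw => ?_⟩
    have := hM.closed u (mem_sdiff.1 hu).1 w hw huw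
    have := hcl w
    have := huw.symm
    grind
  · have hNM : N ⊆ M := fun u hu =>
      mem_of_mem_insert_of_ne (hN hu) (ne_of_mem_of_not_mem hu haN)
    refine (h.not_isLobe_of_disjoint (hY.mono_left hNM) hc ⟨hNM.trans hM.subset,
      fun hcN => hM.notMem_right (hNM hcN), hne, fun u hu w hw huw => ?_⟩).elim
    have := hM.closed u (hNM hu) w hw huw
    have := hcl u hu w
    grind

theorem admissible_or_exists_eq_of_isPairLobe (h : IsReducedRooted G k z C X Y)
    (ih : AdmissibleBelow G #C) (ha : a ∈ C) (hc : c ∈ C) (hac : a ≠ c)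
    (hM : IsPairLobe G C a c M) (hz : z ∉ M) (hY : Disjoint M Y) (hX : ∃ x ∈ insert a M, x ∈ X) :
    Admissible k (Linked G C X Y) ∨
      a ∉ X ∧ ∃ d ∈ M, d ∈ X ∧ ∀ u ∈ M, u ≠ d → u ∉ X ∧ ¬ G.Adj c u := by
  obtain ⟨y, hy, t, ht⟩ := h.exists_path_right_of_isPairLobe ha hc hac hM hY
  have hMC : insert a M ⊆ C := insert_subset ha hM.subset
  refine (h.admissible_or_exists_eq (T := nbrsIn G {c} M) (r := t + 1) ih
    ⟨hMC, fun hs => ?_⟩ hz hM.notMem_left nbrsIn_subset ?_ (fun u hu w hw huw => ?_)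
    (fun v hv => ?_) (h.connectedIn_insert_of_isPairLobe hc hM hY) hX fun s hs => ?_).imp_right ?_
  · exact (mem_insert.1 (hs hc)).elim hac.symm hM.notMem_right
  · by_contra hne
    refine h.not_isLobe_of_disjoint hY ha ⟨hM.subset, hM.notMem_left, hM.nonempty,
      fun u hu w hw huw => (hM.closed u hu w hw huw).imp_right fun hw => hw.resolve_right ?_⟩
    rintro rfl
    exact hne ⟨u, mem_nbrsIn_singleton.2 ⟨hu, huw.symm⟩⟩
  · refine (hM.closed u hu w hw huw).imp_right (Or.imp_right ?_)
    rintro rfl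
    exact mem_nbrsIn_singleton.2 ⟨hu, huw.symm⟩
  · rw [ind_of_notMem (disjoint_left.1 hY hv)]
    exact hM.degIn_le hv
  · have := hs.append (Y := Y) ⟨c, mem_singleton_self c, y, hy, ht⟩
      (fun u hu => (mem_nbrsIn_singleton.1 hu).2.symm) disjoint_sdiff
    rw [← add_assoc]
    exact this.mono (union_subset hMC sdiff_subset) subset_rfl subset_rfl
  · rintro ⟨haX, d, hd, hdX, -, hrest⟩
    exact ⟨haX, d, hd, hdX, fun u hu hud => (hrest u hu hud).imp_right fun huT hcu =>
      huT (mem_nbrsIn_singleton.2 ⟨hu, hcu⟩)⟩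

theorem admissible_of_isPairLobe (h : IsReducedRooted G k z C X Y) (ih : AdmissibleBelow G #C)
    (ha : a ∈ C) (hc : c ∈ C) (hac : a ≠ c) (hM : IsPairLobe G C a c M) (hz : z ∉ M)
    (hY : Disjoint M Y) (haX : a ∈ X) : Admissible k (Linked G C X Y) :=
  (h.admissible_or_exists_eq_of_isPairLobe ih ha hc hac hM hz hY
    ⟨a, mem_insert_self a M, haX⟩).resolve_right fun h => h.1 haX

theorem admissible_of_isPairLobe_of_not_adj (h : IsReducedRooted G k z C X Y)
    (ih : AdmissibleBelow G #C) (ha : a ∈ C) (hc : c ∈ C) (hac : a ≠ c)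
    (hM : IsPairLobe G C a c M) (hz : z ∉ M) (hY : Disjoint M Y) (hX : ∃ x ∈ M, x ∈ X)
    (hna : ∀ u ∈ M, u ∈ X → ¬ G.Adj u a) : Admissible k (Linked G C X Y) := by
  obtain ⟨x, hx, hxX⟩ := hX
  refine (h.admissible_or_exists_eq_of_isPairLobe ih ha hc hac hM hz hY
    ⟨x, mem_insert_of_mem hx, hxX⟩).elim id ?_
  rintro ⟨-, d, hd, hdX, hrest⟩
  by_cases hne : (M.erase d).Nonempty
  · exact h.admissible_of_isPairLobe ih (hM.subset hd) ha (ne_of_mem_of_not_mem hd hM.notMem_left)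
      (hM.erase (fun u hu hud => (hrest u hu hud).2) hne) (fun hz' => hz (mem_of_mem_erase hz'))
      (hY.mono_left (erase_subset d M)) hdX
  · have hMd : ∀ u ∈ M, u = d := fun u hu => by
      by_contra hud
      exact hne ⟨u, mem_erase.2 ⟨hud, hu⟩⟩
    refine (h.not_isLobe_of_disjoint hY hc ⟨hM.subset, hM.notMem_right, hM.nonempty,
      fun u hu w hw huw => (hM.closed u hu w hw huw).imp_right fun hw => hw.resolve_left ?_⟩).elim
    rintro rfl
    exact hna u hu (hMd u hu ▸ hdX) huw

theorem admissible_or_eq_singleton_of_isLobe (h : IsReducedRooted G k z C X Y)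
    (ih : AdmissibleBelow G #C) (ha : a ∈ C) (hM : IsLobe G C a M) (hz : z ∉ M)
    (hC : insert a M ≠ C) :
    Admissible k (Linked G C X Y) ∨ a ∉ X ∧ ∃ u ∈ X, M = {u} ∧ G.Adj u a := by
  have hMC : insert a M ⊆ C := insert_subset ha hM.subset
  obtain ⟨x, hx, hxX⟩ := h.lobe_left a ha M hM
  obtain ⟨y, hy, hyY⟩ := h.lobe_right a ha M hM
  refine (h.admissible_or_exists_eq (T := Y ∩ M) (r := 0) ih (hMC.ssubset_of_ne hC) hz hM.notMem
    inter_subset_right ⟨y, mem_inter.2 ⟨hyY, hy⟩⟩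
    (fun u hu w hw huw => (hM.closed u hu w hw huw).imp_right .inl) (fun v hv => ?_)
    (hM.connectedIn_insert h.connected ha) ⟨x, mem_insert_of_mem hx, hxX⟩
    fun s hs => hs.mono hMC subset_rfl inter_subset_left).elim .inl ?_
  · rw [ind_congr (show v ∈ Y ↔ v ∈ Y ∩ M by simp [hv])]
    exact Nat.add_le_add_right (degIn_le_of_forall_adj fun w hw hvw =>
      mem_insert.2 (hM.closed v hv w hw hvw).symm) _
  rintro ⟨haX, d, hd, hdX, -, hrest⟩
  by_cases hne : (M.erase d).Nonempty
  · refine .inl (h.admissible_of_isPairLobe ih (hM.subset hd) ha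
      (ne_of_mem_of_not_mem hd hM.notMem) (hM.isPairLobe_erase hne)
      (fun hz' => hz (mem_of_mem_erase hz')) (disjoint_left.2 fun u hu huY => ?_) hdX)
    obtain ⟨hud, hu⟩ := mem_erase.1 hu
    exact (hrest u hu hud).2 (mem_inter.2 ⟨huY, hu⟩)
  · obtain rfl : M = {d} := eq_singleton_iff_unique_mem.2 ⟨hd, fun u hu => by
      by_contra hud
      exact hne ⟨u, mem_erase.2 ⟨hud, hu⟩⟩⟩
    obtain ⟨u, hu⟩ := hM.nbrsIn_nonempty h.connected ha
    obtain ⟨hud, hau⟩ := mem_nbrsIn_singleton.1 hu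
    obtain rfl := mem_singleton.1 hud
    exact .inr ⟨haX, u, hdX, rfl, hau.symm⟩

end IsReducedRooted

/-! ### Cores -/

/-- The fallback lengths compensate for the degree which the vertices of `X` outside `E ∪ A`, not
adjacent to `E`, lose by deleting `A`. -/
def CompensatesLeft (G : SimpleGraph V) (z : V) (C X E A : Finset V) (l : ℕ) : Prop :=
  ∀ v ∈ C, v ∉ E ∪ A → v ≠ z → v ∉ nbrsIn G E C → v ∈ X →
    degIn G v A + 2 ≤ l + ind (nbrsIn G A C) v

/-- A core `E ∪ A`: the lengths `P` of paths from `X` to any vertex of `E` compensate for the degree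
which outside vertices lose by deleting the core. The fallback lengths `p` of paths from `X` to any
vertex of `A` do the same for the vertices without neighbours in `E`. -/
structure IsCore (G : SimpleGraph V) (z : V) (C X E A : Finset V) (L l : ℕ) (P p : ℕ → Prop) :
    Prop where
  subset_left : E ⊆ C
  subset_right : A ⊆ C
  disjoint : Disjoint E A
  nonempty : E.Nonempty
  one_le : 1 ≤ L
  admissible : Admissible L P
  linked_left : ∀ t, P t → ∀ e ∈ E, Linked G (E ∪ A) X {e} t
  loss_left : ∀ v ∈ C, v ∉ E ∪ A → v ≠ z →
    ind X v + degIn G v A + degIn G v E + 1 ≤ L + ind (nbrsIn G E C) v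
  one_le_fallback : 1 ≤ l
  admissible_fallback : Admissible l p
  linked_right : ∀ t, p t → ∀ a ∈ A, Linked G (E ∪ A) X {a} t
  loss_right : ∀ v ∈ C, v ∉ E ∪ A → v ≠ z → v ∉ nbrsIn G E C → v ∉ X →
    degIn G v A + 1 ≤ l + ind (nbrsIn G A C) v
  compensatesLeft_or : CompensatesLeft G z C X E A l ∨
    ∃ a, A = {a} ∧ (a ∈ X ∨ (∀ v ∈ C, v ∉ E ∪ A → v ∈ X → ¬ G.Adj v a) ∧ 2 ≤ #E)

/-- The exceptional outcome for a core: the vertex `c` is the only vertex of `Y` outside the core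
and separates, within its component, a set `M` containing `z`. -/
structure IsTerminal (G : SimpleGraph V) (z : V) (C Y E A : Finset V) (c : V) (M : Finset V) :
    Prop where
  mem : c ∈ Y
  mem_nbrs : c ∈ nbrsIn G E C
  notMem_core : c ∉ E ∪ A
  notMem : c ∉ M
  exceptional_mem : z ∈ M
  componentIn_eq : componentIn G (C \ (E ∪ A)) z = insert c M
  avoids : ∀ u ∈ M, u ∉ Y ∧ u ∉ nbrsIn G E C
  subset : Y ⊆ insert c (E ∪ A)

theorem degIn_le_componentIn_sdiff_union {C E A : Finset V} {y v : V}
    (hv : v ∈ componentIn G (C \ (E ∪ A)) y) :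
    degIn G v C ≤
      degIn G v (componentIn G (C \ (E ∪ A)) y) + degIn G v E + degIn G v A := by
  have hC : degIn G v C ≤ degIn G v (componentIn G (C \ (E ∪ A)) y) + degIn G v (E ∪ A) :=
    degIn_le_add fun _ hw hvw => mem_componentIn_sdiff_or_of_adj hv hw hvw
  have hEA : degIn G v (E ∪ A) ≤ degIn G v E + degIn G v A :=
    degIn_le_add fun _ hw _ => mem_union.1 hw
  omega

theorem mem_componentIn_or_mem_right_of_adj {C E A : Finset V} {u w y : V}
    (hu : u ∈ componentIn G (C \ (E ∪ A)) y) (huE : u ∉ nbrsIn G E C) (hw : w ∈ C)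
    (huw : G.Adj u w) : w ∈ componentIn G (C \ (E ∪ A)) y ∨ w ∈ A :=
  (mem_componentIn_sdiff_or_of_adj hu hw huw).imp_right fun h =>
    (mem_union.1 h).resolve_left fun hwE =>
      huE (mem_nbrsIn.2 ⟨componentIn_sdiff_subset hu, w, hwE, huw.symm⟩)

theorem disjoint_componentIn_sdiff {C H : Finset V} {y : V} :
    Disjoint H (componentIn G (C \ H) y) :=
  disjoint_left.2 fun _ hu hu' => (mem_componentIn_sdiff hu').2 hu

namespace IsCore

variable {k L l : ℕ} {y z : V} {C D X Y E A : Finset V} {P p : ℕ → Prop}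

theorem union_subset (K : IsCore G z C X E A L l P p) : E ∪ A ⊆ C :=
  Finset.union_subset K.subset_left K.subset_right

theorem card_componentIn_lt (K : IsCore G z C X E A L l P p) :
    #(componentIn G (C \ (E ∪ A)) y) < #C := by
  obtain ⟨e, he⟩ := K.nonempty
  exact card_lt_card ⟨componentIn_sdiff_subset, fun hs =>
    (mem_componentIn_sdiff (hs (K.subset_left he))).2 (mem_union_left _ he)⟩

theorem linked_extend_left (K : IsCore G z C X E A L l P p) {t s : ℕ} (ht : P t)
    (hD : Disjoint (E ∪ A) D) (hs : Linked G D (nbrsIn G E D) Y s) :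
    Linked G (E ∪ A ∪ D) X Y (t + s + 1) :=
  hs.prepend (K.linked_left t ht) (fun _ hu => (mem_nbrsIn.1 hu).2) hD

theorem linked_extend_right (K : IsCore G z C X E A L l P p) {t s : ℕ} (ht : p t)
    (hD : Disjoint (E ∪ A) D) (hs : Linked G D (nbrsIn G A D) Y s) :
    Linked G (E ∪ A ∪ D) X Y (t + s + 1) :=
  hs.prepend (K.linked_right t ht) (fun _ hu => (mem_nbrsIn.1 hu).2) hD

theorem le_degIn_componentIn (K : IsCore G z C X E A L l P p) (h : IsReducedRooted G k z C X Y)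
    {v : V} (hv : v ∈ componentIn G (C \ (E ∪ A)) y) (hvz : v ≠ z) :
    k + 2 ≤
      degIn G v (componentIn G (C \ (E ∪ A)) y) + ind (nbrsIn G E C) v + ind Y v + L := by
  have hvC := componentIn_sdiff_subset hv
  have hdeg := h.le_degIn v hvC hvz
  have hD := degIn_le_componentIn_sdiff_union hv
  have hloss := K.loss_left v hvC (mem_componentIn_sdiff hv).2 hvz
  omega

theorem le_degIn_componentIn_of_notMem (K : IsCore G z C X E A L l P p)
    (h : IsReducedRooted G k z C X Y) {v : V} (hv : v ∈ componentIn G (C \ (E ∪ A)) y)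
    (hvz : v ≠ z) (hvE : v ∉ nbrsIn G E C) (hX : CompensatesLeft G z C X E A l ∨ v ∉ X) :
    k + 2 ≤
      degIn G v (componentIn G (C \ (E ∪ A)) y) + ind (nbrsIn G A C) v + ind Y v + l := by
  have hvC := componentIn_sdiff_subset hv
  have hvH := (mem_componentIn_sdiff hv).2
  have hdeg := h.le_degIn v hvC hvz
  have hD := degIn_le_componentIn_sdiff_union hv
  have hE := degIn_eq_zero_of_notMem_nbrsIn hvC hvE
  by_cases hvX : v ∈ X
  · have hloss := hX.resolve_right (not_not_intro hvX) v hvC hvH hvz hvE hvX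
    rw [ind_of_mem hvX] at hdeg
    omega
  · have hloss := K.loss_right v hvC hvH hvz hvE hvX
    rw [ind_of_notMem hvX] at hdeg
    omega

end IsCore

namespace IsReducedRooted

variable {k L l : ℕ} {a c y z : V} {C M N X Y E A : Finset V} {P p : ℕ → Prop}

theorem exists_mem_nbrsIn_right_of_isLobe (h : IsReducedRooted G k z C X Y) (hc : c ∈ C)
    (hM : IsLobe G (componentIn G (C \ (E ∪ A)) y) c M)
    (hav : ∀ u ∈ M, u ∉ nbrsIn G E C ∧ u ∉ Y) : ∃ u ∈ M, u ∈ nbrsIn G A C := by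
  by_contra! hA
  obtain ⟨u, hu, huY⟩ := h.lobe_right c hc M ⟨hM.subset.trans componentIn_sdiff_subset, hM.notMem,
    hM.nonempty, fun u hu w hw huw => by
      rcases mem_componentIn_or_mem_right_of_adj (hM.subset hu) (hav u hu).1 hw huw with hwD | hwA
      · exact hM.closed u hu w hwD huw
      · exact absurd (mem_nbrsIn.2
          ⟨componentIn_sdiff_subset (hM.subset hu), w, hwA, huw.symm⟩) (hA u hu)⟩
  exact (hav u hu).2 huY

theorem isAttached_of_isLobe_componentIn (h : IsReducedRooted G k z C X Y) (hy : y ∈ C \ (E ∪ A))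
    (hc : c ∈ componentIn G (C \ (E ∪ A)) y)
    (hN : IsLobe G (componentIn G (C \ (E ∪ A)) y) c N)
    (hav : ∀ u ∈ N, u ∉ nbrsIn G E C ∧ u ∉ Y) (hNc : ConnectedIn G N) :
    IsAttached G N (nbrsIn G A N) (nbrsIn G {c} N) where
  connected := hNc
  subset_left := nbrsIn_subset
  subset_right := nbrsIn_subset
  nonempty_left := by
    obtain ⟨u, hu, huA⟩ :=
      h.exists_mem_nbrsIn_right_of_isLobe (componentIn_sdiff_subset hc) hN hav
    exact ⟨u, mem_nbrsIn.2 ⟨hu, (mem_nbrsIn.1 huA).2⟩⟩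
  nonempty_right := hN.nbrsIn_nonempty (connectedIn_componentIn hy) hc

theorem admissible_of_core_of_connected_lobe (h : IsReducedRooted G k z C X Y)
    (ih : AdmissibleBelow G #C) (K : IsCore G z C X E A L l P p) (hyY : y ∈ Y)
    (hy : y ∈ C \ (E ∪ A)) (hc : c ∈ componentIn G (C \ (E ∪ A)) y)
    (hN : IsLobe G (componentIn G (C \ (E ∪ A)) y) c N) (hNc : ConnectedIn G N)
    (hav : ∀ u ∈ N, u ∉ nbrsIn G E C ∧ u ∉ Y) (hz : ∃ v ∈ N, v ≠ z)
    (hX : CompensatesLeft G z C X E A l ∨ ∀ u ∈ N, u ∉ X) : Admissible k (Linked G C X Y) := by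
  have hDC : componentIn G (C \ (E ∪ A)) y ⊆ C := componentIn_sdiff_subset
  have hHD : Disjoint (E ∪ A) (componentIn G (C \ (E ∪ A)) y) := disjoint_componentIn_sdiff
  have hNA : ∀ u ∈ N, u ∈ nbrsIn G A C → u ∈ nbrsIn G A N := fun u hu huA =>
    mem_nbrsIn.2 ⟨hu, (mem_nbrsIn.1 huA).2⟩
  have hyN : y ∈ componentIn G (C \ (E ∪ A)) y \ N :=
    mem_sdiff.2 ⟨mem_componentIn_self hy, fun hyN => (hav y hyN).2 hyY⟩
  obtain ⟨t, ht⟩ := (hN.connectedIn_sdiff (connectedIn_componentIn hy) hc).exists_path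
    (mem_sdiff.2 ⟨hc, hN.notMem⟩) hyN
  refine (h.isAttached_of_isLobe_componentIn hy hc hN hav hNc).admissible_of_not_isFreeLobe
    (r := 1 + t + 1) ih ((card_le_card hN.subset).trans_lt K.card_componentIn_lt) hz
    (fun d hd M hM => ?_) (fun u hu huz => ?_) K.one_le_fallback K.admissible_fallback
    fun s r hs hr => ?_
  · obtain ⟨u, hu, huA⟩ := h.exists_mem_nbrsIn_right_of_isLobe (hDC (hN.subset hd))
      (hN.trans hM.1 fun u hu => (hM.2 u hu).2) fun u hu => hav u (hM.1.subset hu)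
    exact (hM.2 u hu).1 (hNA u (hM.1.subset hu) huA)
  · have hD := K.le_degIn_componentIn_of_notMem h (hN.subset hu) huz (hav u hu).1
      (hX.imp_right fun hX => hX u hu)
    have hdeg := hN.degIn_le hu
    rw [ind_nbrsIn_of_subset hu (hN.subset.trans hDC), ind_of_notMem (hav u hu).2] at hD
    omega
  · have hcore := K.linked_extend_right hs (hHD.mono_right hN.subset) hr
    have hlink := hcore.append ⟨c, mem_singleton_self c, y, hyY, ht⟩
      (fun u hu => (mem_nbrsIn_singleton.1 hu).2.symm)
      (disjoint_union_left.2 ⟨hHD.mono_right sdiff_subset, disjoint_sdiff⟩)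
    rw [show s + r + (1 + t + 1) = s + r + 1 + t + 1 by omega]
    exact hlink.mono (Finset.union_subset (Finset.union_subset K.union_subset
      (hN.subset.trans hDC)) (sdiff_subset.trans hDC)) Subset.rfl Subset.rfl

theorem admissible_of_core_of_isLobe (h : IsReducedRooted G k z C X Y)
    (ih : AdmissibleBelow G #C) (K : IsCore G z C X E A L l P p) (hyY : y ∈ Y)
    (hy : y ∈ C \ (E ∪ A)) (hc : c ∈ componentIn G (C \ (E ∪ A)) y)
    (hN : IsLobe G (componentIn G (C \ (E ∪ A)) y) c N)
    (hav : ∀ u ∈ N, u ∉ nbrsIn G E C ∧ u ∉ Y) (hz : ∃ v ∈ N, v ≠ z)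
    (hX : CompensatesLeft G z C X E A l ∨ ∀ u ∈ N, u ∉ X) : Admissible k (Linked G C X Y) := by
  obtain ⟨v, hv, hvz⟩ := hz
  have hvc : v ≠ c := ne_of_mem_of_not_mem hv hN.notMem
  have hvD : v ∈ componentIn G (C \ (E ∪ A)) y \ {c} := by simp [hN.subset hv, hvc]
  have hsub := hN.componentIn_subset hv
  exact h.admissible_of_core_of_connected_lobe ih K hyY hy hc
    (.componentIn_sdiff (hN.subset hv) hvc) (connectedIn_componentIn hvD)
    (fun u hu => hav u (hsub hu)) ⟨v, mem_componentIn_self hvD, hvz⟩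
    (hX.imp_right fun hX u hu => hX u (hsub hu))

theorem admissible_of_core_of_forall_notMem_nbrsIn (h : IsReducedRooted G k z C X Y)
    (ih : AdmissibleBelow G #C) (K : IsCore G z C X E A L l P p) (hyY : y ∈ Y)
    (hy : y ∈ C \ (E ∪ A)) (hE : ∀ u ∈ componentIn G (C \ (E ∪ A)) y, u ∉ nbrsIn G E C)
    (hX : CompensatesLeft G z C X E A l) : Admissible k (Linked G C X Y) := by
  have hyD := mem_componentIn_self (G := G) hy
  have hDC : componentIn G (C \ (E ∪ A)) y ⊆ C := componentIn_sdiff_subset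
  have hHD : Disjoint (E ∪ A) (componentIn G (C \ (E ∪ A)) y) := disjoint_componentIn_sdiff
  have hatt : IsAttached G (componentIn G (C \ (E ∪ A)) y)
      (nbrsIn G A (componentIn G (C \ (E ∪ A)) y)) (Y ∩ componentIn G (C \ (E ∪ A)) y) := by
    refine ⟨connectedIn_componentIn hy, nbrsIn_subset, inter_subset_right, ?_,
      ⟨y, mem_inter.2 ⟨hyY, hyD⟩⟩⟩
    obtain ⟨e, he⟩ := K.nonempty
    obtain ⟨u, hu, w, hw, hwD, huw⟩ := h.connected.exists_adj hDC ⟨y, hyD⟩ (K.subset_left he)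
      (disjoint_left.1 hHD (mem_union_left _ he))
    exact ⟨u, mem_nbrsIn.2 ⟨hu, w,
      (mem_componentIn_or_mem_right_of_adj hu (hE u hu) hw huw).resolve_left hwD, huw.symm⟩⟩
  refine hatt.admissible_of_not_isFreeLobe (r := 1) ih K.card_componentIn_lt
    ⟨y, hyD, ne_of_mem_of_not_mem hyY h.notMem_right⟩ (fun d hd M hM => ?_) (fun u hu huz => ?_)
    K.one_le_fallback K.admissible_fallback fun s r hs hr => ?_
  · obtain ⟨u, hu, huA⟩ := h.exists_mem_nbrsIn_right_of_isLobe (hDC hd) hM.1 fun u hu =>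
      ⟨hE u (hM.1.subset hu), fun huY => (hM.2 u hu).2 (mem_inter.2 ⟨huY, hM.1.subset hu⟩)⟩
    exact (hM.2 u hu).1 (mem_nbrsIn.2 ⟨hM.1.subset hu, (mem_nbrsIn.1 huA).2⟩)
  · have hdeg := K.le_degIn_componentIn_of_notMem h hu huz (hE u hu) (.inl hX)
    rwa [ind_nbrsIn_of_subset hu hDC, ← ind_inter_of_mem (X := Y) hu] at hdeg
  · exact (K.linked_extend_right hs hHD hr).mono (Finset.union_subset K.union_subset hDC)
      Subset.rfl inter_subset_left

theorem admissible_of_core_singleton_of_forall_notMem_nbrsIn (h : IsReducedRooted G k z C X Y)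
    (ih : AdmissibleBelow G #C) (K : IsCore G z C X E {a} L l P p) (hy : y ∈ C \ (E ∪ {a}))
    (hE : ∀ u ∈ componentIn G (C \ (E ∪ {a})) y, u ∉ nbrsIn G E C)
    (hX : a ∈ X ∨ (∀ v ∈ C, v ∉ E ∪ {a} → v ∈ X → ¬ G.Adj v a) ∧ 2 ≤ #E) :
    Admissible k (Linked G C X Y) := by
  have hyD := mem_componentIn_self (G := G) hy
  have hDC : componentIn G (C \ (E ∪ {a})) y ⊆ C := componentIn_sdiff_subset
  have hHD : Disjoint (E ∪ {a}) (componentIn G (C \ (E ∪ {a})) y) := disjoint_componentIn_sdiff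
  have hEaD := Finset.disjoint_union_left.1 hHD
  have haC : a ∈ C := K.subset_right (mem_singleton_self a)
  have hlobe : IsLobe G C a (componentIn G (C \ (E ∪ {a})) y) :=
    ⟨hDC, disjoint_singleton_left.1 hEaD.2, ⟨y, hyD⟩, fun u hu w hw huw =>
      (mem_componentIn_or_mem_right_of_adj hu (hE u hu) hw huw).imp_right mem_singleton.1⟩
  have hEsub : E ⊆ C \ insert a (componentIn G (C \ (E ∪ {a})) y) := fun e he => by
    have hea := disjoint_left.1 K.disjoint he
    have heD := disjoint_left.1 hEaD.1 he
    simp_all [K.subset_left he]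
  by_cases hz : z ∈ componentIn G (C \ (E ∪ {a})) y
  · refine (h.admissible_or_eq_singleton_of_isLobe ih haC
      (hlobe.sdiff_insert (K.nonempty.mono hEsub)) (fun h => ?_) fun hC => ?_).elim id ?_
    · exact (mem_sdiff.1 h).2 (mem_insert_of_mem hz)
    · have hya := ne_of_mem_of_not_mem hyD hlobe.notMem
      exact (mem_sdiff.1 ((mem_insert.1 (hC.ge (hDC hyD))).resolve_left hya)).2
        (mem_insert_of_mem hyD)
    · rintro ⟨haX, u, -, hu, -⟩
      have hcard := card_le_card (hEsub.trans hu.le)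
      have hcard' := (hX.resolve_left haX).2
      rw [card_singleton] at hcard
      omega
  · refine (h.admissible_or_eq_singleton_of_isLobe ih haC hlobe hz fun hC => ?_).elim id ?_
    · obtain ⟨e, he⟩ := K.nonempty
      exact (mem_sdiff.1 (hEsub he)).2 (hC.ge (K.subset_left he))
    · rintro ⟨haX, u, huX, hu, hua⟩
      have huD : u ∈ componentIn G (C \ (E ∪ {a})) y := by rw [hu]; exact mem_singleton_self u
      exact absurd hua
        ((hX.resolve_left haX).1 u (hDC huD) (fun huH => disjoint_left.1 hHD huH huD) huX)

theorem admissible_or_exists_mem_nbrsIn_of_core (h : IsReducedRooted G k z C X Y)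
    (ih : AdmissibleBelow G #C) (K : IsCore G z C X E A L l P p) (hyY : y ∈ Y)
    (hy : y ∈ C \ (E ∪ A)) : Admissible k (Linked G C X Y) ∨
      ∃ u ∈ componentIn G (C \ (E ∪ A)) y, u ∈ nbrsIn G E C := by
  refine or_iff_not_imp_right.2 fun hE => ?_
  push Not at hE
  rcases K.compensatesLeft_or with hX | ⟨a, rfl, hX⟩
  exacts [h.admissible_of_core_of_forall_notMem_nbrsIn ih K hyY hy hE hX,
    h.admissible_of_core_singleton_of_forall_notMem_nbrsIn ih K hy hE hX]

theorem admissible_or_mem_of_isLobe_core (h : IsReducedRooted G k z C X Y)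
    (ih : AdmissibleBelow G #C) (K : IsCore G z C X E A L l P p) (hyY : y ∈ Y)
    (hy : y ∈ C \ (E ∪ A)) (hc : c ∈ componentIn G (C \ (E ∪ A)) y)
    (hM : IsLobe G (componentIn G (C \ (E ∪ A)) y) c M)
    (hav : ∀ u ∈ M, u ∉ nbrsIn G E C ∧ u ∉ Y) : Admissible k (Linked G C X Y) ∨ z ∈ M := by
  refine or_iff_not_imp_right.2 fun hz => ?_
  by_cases hX : CompensatesLeft G z C X E A l ∨ ∀ u ∈ M, u ∉ X
  · obtain ⟨w, hw⟩ := hM.nonempty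
    exact h.admissible_of_core_of_isLobe ih K hyY hy hc hM hav
      ⟨w, hw, ne_of_mem_of_not_mem hw hz⟩ hX
  push Not at hX
  obtain ⟨a, rfl, ha⟩ := K.compensatesLeft_or.resolve_left hX.1
  have hDC : componentIn G (C \ (E ∪ {a})) y ⊆ C := componentIn_sdiff_subset
  have haC : a ∈ C := K.subset_right (mem_singleton_self a)
  have hout : ∀ u ∈ componentIn G (C \ (E ∪ {a})) y, u ∉ E ∪ {a} := fun u hu =>
    (mem_componentIn_sdiff hu).2
  have haD : a ∉ componentIn G (C \ (E ∪ {a})) y := fun haD => hout a haD (by simp)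
  have hpair : IsPairLobe G C a c M :=
    ⟨hM.subset.trans hDC, fun haM => haD (hM.subset haM), hM.notMem, hM.nonempty,
      fun u hu w hw huw => (mem_componentIn_or_mem_right_of_adj (hM.subset hu) (hav u hu).1 hw
        huw).elim (fun hwD => (hM.closed u hu w hwD huw).imp_right .inr)
        fun hwA => .inr (.inl (mem_singleton.1 hwA))⟩
  have hMY : Disjoint M Y := disjoint_left.2 fun u hu => (hav u hu).2
  have hac : a ≠ c := (ne_of_mem_of_not_mem hc haD).symm
  rcases ha with haX | ⟨hna, -⟩
  · exact h.admissible_of_isPairLobe ih haC (hDC hc) hac hpair hz hMY haX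
  · exact h.admissible_of_isPairLobe_of_not_adj ih haC (hDC hc) hac hpair hz hMY hX.2
      fun u hu => hna u (hDC (hM.subset hu)) (hout u (hM.subset hu))

theorem admissible_or_componentIn_eq_insert (h : IsReducedRooted G k z C X Y)
    (ih : AdmissibleBelow G #C) (K : IsCore G z C X E A L l P p) (hyY : y ∈ Y)
    (hy : y ∈ C \ (E ∪ A)) : Admissible k (Linked G C X Y) ∨
      y ∈ nbrsIn G E C ∧ ∃ M, IsLobe G (componentIn G (C \ (E ∪ A)) y) y M ∧ z ∈ M ∧
        componentIn G (C \ (E ∪ A)) y = insert y M ∧ ∀ u ∈ M, u ∉ nbrsIn G E C ∧ u ∉ Y := by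
  refine or_iff_not_imp_left.2 fun hcon => ?_
  obtain ⟨u, hu, huE⟩ :=
    (h.admissible_or_exists_mem_nbrsIn_of_core ih K hyY hy).resolve_left hcon
  have hyD := mem_componentIn_self (G := G) hy
  have hDC : componentIn G (C \ (E ∪ A)) y ⊆ C := componentIn_sdiff_subset
  have hHD : Disjoint (E ∪ A) (componentIn G (C \ (E ∪ A)) y) := disjoint_componentIn_sdiff
  have hatt : IsAttached G (componentIn G (C \ (E ∪ A)) y)
      (nbrsIn G E (componentIn G (C \ (E ∪ A)) y)) (Y ∩ componentIn G (C \ (E ∪ A)) y) :=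
    ⟨connectedIn_componentIn hy, nbrsIn_subset, inter_subset_right,
      ⟨u, mem_nbrsIn.2 ⟨hu, (mem_nbrsIn.1 huE).2⟩⟩, ⟨y, mem_inter.2 ⟨hyY, hyD⟩⟩⟩
  have hav : ∀ c M, IsFreeLobe G (componentIn G (C \ (E ∪ A)) y)
      (nbrsIn G E (componentIn G (C \ (E ∪ A)) y)) (Y ∩ componentIn G (C \ (E ∪ A)) y) c M →
      ∀ u ∈ M, u ∉ nbrsIn G E C ∧ u ∉ Y := fun c M hM u hu =>
    ⟨fun huE => (hM.2 u hu).1 (mem_nbrsIn.2 ⟨hM.1.subset hu, (mem_nbrsIn.1 huE).2⟩),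
      fun huY => (hM.2 u hu).2 (mem_inter.2 ⟨huY, hM.1.subset hu⟩)⟩
  obtain ⟨c, hc, M, hM, hzM, hD⟩ := (hatt.admissible_or_isFreeLobe (r := 1) ih
    K.card_componentIn_lt ⟨y, hyD, ne_of_mem_of_not_mem hyY h.notMem_right⟩
    (fun c hc M hM => (h.admissible_or_mem_of_isLobe_core ih K hyY hy hc hM.1
      (hav c M hM)).resolve_left hcon)
    (fun v hv hvz => by
      have hdeg := K.le_degIn_componentIn h hv hvz
      rwa [ind_nbrsIn_of_subset hv hDC, ← ind_inter_of_mem (X := Y) hv] at hdeg)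
    K.one_le K.admissible fun t s ht hs => (K.linked_extend_left ht hHD hs).mono
      (Finset.union_subset K.union_subset hDC) Subset.rfl inter_subset_left).resolve_left hcon
  obtain rfl : y = c :=
    (mem_insert.1 (hD ▸ hyD)).resolve_right fun hyM => (hav c M hM y hyM).2 hyY
  have hyE : y ∈ nbrsIn G E C := by
    obtain rfl | huM := mem_insert.1 (hD.le hu)
    exacts [huE, absurd huE (hav y M hM u huM).1]
  exact ⟨hyE, M, hM.1, hzM, hD, hav y M hM⟩

theorem admissible_or_isTerminal (h : IsReducedRooted G k z C X Y) (ih : AdmissibleBelow G #C)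
    (K : IsCore G z C X E A L l P p) :
    Admissible k (Linked G C X Y) ∨ Y ⊆ E ∪ A ∨ ∃ c M, IsTerminal G z C Y E A c M ∧
      ((CompensatesLeft G z C X E A l ∨ ∀ u ∈ M, u ∉ X) → M = {z}) := by
  refine or_iff_not_imp_left.2 fun hcon => or_iff_not_imp_left.2 fun hY => ?_
  obtain ⟨c, hcY, hcH⟩ := not_subset.1 hY
  have hc : c ∈ C \ (E ∪ A) := mem_sdiff.2 ⟨h.subset_right hcY, hcH⟩
  obtain ⟨hcE, M, hM, hzM, hD, hav⟩ :=
    (h.admissible_or_componentIn_eq_insert ih K hcY hc).resolve_left hcon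
  have hzc : z ∈ componentIn G (C \ (E ∪ A)) c := hM.subset hzM
  have hsub : Y ⊆ insert c (E ∪ A) := fun y hyY => by
    by_cases hyH : y ∈ E ∪ A
    · exact mem_insert_of_mem hyH
    have hy : y ∈ C \ (E ∪ A) := mem_sdiff.2 ⟨h.subset_right hyY, hyH⟩
    obtain ⟨-, M', hM', hzM', -⟩ :=
      (h.admissible_or_componentIn_eq_insert ih K hyY hy).resolve_left hcon
    have hyc : y ∈ insert c M := by
      rw [← hD, ← componentIn_eq_of_mem hzc, componentIn_eq_of_mem (hM'.subset hzM')]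
      exact mem_componentIn_self hy
    obtain rfl := (mem_insert.1 hyc).resolve_right fun hyM => (hav y hyM).2 hyY
    exact mem_insert_self y _
  refine ⟨c, M, ⟨hcY, hcE, hcH, hM.notMem, hzM, (componentIn_eq_of_mem hzc).trans hD,
    fun u hu => (hav u hu).symm, hsub⟩, fun hX => ?_⟩
  refine eq_singleton_iff_unique_mem.2 ⟨hzM, fun v hv => by_contra fun hvz => hcon ?_⟩
  exact h.admissible_of_core_of_isLobe ih K hcY hc (mem_componentIn_self hc) hM hav
    ⟨v, hv, hvz⟩ hX

end IsReducedRooted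

namespace IsTerminal

variable {k L l : ℕ} {c z : V} {C M X Y E A : Finset V} {P p : ℕ → Prop}

theorem linked (hT : IsTerminal G z C Y E A c M) (K : IsCore G z C X E A L l P p) {t : ℕ}
    (ht : P t) : Linked G C X Y (t + 1) := by
  obtain ⟨hcC, e, he, hec⟩ := mem_nbrsIn.1 hT.mem_nbrs
  have hlink : Linked G (E ∪ A ∪ {c}) X Y (t + 0 + 1) :=
    K.linked_extend_left ht (disjoint_singleton_right.2 hT.notMem_core)
      ((Linked.singleton c).mono Subset.rfl
        (singleton_subset_iff.2 (mem_nbrsIn.2 ⟨mem_singleton_self c, e, he, hec⟩))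
        (singleton_subset_iff.2 hT.mem))
  exact hlink.mono (union_subset K.union_subset (singleton_subset_iff.2 hcC)) Subset.rfl Subset.rfl

theorem le_succ (hT : IsTerminal G z C Y E A c {z}) (h : IsReducedRooted G k z C X Y)
    (K : IsCore G z C X E A L l P p) : k ≤ L + 1 := by
  have hcD : c ∈ componentIn G (C \ (E ∪ A)) z := by simp [hT.componentIn_eq]
  have hcz : c ≠ z := fun hcz => hT.notMem (mem_singleton.2 hcz)
  have hdeg := K.le_degIn_componentIn h hcD hcz
  have hle : degIn G c (componentIn G (C \ (E ∪ A)) z) ≤ 1 := by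
    rw [hT.componentIn_eq]
    have := degIn_lt_card_of_mem (G := G) (mem_insert_self c {z})
    rw [card_pair hcz] at this
    omega
  rw [ind_of_mem hT.mem_nbrs, ind_of_mem hT.mem] at hdeg
  omega

end IsTerminal

theorem exists_mem_ne_ne {K : Finset V} (hK : 3 ≤ #K) (u v : V) : ∃ w ∈ K, w ≠ u ∧ w ≠ v := by
  have hcard : #{u, v} < #K := card_le_two.trans_lt hK
  obtain ⟨w, hw, hwuv⟩ := exists_mem_notMem_of_card_lt_card hcard
  exact ⟨w, hw, by simpa using hwuv⟩

theorem hasPathIn_of_isClique {K : Finset V} {u v : V} {t : ℕ} (hK : G.IsClique K) (hu : u ∈ K)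
    (hv : v ∈ K) (huv : u ≠ v) (ht : t + 2 ≤ #K) : HasPathIn G K u v (t + 1) := by
  induction t generalizing K u with
  | zero => exact .cons hu (hK hu hv huv) (.refl (mem_erase.2 ⟨huv.symm, hv⟩))
  | succ t ih =>
    obtain ⟨w, hw, hwu, hwv⟩ := exists_mem_ne_ne (show 3 ≤ #K by omega) u v
    refine .cons hu (hK hu hw hwu.symm) (ih (hK.subset (coe_subset.2 (erase_subset u K)))
      (mem_erase.2 ⟨hwu, hw⟩) (mem_erase.2 ⟨huv.symm, hv⟩) hwv ?_)
    rw [card_erase_of_mem hu]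
    omega

theorem Linked.of_isClique {K : Finset V} {e : V} {t : ℕ} (hK : G.IsClique K) (he : e ∈ K)
    (ht : t < #K) : Linked G K K {e} t := by
  cases t with
  | zero => exact ⟨e, he, e, mem_singleton_self e, .refl he⟩
  | succ t =>
    obtain ⟨u, hu, hue⟩ := exists_mem_ne (show 1 < #K by omega) e
    exact ⟨u, hu, e, mem_singleton_self e, hasPathIn_of_isClique hK hu he hue ht⟩

theorem isClique_insert_of_forall_adj {K : Finset V} {v : V} (hK : G.IsClique K)
    (hv : ∀ w ∈ K, G.Adj v w) : G.IsClique (insert v K : Finset V) := by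
  rw [coe_insert, isClique_insert]
  exact ⟨hK, fun w hw _ => hv w hw⟩

theorem ind_add_degIn_le_card_of_maximal_isClique {X K : Finset V} {v : V} (hKX : K ⊆ X)
    (hK : G.IsClique K) (hmax : ∀ K' ⊆ X, G.IsClique (K' : Set V) → #K' ≤ #K) (hv : v ∉ K) :
    ind X v + degIn G v K ≤ #K := by
  by_cases hvX : v ∈ X
  · have hlt : degIn G v K < #K := degIn_lt_card <| by
      by_contra! hadj
      have hcard := hmax (insert v K) (insert_subset hvX hKX)
        (isClique_insert_of_forall_adj hK hadj)
      rw [card_insert_of_notMem hv] at hcard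
      omega
    rw [ind_of_mem hvX]
    omega
  · rw [ind_of_notMem hvX, zero_add]
    exact degIn_le_card

theorem isCore_of_maximal_isClique {z : V} {C X K : Finset V} (hXC : X ⊆ C) (hKX : K ⊆ X)
    (hK : G.IsClique K) (hmax : ∀ K' ⊆ X, G.IsClique (K' : Set V) → #K' ≤ #K) (h2 : 2 ≤ #K) :
    IsCore G z C X K ∅ #K 2 (fun t => t < #K) (fun _ => True) where
  subset_left := hKX.trans hXC
  subset_right := empty_subset C
  disjoint := disjoint_empty_right K
  nonempty := card_pos.1 (by omega)
  one_le := by omega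
  admissible := .of_interval (a := 0) (by simp)
  linked_left t ht e he := (Linked.of_isClique hK he ht).mono subset_union_left hKX Subset.rfl
  loss_left v hv hvK _ := by
    rw [union_empty] at hvK
    have hle := ind_add_degIn_le_card_of_maximal_isClique hKX hK hmax hvK
    rw [degIn_empty]
    by_cases hvE : v ∈ nbrsIn G K C
    · rw [ind_of_mem hvE]
      omega
    · have hX := ind_le_one (X := X) (v := v)
      rw [degIn_eq_zero_of_notMem_nbrsIn hv hvE]
      omega
  one_le_fallback := by omega
  admissible_fallback := .of_interval (a := 0) (by simp)
  linked_right := by simp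
  loss_right v _ _ _ _ _ := by
    rw [degIn_empty]
    omega
  compensatesLeft_or := .inl fun v _ _ _ _ _ => by
    rw [degIn_empty]
    omega

theorem IsTerminal.not_isReducedRooted {k : ℕ} {c z : V} {C M X Y E : Finset V}
    (hT : IsTerminal G z C Y E ∅ c M) : ¬ IsReducedRooted G k z C X Y := fun h => by
  have hMD : ∀ u ∈ M, u ∈ componentIn G (C \ (E ∪ ∅)) z := fun u hu =>
    hT.componentIn_eq ▸ mem_insert_of_mem hu
  obtain ⟨u, hu, huY⟩ := h.lobe_right c (h.subset_right hT.mem) M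
    ⟨fun u hu => componentIn_sdiff_subset (hMD u hu), hT.notMem, ⟨z, hT.exceptional_mem⟩,
      fun u hu w hw huw => by
        have hwD := (mem_componentIn_or_mem_right_of_adj (hMD u hu) (hT.avoids u hu).2 hw
          huw).resolve_right (notMem_empty w)
        rw [hT.componentIn_eq] at hwD
        exact (mem_insert.1 hwD).symm⟩
  exact (hT.avoids u hu).1 huY

namespace IsReducedRooted

variable {k : ℕ} {v w x x' y z : V} {C X Y K : Finset V}

theorem admissible_or_subset_isClique (h : IsReducedRooted G k z C X Y) (ih : AdmissibleBelow G #C)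
    (hx : x ∈ X) (hx' : x' ∈ X) (hxx : G.Adj x x') :
    Admissible k (Linked G C X Y) ∨ ∃ K ⊆ X, G.IsClique K ∧ Y ⊆ K := by
  obtain ⟨K, hK, hmax⟩ := exists_max_image
    (X.powerset.filter fun K : Finset V => G.IsClique (K : Set V)) card ⟨∅, by simp⟩
  simp only [mem_filter, mem_powerset, and_imp] at hK hmax
  have h2 : 2 ≤ #K := by
    rw [← card_pair hxx.ne]
    exact hmax {x, x'} (by simp [insert_subset_iff, hx, hx']) (by simp [hxx])
  refine (h.admissible_or_isTerminal ih
    (isCore_of_maximal_isClique h.subset_left hK.1 hK.2 hmax h2)).imp_right ?_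
  rintro (hY | ⟨c, M, hT, -⟩)
  · exact ⟨K, hK.1, hK.2, by rwa [union_empty] at hY⟩
  · exact absurd h hT.not_isReducedRooted

theorem exists_adj_ne_componentIn (h : IsReducedRooted G k z C X Y) (hv : v ∈ C \ X)
    (hy : y ∈ X) : ∃ x ∈ X, x ≠ y ∧ ∃ u ∈ componentIn G (C \ X) v, G.Adj x u := by
  by_contra! hcon
  obtain ⟨u, hu, huX⟩ := h.lobe_left y (h.subset_left hy) (componentIn G (C \ X) v)
    ⟨componentIn_sdiff_subset, fun hyD => (mem_componentIn_sdiff hyD).2 hy,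
      ⟨v, mem_componentIn_self hv⟩, fun u hu w hw huw =>
        (mem_componentIn_sdiff_or_of_adj hu hw huw).imp_right fun hwX =>
          by_contra fun hwy => hcon w hwX hwy u hu huw.symm⟩
  exact (mem_componentIn_sdiff hu).2 huX

theorem isAttached_componentIn_sdiff (h : IsReducedRooted G k z C X Y) (hv : v ∈ C \ X)
    (hx : x ∈ nbrsIn G {y} (componentIn G (C \ X) v)) (hy : y ∈ X) :
    IsAttached G (componentIn G (C \ X) v) (nbrsIn G (X.erase y) (componentIn G (C \ X) v))
      (nbrsIn G {y} (componentIn G (C \ X) v)) := by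
  obtain ⟨w, hw, hwy, u, hu, hwu⟩ := h.exists_adj_ne_componentIn hv hy
  exact ⟨connectedIn_componentIn hv, nbrsIn_subset, nbrsIn_subset,
    ⟨u, mem_nbrsIn.2 ⟨hu, w, mem_erase.2 ⟨hwy, hw⟩, hwu⟩⟩, ⟨x, hx⟩⟩

theorem not_isFreeLobe_componentIn_sdiff (h : IsReducedRooted G k z C X Y) {c : V} {M : Finset V}
    (hc : c ∈ componentIn G (C \ X) v) : ¬ IsFreeLobe G (componentIn G (C \ X) v)
      (nbrsIn G (X.erase y) (componentIn G (C \ X) v))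
      (nbrsIn G {y} (componentIn G (C \ X) v)) c M := fun hM => by
  obtain ⟨u, hu, huX⟩ := h.lobe_left c (componentIn_sdiff_subset hc) M
    ⟨hM.1.subset.trans componentIn_sdiff_subset, hM.1.notMem, hM.1.nonempty, fun u hu w hw huw => by
      rcases mem_componentIn_sdiff_or_of_adj (hM.1.subset hu) hw huw with hwD | hwX
      · exact hM.1.closed u hu w hwD huw
      by_cases hwy : w = y
      · exact absurd (mem_nbrsIn_singleton.2 ⟨hM.1.subset hu, hwy ▸ huw.symm⟩) (hM.2 u hu).2
      · exact absurd (mem_nbrsIn.2 ⟨hM.1.subset hu, w, mem_erase.2 ⟨hwy, hwX⟩, huw.symm⟩)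
          (hM.2 u hu).1⟩
  exact (mem_componentIn_sdiff (hM.1.subset hu)).2 huX

theorem le_degIn_componentIn_sdiff (h : IsReducedRooted G k z C X X) (hy : y ∈ X)
    (hw : w ∈ componentIn G (C \ X) v) (hwz : w ≠ z) :
    k + 2 ≤ degIn G w (componentIn G (C \ X) v) +
      ind (nbrsIn G (X.erase y) (componentIn G (C \ X) v)) w +
      ind (nbrsIn G {y} (componentIn G (C \ X) v)) w + (#X - 1) := by
  have hdeg := h.le_degIn w (componentIn_sdiff_subset hw) hwz
  rw [ind_of_notMem (mem_componentIn_sdiff hw).2] at hdeg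
  have hC : degIn G w C ≤ degIn G w (componentIn G (C \ X) v) + degIn G w X :=
    degIn_le_add fun u hu hwu => mem_componentIn_sdiff_or_of_adj hw hu hwu
  have hX : degIn G w X ≤ degIn G w (X.erase y) + degIn G w {y} := degIn_le_add fun u hu _ => by
    by_cases huy : u = y <;> simp [huy, hu]
  have hle : degIn G w (X.erase y) ≤ #X - 1 := degIn_le_card.trans_eq (card_erase_of_mem hy)
  have hlt := h.two_le_card_left
  have hone : degIn G w {y} ≤ 1 * ind (nbrsIn G {y} (componentIn G (C \ X) v)) w :=
    degIn_le_mul_ind hw degIn_le_card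
  by_cases hwX : w ∈ nbrsIn G (X.erase y) (componentIn G (C \ X) v)
  · rw [ind_of_mem hwX]
    omega
  · rw [degIn_eq_zero_of_notMem_nbrsIn hw hwX] at hX
    omega

theorem admissible_of_isClique_erase (h : IsReducedRooted G k z C K K)
    (ih : AdmissibleBelow G #C) (hK : ∀ y ∈ K, G.IsClique (K.erase y : Finset V))
    (hv : v ∈ C \ K) (hvz : v ≠ z) : Admissible k (Linked G C K K) := by
  obtain ⟨e, he⟩ := card_pos.1 (zero_lt_two.trans_le h.two_le_card_left)
  obtain ⟨y, hy, -, x, hx, hyx⟩ := h.exists_adj_ne_componentIn hv he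
  have hDC : componentIn G (C \ K) v ⊆ C := componentIn_sdiff_subset
  have hKD : Disjoint K (componentIn G (C \ K) v) := disjoint_componentIn_sdiff
  have hlt := h.two_le_card_left
  refine (h.isAttached_componentIn_sdiff hv (mem_nbrsIn_singleton.2 ⟨hx, hyx⟩)
    hy).admissible_of_not_isFreeLobe (r := 2) (P := fun t => t < #K - 1) ih
    (card_lt_card ⟨hDC, fun hs => disjoint_left.1 hKD he (hs (h.subset_left he))⟩)
    ⟨v, mem_componentIn_self hv, hvz⟩ (fun d hd M => h.not_isFreeLobe_componentIn_sdiff hd)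
    (fun w => h.le_degIn_componentIn_sdiff hy) (by omega) (.of_interval (a := 0) (by simp))
    fun t s ht hs => ?_
  have hprepend := hs.prepend (H := K.erase y) (X := K.erase y) (t := t)
    (fun e he => .of_isClique (hK y hy) he (by rwa [card_erase_of_mem hy]))
    (fun u hu => (mem_nbrsIn.1 hu).2) (hKD.mono_left (erase_subset y K))
  have hlink := hprepend.append (.singleton y) (fun u hu => (mem_nbrsIn_singleton.1 hu).2.symm)
    (disjoint_union_left.2 ⟨by simp, disjoint_singleton_right.2 (disjoint_left.1 hKD hy)⟩)
  exact hlink.mono (union_subset (union_subset ((erase_subset y K).trans h.subset_left) hDC)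
    (singleton_subset_iff.2 (h.subset_left hy))) (erase_subset y K) (singleton_subset_iff.2 hy)

theorem isClique_insert_of_subset_insert (h : IsReducedRooted G k z C K K) (hK : G.IsClique K)
    (hk : #K < k) (hC : C ⊆ insert z K) :
    k = #K + 1 ∧ z ∈ C ∧ G.IsClique (insert z K : Finset V) := by
  have hadj : ∀ w ∈ K, k = #K + 1 ∧ z ∈ C ∧ G.Adj z w := fun w hw => by
    have hdeg := h.le_degIn w (h.subset_left hw) (ne_of_mem_of_not_mem hw h.notMem_left)
    have hle : degIn G w C ≤ degIn G w K + degIn G w (C ∩ {z}) := degIn_le_add fun u hu _ => by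
      have := hC hu
      simp only [mem_insert, mem_inter, mem_singleton] at this ⊢
      tauto
    have hlt := degIn_lt_card_of_mem (G := G) hw
    have hone : degIn G w (C ∩ {z}) ≤ 1 :=
      degIn_le_card.trans (card_le_card inter_subset_right)
    rw [ind_of_mem hw] at hdeg
    have hpos : 0 < degIn G w (C ∩ {z}) := by omega
    obtain ⟨u, hu⟩ := card_pos.1 hpos
    simp only [mem_filter, mem_inter, mem_singleton] at hu
    obtain ⟨⟨hzC, rfl⟩, hwz⟩ := hu
    exact ⟨by omega, hzC, hwz.symm⟩
  obtain ⟨e, he⟩ := card_pos.1 (zero_lt_two.trans_le h.two_le_card_left)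
  exact ⟨(hadj e he).1, (hadj e he).2.1,
    isClique_insert_of_forall_adj hK fun w hw => (hadj w hw).2.2⟩

theorem admissible_of_isClique (h : IsReducedRooted G k z C K K) (ih : AdmissibleBelow G #C)
    (hK : G.IsClique K) : Admissible k (Linked G C K K) := by
  obtain ⟨e, he, e', he', hee⟩ := one_lt_card.1 (show 1 < #K from h.two_le_card_left)
  by_cases hk : k ≤ #K
  · refine .mono (.of_interval (a := 0) fun t ht => ?_) hk
    rw [Nat.zero_add]
    exact (Linked.of_isClique hK he ht).mono h.subset_left Subset.rfl (singleton_subset_iff.2 he)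
  by_cases hC : C ⊆ insert z K
  · obtain ⟨hk, hz, hKz⟩ := h.isClique_insert_of_subset_insert hK (by omega) hC
    refine .of_interval (a := 0) fun t ht => ?_
    rw [Nat.zero_add]
    cases t with
    | zero => exact ⟨e, he, e, he, .refl (h.subset_left he)⟩
    | succ t =>
      refine ⟨e, he, e', he', (hasPathIn_of_isClique hKz (mem_insert_of_mem he)
        (mem_insert_of_mem he') hee ?_).mono (insert_subset hz h.subset_left)⟩
      rw [card_insert_of_notMem h.notMem_left]
      omega
  · obtain ⟨v, hv, hvK⟩ := not_subset.1 hC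
    rw [mem_insert, not_or] at hvK
    exact h.admissible_of_isClique_erase ih
      (fun y _ => hK.subset (coe_subset.2 (erase_subset y K))) (mem_sdiff.2 ⟨hv, hvK.2⟩) hvK.1

theorem admissible_of_adj (h : IsReducedRooted G k z C X Y) (ih : AdmissibleBelow G #C)
    (hx : x ∈ X) (hx' : x' ∈ X) (hxx : G.Adj x x') : Admissible k (Linked G C X Y) := by
  refine (h.admissible_or_subset_isClique ih hx hx' hxx).elim id ?_
  rintro ⟨K, hKX, hK, hYK⟩
  obtain ⟨y, hy, y', hy', hyy⟩ := one_lt_card.1 (show 1 < #Y from h.two_le_card_right)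
  refine (h.symm.admissible_or_subset_isClique ih hy hy' (hK (hYK hy) (hYK hy') hyy)).elim
    Admissible.linked_symm ?_
  rintro ⟨K', hKY, -, hXK⟩
  obtain rfl : X = Y := (hXK.trans hKY).antisymm (hYK.trans hKX)
  exact h.admissible_of_isClique ih (hK.subset (coe_subset.2 hYK))

end IsReducedRooted

theorem not_adj_of_isIndepSet {X : Finset V} {x x' : V} (hX : G.IsIndepSet (X : Set V))
    (hx : x ∈ X) (hx' : x' ∈ X) : ¬ G.Adj x x' :=
  fun hxx => hX hx hx' hxx.ne hxx

theorem degIn_eq_zero_of_isIndepSet {X E : Finset V} {v : V} (hX : G.IsIndepSet (X : Set V))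
    (hE : E ⊆ X) (hv : v ∈ X) : degIn G v E = 0 :=
  degIn_eq_zero.2 fun _ he => not_adj_of_isIndepSet hX hv (hE he)

/-! ### Clique cores -/

/-- A clique of `C` with at least three vertices which is at least as large as every clique of `C`
meeting `X` or `Y`. -/
structure IsMaxClique (G : SimpleGraph V) (C X Y K : Finset V) : Prop where
  subset : K ⊆ C
  isClique : G.IsClique K
  three_le_card : 3 ≤ #K
  card_le : ∀ K' ⊆ C, G.IsClique (K' : Set V) → (∃ v ∈ K', v ∈ X ∨ v ∈ Y) → #K' ≤ #K

namespace IsMaxClique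

variable {k L : ℕ} {b b' c v z : V} {A C M X Y K : Finset V}

theorem symm (h : IsMaxClique G C X Y K) : IsMaxClique G C Y X K :=
  ⟨h.subset, h.isClique, h.three_le_card, fun K' hK' hcl hXY =>
    h.card_le K' hK' hcl (by simpa only [or_comm] using hXY)⟩

theorem adj_of_mem_erase (hK : IsMaxClique G C X Y K) (hb : b ∈ K) :
    ∀ w ∈ K.erase b, G.Adj w b :=
  fun _ hw => hK.isClique (mem_of_mem_erase hw) hb (ne_of_mem_erase hw)

theorem degIn_erase_lt (hK : IsMaxClique G C X Y K) (hXC : X ⊆ C) (hb : b ∈ K) (hb' : b' ∈ X)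
    (hadj : ∀ w ∈ K.erase b, G.Adj w b') (hv : v ∈ C) (hvK : v ∉ K.erase b) (hvb : G.Adj v b') :
    degIn G v (K.erase b) < #(K.erase b) := degIn_lt_card <| by
  by_contra! hcon
  have hb'K : b' ∉ K.erase b := fun h => G.irrefl (hadj _ h)
  have hcl : G.IsClique (insert v (insert b' (K.erase b)) : Finset V) :=
    isClique_insert_of_forall_adj (isClique_insert_of_forall_adj
      (hK.isClique.subset (coe_subset.2 (erase_subset b K))) fun w hw => (hadj w hw).symm)
      (forall_mem_insert _ _ _ |>.2 ⟨hvb, hcon⟩)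
  have hle := hK.card_le _ (insert_subset hv (insert_subset (hXC hb')
    ((erase_subset b K).trans hK.subset))) hcl ⟨b', by simp, .inl hb'⟩
  rw [card_insert_of_notMem (by simpa [hvb.ne] using hvK), card_insert_of_notMem hb'K,
    card_erase_of_mem hb] at hle
  have := hK.three_le_card
  omega

theorem loss_erase (hK : IsMaxClique G C X Y K) (hXC : X ⊆ C) (hX : G.IsIndepSet (X : Set V))
    (hb : b ∈ K) (hA : A ⊆ X) (hAne : A.Nonempty) (hadj : ∀ a ∈ A, ∀ w ∈ K.erase b, G.Adj w a)
    (hv : v ∈ C) (hvK : v ∉ K.erase b) (hvX : v ∈ X → degIn G v (K.erase b) + 3 ≤ #K + #A)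
    (hL : L + 2 = #K + #A) :
    ind X v + degIn G v A + degIn G v (K.erase b) + 1 ≤ L + ind (nbrsIn G (K.erase b) C) v := by
  have hcard := card_erase_of_mem hb
  have hthree := hK.three_le_card
  have hApos := hAne.card_pos
  have hAle : degIn G v A ≤ #A := degIn_le_card
  have hKle : degIn G v (K.erase b) ≤ #(K.erase b) := degIn_le_card
  by_cases hvE : v ∈ nbrsIn G (K.erase b) C
  · rw [ind_of_mem hvE]
    by_cases hvX' : v ∈ X
    · have := hvX hvX'
      rw [ind_of_mem hvX', degIn_eq_zero_of_isIndepSet hX hA hvX']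
      omega
    · rw [ind_of_notMem hvX']
      by_cases hpos : 0 < degIn G v A
      · obtain ⟨-, a, ha, hav⟩ := mem_nbrsIn.1 (mem_nbrsIn_of_degIn_pos hv hpos)
        have := hK.degIn_erase_lt hXC hb (hA ha) (hadj a ha) hv hvK hav.symm
        omega
      · omega
  · rw [degIn_eq_zero_of_notMem_nbrsIn hv hvE, ind_of_notMem hvE]
    by_cases hvX' : v ∈ X
    · rw [ind_of_mem hvX', degIn_eq_zero_of_isIndepSet hX hA hvX']
      omega
    · rw [ind_of_notMem hvX']
      omega

theorem linked_pair (hK : IsMaxClique G C X Y K) (hb : b ∈ K) (hbX : b ∈ X) (hb' : b' ∈ X)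
    (hbb : b' ≠ b) (hadj : ∀ w ∈ K.erase b, G.Adj w b') {t : ℕ} (ht : 1 ≤ t) (htK : t ≤ #K) {e : V}
    (he : e ∈ K.erase b) : Linked G (K.erase b ∪ {b, b'}) X {e} t := by
  have hthree := hK.three_le_card
  have hcard := card_erase_of_mem hb
  have hb'K : b' ∉ K.erase b := fun h => G.irrefl (hadj _ h)
  obtain ⟨t, rfl⟩ := Nat.exists_eq_add_of_le' ht
  rcases htK.lt_or_eq with htK | htK
  · refine ⟨b, hbX, e, mem_singleton_self e, (hasPathIn_of_isClique hK.isClique hb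
      (mem_of_mem_erase he) (ne_of_mem_erase he).symm (by omega)).mono fun x hx => ?_⟩
    by_cases hxb : x = b <;> simp [hxb, hx]
  · obtain ⟨w, hw, hwe⟩ := exists_mem_ne (show 1 < #(K.erase b) by omega) e
    obtain ⟨s, rfl⟩ : ∃ s, t = s + 1 := ⟨t - 1, by omega⟩
    refine ⟨b', hb', e, mem_singleton_self e, .cons (by simp) (hadj w hw).symm
      ((hasPathIn_of_isClique hK.isClique (mem_of_mem_erase hw) (mem_of_mem_erase he) hwe
        (by omega)).mono fun x hx => ?_)⟩
    by_cases hxb : x = b <;> grind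

theorem isCore_pair (hK : IsMaxClique G C X Y K) (hXC : X ⊆ C) (hX : G.IsIndepSet (X : Set V))
    (hb : b ∈ K) (hbX : b ∈ X) (hb' : b' ∈ X) (hbb : b' ≠ b)
    (hadj : ∀ w ∈ K.erase b, G.Adj w b') :
    IsCore G z C X (K.erase b) {b, b'} #K 2 (fun t => 1 ≤ t ∧ t ≤ #K)
      (fun t => t = 0 ∨ t = 2) := by
  have hthree := hK.three_le_card
  have hcard := card_erase_of_mem hb
  have hpair : #{b, b'} = 2 := card_pair hbb.symm
  have hAX : ({b, b'} : Finset V) ⊆ X := by simp [insert_subset_iff, hbX, hb']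
  have hadj' : ∀ a ∈ ({b, b'} : Finset V), ∀ w ∈ K.erase b, G.Adj w a := by
    simpa only [mem_insert, mem_singleton, forall_eq_or_imp, forall_eq] using
      ⟨hK.adj_of_mem_erase hb, hadj⟩
  refine ⟨(erase_subset b K).trans hK.subset, hAX.trans hXC, ?_, card_pos.1 (by omega), by omega,
    .of_interval (a := 1) (by omega), fun t ht e he => hK.linked_pair hb hbX hb' hbb hadj ht.1 ht.2
      he, fun v hv hvH _ => ?_, one_le_two, .of_step_two (a := 0) (by omega), ?_,
    fun v hv _ _ _ _ => ?_, .inl fun v _ _ _ _ hvX => ?_⟩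
  · exact disjoint_right.2 fun a ha haK => G.irrefl (hadj' a ha a haK)
  · have hle : degIn G v (K.erase b) ≤ #(K.erase b) := degIn_le_card
    exact hK.loss_erase hXC hX hb hAX ⟨b, by simp⟩ hadj' hv
      (fun h => hvH (mem_union_left _ h)) (fun _ => by omega) (by omega)
  · rintro t ht a ha
    obtain ⟨w, hw⟩ := card_pos.1 (show 0 < #(K.erase b) by omega)
    obtain ⟨a', ha', hne⟩ := exists_mem_ne (show 1 < #{b, b'} by omega) a
    rcases ht with rfl | rfl
    · exact ⟨a, hAX ha, a, mem_singleton_self a, .refl (mem_union_right _ ha)⟩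
    · exact ⟨a', hAX ha', a, mem_singleton_self a, .of_adj_adj (mem_union_right _ ha')
        (mem_union_left _ hw) (mem_union_right _ ha) (hadj' a' ha' w hw).symm (hadj' a ha w hw) hne⟩
  · have hle : degIn G v {b, b'} ≤ 2 * _ := degIn_le_mul_ind hv (degIn_le_card.trans_eq hpair)
    have hone := ind_le_one (X := nbrsIn G {b, b'} C) (v := v)
    omega
  · rw [degIn_eq_zero_of_isIndepSet hX hAX hvX]
    omega

theorem isCore_singleton (hK : IsMaxClique G C X Y K) (hXC : X ⊆ C)
    (hX : G.IsIndepSet (X : Set V)) (hb : b ∈ K) (hbX : b ∈ X)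
    (hno : ∀ b' ∈ X, b' ≠ b → ∃ w ∈ K.erase b, ¬ G.Adj w b') :
    IsCore G z C X (K.erase b) {b} (#K - 1) 1 (fun t => 1 ≤ t ∧ t < #K) (fun t => t = 0) := by
  have hthree := hK.three_le_card
  have hcard := card_erase_of_mem hb
  refine ⟨(erase_subset b K).trans hK.subset, singleton_subset_iff.2 (hXC hbX), by simp,
    card_pos.1 (by omega), by omega, .of_interval (a := 1) (by omega), ?_, fun v hv hvH _ => ?_,
    le_rfl, .one rfl, ?_, fun v hv _ _ _ _ => ?_, .inr ⟨b, rfl, .inl hbX⟩⟩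
  · rintro t ⟨ht1, ht⟩ e he
    obtain ⟨t, rfl⟩ := Nat.exists_eq_add_of_le' ht1
    exact ⟨b, hbX, e, mem_singleton_self e, (hasPathIn_of_isClique hK.isClique hb
      (mem_of_mem_erase he) (ne_of_mem_erase he).symm (by omega)).mono (erase_union_eq b K hb).ge⟩
  · rw [mem_union, not_or, mem_singleton] at hvH
    refine hK.loss_erase hXC hX hb (singleton_subset_iff.2 hbX) ⟨b, by simp⟩
      (by simpa using hK.adj_of_mem_erase hb) hv hvH.1 (fun hvX => ?_) (by simp; omega)
    obtain ⟨w, hw, hwv⟩ := hno v hvX hvH.2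
    have hlt := degIn_lt_card ⟨w, hw, fun h => hwv h.symm⟩
    rw [card_singleton]
    omega
  · rintro t rfl a ha
    obtain rfl := mem_singleton.1 ha
    exact ⟨a, hbX, a, ha, .refl (mem_union_right _ ha)⟩
  · have hle : degIn G v {b} ≤ 1 * _ := degIn_le_mul_ind hv degIn_le_card
    omega

theorem eq_pair_of_subset (hK : IsMaxClique G C X Y K) (hY : G.IsIndepSet (Y : Set V))
    (hY2 : 2 ≤ #Y) (hb : b ∈ K) (hadj : ∀ w ∈ K.erase b, G.Adj w b')
    (hYK : Y ⊆ K.erase b ∪ {b, b'}) : Y = {b, b'} := by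
  refine eq_of_subset_of_card_le (fun y hy => ?_) (card_le_two.trans hY2)
  by_contra hyA
  have hyK := (mem_union.1 (hYK hy)).resolve_right hyA
  obtain ⟨y', hy', hyy⟩ := exists_mem_ne (show 1 < #Y from hY2) y
  refine not_adj_of_isIndepSet hY hy hy' ?_
  rcases mem_union.1 (hYK hy') with hy'K | hy'A
  · exact hK.isClique (mem_of_mem_erase hyK) (mem_of_mem_erase hy'K) hyy.symm
  · rcases mem_insert.1 hy'A with rfl | hy'b
    · exact hK.adj_of_mem_erase hb y hyK
    · rw [mem_singleton.1 hy'b]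
      exact hadj y hyK

theorem admissible_of_isTerminal_pair (hK : IsMaxClique G C X Y K)
    (h : IsReducedRooted G k z C X Y) (hX : G.IsIndepSet (X : Set V)) (hb : b ∈ K) (hbX : b ∈ X)
    (hb' : b' ∈ X) (hbb : b' ≠ b) (hadj : ∀ w ∈ K.erase b, G.Adj w b')
    (hT : IsTerminal G z C Y (K.erase b) {b, b'} c {z}) : Admissible k (Linked G C X Y) := by
  have core := hK.isCore_pair (z := z) h.subset_left hX hb hbX hb' hbb hadj
  refine .mono ?_ (hT.le_succ h core)
  have hlink : ∀ t, 2 ≤ t → t ≤ #K + 1 → Linked G C X Y t := fun t ht htK => by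
    obtain ⟨s, rfl⟩ := Nat.exists_eq_add_of_le' (one_le_two.trans ht)
    exact hT.linked core ⟨by omega, by omega⟩
  obtain ⟨y, hy, hyc⟩ := exists_mem_ne (show 1 < #Y from h.two_le_card_right) c
  rcases mem_union.1 ((mem_insert.1 (hT.subset hy)).resolve_left hyc) with hyE | hyA
  · refine .of_interval (a := 1) fun i hi => ?_
    cases i with
    | zero => exact ⟨b, hbX, y, hy, .of_adj (h.subset_left hbX) (h.subset_right hy)
        (hK.adj_of_mem_erase hb y hyE).symm⟩
    | succ i => exact hlink _ (by omega) (by omega)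
  · have hyX : y ∈ X := by
      rcases mem_insert.1 hyA with rfl | hyb
      exacts [hbX, mem_singleton.1 hyb ▸ hb']
    exact .of_zero_of_interval ⟨y, hyX, y, hy, .refl (h.subset_right hy)⟩
      fun i hi => hlink _ (by omega) (by omega)

theorem admissible_or_eq_pair (hK : IsMaxClique G C X Y K) (h : IsReducedRooted G k z C X Y)
    (ih : AdmissibleBelow G #C) (hX : G.IsIndepSet (X : Set V)) (hY : G.IsIndepSet (Y : Set V))
    (hb : b ∈ K) (hbX : b ∈ X) (hb' : b' ∈ X) (hbb : b' ≠ b)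
    (hadj : ∀ w ∈ K.erase b, G.Adj w b') : Admissible k (Linked G C X Y) ∨ Y = {b, b'} := by
  have core := hK.isCore_pair (z := z) h.subset_left hX hb hbX hb' hbb hadj
  rcases h.admissible_or_isTerminal ih core with hL | hYK | ⟨c, M, hT, hM⟩
  · exact .inl hL
  · exact .inr (hK.eq_pair_of_subset hY h.two_le_card_right hb hadj hYK)
  · obtain rfl := hM <| .inl <| core.compensatesLeft_or.resolve_right fun ⟨a, ha, _⟩ => by
      have := congrArg card ha
      rw [card_singleton, card_pair hbb.symm] at this
      omega
    exact .inl (hK.admissible_of_isTerminal_pair h hX hb hbX hb' hbb hadj hT)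

theorem admissible_of_isTerminal_of_mem (hK : IsMaxClique G C X Y K)
    (h : IsReducedRooted G k z C X Y) (ih : AdmissibleBelow G #C) (hY : G.IsIndepSet (Y : Set V))
    (hb : b ∈ K) (hbX : b ∈ X) (hbY : b ∈ Y) (hT : IsTerminal G z C Y (K.erase b) {b} c M) :
    Admissible k (Linked G C X Y) := by
  obtain ⟨w, hwK, hwb⟩ := exists_mem_ne (Nat.lt_of_succ_lt hK.three_le_card) b
  obtain ⟨hcY, -, hcK, -, hzM, hcomp, hav, hYs⟩ := hT
  rw [erase_union_eq b K hb] at hcK hcomp hYs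
  have hMD : ∀ u ∈ M, u ∈ componentIn G (C \ K) z := fun u hu => by
    rw [hcomp]
    exact mem_insert_of_mem hu
  have hcb : c ≠ b := fun h => hcK (h ▸ hb)
  refine h.admissible_of_isPairLobe (M := C \ insert b (insert c M)) ih (h.subset_left hbX)
    (h.subset_right hcY) hcb.symm ⟨sdiff_subset, by simp, by simp, ⟨w, ?_⟩, ?_⟩ (by simp [hzM])
    (disjoint_left.2 fun u hu huY => ?_) hbX
  · simp only [mem_sdiff, mem_insert, not_or]
    exact ⟨hK.subset hwK, hwb, fun h => hcK (h ▸ hwK), fun hwM =>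
      (mem_componentIn_sdiff (hMD w hwM)).2 hwK⟩
  · intro u hu w hw huw
    simp only [mem_sdiff, mem_insert, not_or] at hu ⊢
    by_contra! hcon
    have hwM : w ∈ M := by tauto
    rcases mem_componentIn_sdiff_or_of_adj (hMD w hwM) hu.1 huw.symm with huD | huK
    · rw [hcomp, mem_insert] at huD
      tauto
    · exact (hav w hwM).2 (mem_nbrsIn.2 ⟨hw, u, mem_erase.2 ⟨hu.2.1, huK⟩, huw⟩)
  · simp only [mem_sdiff, mem_insert, not_or] at hu
    have huK := (mem_insert.1 (hYs huY)).resolve_left hu.2.2.1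
    exact not_adj_of_isIndepSet hY huY hbY (hK.isClique huK hb hu.2.1)

theorem admissible_or_isTerminal (hK : IsMaxClique G C X Y K) (h : IsReducedRooted G k z C X Y)
    (ih : AdmissibleBelow G #C) (hX : G.IsIndepSet (X : Set V)) (hY : G.IsIndepSet (Y : Set V))
    (hb : b ∈ K) (hbX : b ∈ X) (hno : ∀ b' ∈ X, b' ≠ b → ∃ w ∈ K.erase b, ¬ G.Adj w b') :
    Admissible k (Linked G C X Y) ∨
      ∃ y ∈ Y, y ∈ K ∧ y ≠ b ∧ ∃ c M, IsTerminal G z C Y (K.erase b) {b} c M := by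
  rcases h.admissible_or_isTerminal ih (hK.isCore_singleton h.subset_left hX hb hbX hno) with
    hL | hYK | ⟨c, M, hT, -⟩
  · exact .inl hL
  · obtain ⟨y, hy, y', hy', hyy⟩ := one_lt_card.1 (show 1 < #Y from h.two_le_card_right)
    rw [erase_union_eq b K hb] at hYK
    exact absurd (hK.isClique (hYK hy) (hYK hy') hyy) (not_adj_of_isIndepSet hY hy hy')
  · obtain ⟨y, hy, hyc⟩ := exists_mem_ne (show 1 < #Y from h.two_le_card_right) c
    have hyK := (mem_insert.1 (hT.subset hy)).resolve_left hyc
    rw [erase_union_eq b K hb] at hyK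
    by_cases hyb : y = b
    · exact .inl (hK.admissible_of_isTerminal_of_mem h ih hY hb hbX (hyb ▸ hy) hT)
    · exact .inr ⟨y, hy, hyK, hyb, c, M, hT⟩

theorem admissible_or_eq_pair_or_isTerminal (hK : IsMaxClique G C X Y K)
    (h : IsReducedRooted G k z C X Y) (ih : AdmissibleBelow G #C)
    (hX : G.IsIndepSet (X : Set V)) (hY : G.IsIndepSet (Y : Set V)) (hb : b ∈ K) (hbX : b ∈ X) :
    Admissible k (Linked G C X Y) ∨ (∃ b' ∈ X, b' ≠ b ∧ Y = {b, b'}) ∨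
      ∃ y ∈ Y, y ∈ K ∧ y ≠ b ∧ ∃ c M, IsTerminal G z C Y (K.erase b) {b} c M := by
  by_cases hno : ∀ b' ∈ X, b' ≠ b → ∃ w ∈ K.erase b, ¬ G.Adj w b'
  · exact (hK.admissible_or_isTerminal h ih hX hY hb hbX hno).imp_right .inr
  · push Not at hno
    obtain ⟨b', hb', hbb, hadj⟩ := hno
    exact (hK.admissible_or_eq_pair h ih hX hY hb hbX hb' hbb hadj).imp_right fun hpair =>
      .inl ⟨b', hb', hbb, hpair⟩

theorem eq_of_mem (hK : IsMaxClique G C X Y K) (hX : G.IsIndepSet (X : Set V)) (hb : b ∈ K)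
    (hbX : b ∈ X) {x : V} (hx : x ∈ X) (hxK : x ∈ K) : x = b :=
  by_contra fun hxb => not_adj_of_isIndepSet hX hx hbX (hK.isClique hxK hb hxb)

theorem admissible_pair (hK : IsMaxClique G C {b, b'} {b, b'} K)
    (h : IsReducedRooted G k z C {b, b'} {b, b'}) (ih : AdmissibleBelow G #C)
    (hX : G.IsIndepSet (({b, b'} : Finset V) : Set V)) (hb : b ∈ K) (hbb : b' ≠ b) :
    Admissible k (Linked G C {b, b'} {b, b'}) := by
  obtain ⟨v, hv, hvb, hvz⟩ := exists_mem_ne_ne hK.three_le_card b z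
  refine h.admissible_of_isClique_erase ih (fun y hy => ?_)
    (mem_sdiff.2 ⟨hK.subset hv, fun hvX => hvb (hK.eq_of_mem hX hb (by simp) hvX hv)⟩) hvz
  refine .of_subsingleton (card_le_one_iff_subsingleton.1 ?_)
  rw [card_erase_of_mem hy, card_pair hbb.symm]

end IsMaxClique

theorem IsTerminal.eq_of_isTerminal {k : ℕ} {b c c' y z : V} {C K M M' X Y : Finset V}
    (hT : IsTerminal G z C Y (K.erase b) {b} c M) (hT' : IsTerminal G z C X (K.erase y) {y} c' M')
    (h : IsReducedRooted G k z C X Y) (hb : b ∈ K) (hy : y ∈ K)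
    (hX : G.IsIndepSet (X : Set V)) (hbX : b ∈ X) : y = b := by
  by_contra hyb
  have hcomp : componentIn G (C \ K) z = insert c M := by
    rw [← hT.componentIn_eq, erase_union_eq b K hb]
  have hcomp' : componentIn G (C \ K) z = insert c' M' := by
    rw [← hT'.componentIn_eq, erase_union_eq y K hy]
  have hMD : M ⊆ componentIn G (C \ K) z := hcomp ▸ subset_insert c M
  by_cases hcc : c' = c
  · subst hcc
    obtain rfl : M = M' := by
      rw [← erase_insert hT.notMem, ← hcomp, hcomp', erase_insert hT'.notMem]
    obtain ⟨u, hu, huY⟩ := h.lobe_right c' (h.subset_right hT.mem) M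
      ⟨hMD.trans componentIn_sdiff_subset, hT.notMem, ⟨z, hT.exceptional_mem⟩,
        fun u hu w hw huw => by
          have huC := componentIn_sdiff_subset (hMD hu)
          rcases mem_componentIn_sdiff_or_of_adj (hMD hu) hw huw with hwD | hwK
          · rw [hcomp] at hwD
            exact (mem_insert.1 hwD).symm
          by_cases hwb : w = b
          · exact absurd (mem_nbrsIn.2 ⟨huC, w, mem_erase.2 ⟨hwb.trans_ne (Ne.symm hyb), hwK⟩,
              huw.symm⟩) (hT'.avoids u hu).2
          · exact absurd (mem_nbrsIn.2 ⟨huC, w, mem_erase.2 ⟨hwb, hwK⟩, huw.symm⟩)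
              (hT.avoids u hu).2⟩
    exact (hT.avoids u hu).1 huY
  · have hc'M : c' ∈ M := (mem_insert.1 (hcomp ▸ hcomp' ▸ mem_insert_self c' M')).resolve_left hcc
    obtain ⟨hc'C, e, he, hec⟩ := mem_nbrsIn.1 hT'.mem_nbrs
    by_cases heb : e = b
    · exact not_adj_of_isIndepSet hX (heb ▸ hbX) hT'.mem hec
    · exact (hT.avoids c' hc'M).2
        (mem_nbrsIn.2 ⟨hc'C, e, mem_erase.2 ⟨heb, mem_of_mem_erase he⟩, hec⟩)

theorem IsMaxClique.admissible {k : ℕ} {b z : V} {C X Y K : Finset V}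
    (hK : IsMaxClique G C X Y K) (h : IsReducedRooted G k z C X Y) (ih : AdmissibleBelow G #C)
    (hX : G.IsIndepSet (X : Set V)) (hY : G.IsIndepSet (Y : Set V)) (hb : b ∈ K) (hbX : b ∈ X) :
    Admissible k (Linked G C X Y) := by
  rcases hK.admissible_or_eq_pair_or_isTerminal h ih hX hY hb hbX with
    hL | ⟨b', hb'X, hbb, rfl⟩ | ⟨y, hy, hyK, hyb, c, M, hT⟩
  · exact hL
  · rcases hK.symm.admissible_or_eq_pair_or_isTerminal h.symm ih hY hX hb (by simp) with
      hL | ⟨b'', hb''Y, hbb', rfl⟩ | ⟨x, hx, hxK, hxb, -⟩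
    · exact hL.linked_symm
    · obtain rfl : b'' = b' := by simpa [hbb'] using hb''Y
      exact hK.admissible_pair h ih hX hb hbb
    · exact absurd (hK.eq_of_mem hX hb hbX hx hxK) hxb
  · rcases hK.symm.admissible_or_eq_pair_or_isTerminal h.symm ih hY hX hyK hy with
      hL | ⟨y', -, -, rfl⟩ | ⟨x, -, -, -, c', M', hT'⟩
    · exact hL.linked_symm
    · exact absurd (hK.eq_of_mem hX hb hbX (by simp) hyK) hyb
    · exact absurd (hT.eq_of_isTerminal hT' h hb hyK hX hbX) hyb

theorem IsReducedRooted.admissible_of_exists_isClique {k : ℕ} {z : V} {C X Y K : Finset V}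
    (h : IsReducedRooted G k z C X Y) (ih : AdmissibleBelow G #C)
    (hX : G.IsIndepSet (X : Set V)) (hY : G.IsIndepSet (Y : Set V)) (hKC : K ⊆ C)
    (hK : G.IsClique (K : Set V)) (hthree : 3 ≤ #K) (hXY : ∃ v ∈ K, v ∈ X ∨ v ∈ Y) :
    Admissible k (Linked G C X Y) := by
  obtain ⟨K', hK', hmax⟩ := exists_max_image
    (C.powerset.filter fun K : Finset V => G.IsClique (K : Set V) ∧ ∃ v ∈ K, v ∈ X ∨ v ∈ Y)
    card ⟨K, mem_filter.2 ⟨mem_powerset.2 hKC, hK, hXY⟩⟩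
  simp only [mem_filter, mem_powerset, and_imp] at hK' hmax
  obtain ⟨hKC', hcl, v, hv, hvXY⟩ := hK'
  have hM : IsMaxClique G C X Y K' := ⟨hKC', hcl, hthree.trans (hmax K hKC hK hXY), hmax⟩
  rcases hvXY with hvX | hvY
  · exact hM.admissible h ih hX hY hv hvX
  · exact (hM.symm.admissible h.symm ih hY hX hv hvY).linked_symm

theorem hasPathIn_of_bipartite_odd {A B : Finset V} {a b : V} {j : ℕ} (hd : Disjoint A B)
    (h : ∀ a ∈ A, ∀ b ∈ B, G.Adj a b) (ha : a ∈ A) (hb : b ∈ B) (hA : j < #A) (hB : j < #B) :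
    HasPathIn G (A ∪ B) b a (2 * j + 1) := by
  induction j generalizing A B b with
  | zero => exact .of_adj (mem_union_right _ hb) (mem_union_left _ ha) (h a ha b hb).symm
  | succ j ih =>
    obtain ⟨a', ha', haa⟩ := exists_mem_ne (show 1 < #A by omega) a
    obtain ⟨b', hb', hbb⟩ := exists_mem_ne (show 1 < #B by omega) b
    have hpath : HasPathIn G (A.erase a' ∪ B.erase b) b' a (2 * j + 1) :=
      ih (hd.mono (erase_subset _ _) (erase_subset _ _))
        (fun x hx y hy => h x (mem_of_mem_erase hx) y (mem_of_mem_erase hy))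
        (mem_erase.2 ⟨haa.symm, ha⟩) (mem_erase.2 ⟨hbb, hb'⟩)
        (by rw [card_erase_of_mem ha']; omega) (by rw [card_erase_of_mem hb]; omega)
    have hne : ∀ x ∈ A, ∀ y ∈ B, x ≠ y := fun x hx y hy => disjoint_iff_ne.1 hd x hx y hy
    refine .cons (mem_union_right _ hb) (h a' ha' b hb).symm (.cons
      (mem_erase.2 ⟨hne a' ha' b hb, mem_union_left _ ha'⟩) (h a' ha' b' hb')
      (hpath.mono fun x hx => ?_))
    simp only [mem_union, mem_erase] at hx ⊢
    rcases hx with ⟨hxa, hxA⟩ | ⟨hxb, hxB⟩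
    · exact ⟨hxa, hne x hxA b hb, .inl hxA⟩
    · exact ⟨(hne a' ha' x hxB).symm, hxb, .inr hxB⟩

theorem hasPathIn_of_bipartite_even {A B : Finset V} {b b' : V} {j : ℕ} (hd : Disjoint A B)
    (h : ∀ a ∈ A, ∀ b ∈ B, G.Adj a b) (hb : b ∈ B) (hb' : b' ∈ B) (hbb : b ≠ b') (hA : j < #A)
    (hB : j + 1 < #B) : HasPathIn G (A ∪ B) b b' (2 * j + 2) := by
  obtain ⟨a, ha⟩ := card_pos.1 (show 0 < #A by omega)
  have hpath : HasPathIn G (B.erase b ∪ A) a b' (2 * j + 1) :=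
    hasPathIn_of_bipartite_odd (hd.symm.mono_left (erase_subset _ _))
      (fun x hx y hy => (h y hy x (mem_of_mem_erase hx)).symm) (mem_erase.2 ⟨hbb.symm, hb'⟩) ha
      (by rw [card_erase_of_mem hb]; omega) hA
  refine .cons (mem_union_right _ hb) (h a ha b hb).symm (hpath.mono fun x hx => ?_)
  rcases mem_union.1 hx with hxB | hxA
  · exact mem_erase.2 ⟨ne_of_mem_erase hxB, mem_union_right _ (mem_of_mem_erase hxB)⟩
  · exact mem_erase.2 ⟨disjoint_iff_ne.1 hd x hxA b hb, mem_union_left _ hxA⟩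

/-! ### Complete bipartite cores -/

/-- The vertices of `X` adjacent to all of `A`. -/
noncomputable def commonNbrs (G : SimpleGraph V) (X A : Finset V) : Finset V :=
  {x ∈ X | ∀ a ∈ A, G.Adj a x}

theorem mem_commonNbrs {X A : Finset V} {x : V} :
    x ∈ commonNbrs G X A ↔ x ∈ X ∧ ∀ a ∈ A, G.Adj a x :=
  mem_filter

theorem commonNbrs_subset {X A : Finset V} : commonNbrs G X A ⊆ X := filter_subset _ _

theorem commonNbrs_insert {X A : Finset V} {v : V} :
    commonNbrs G X (insert v A) = {w ∈ commonNbrs G X A | G.Adj v w} := by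
  ext x
  simp only [mem_commonNbrs, mem_filter, forall_mem_insert]
  tauto

/-- An independent set `X` no vertex of which lies on a triangle with two vertices of `C`: the root
neighbourhoods that remain once the configurations with large cliques are settled. -/
structure IsSparse (G : SimpleGraph V) (C X : Finset V) : Prop where
  isIndepSet : G.IsIndepSet (X : Set V)
  not_adj : ∀ x ∈ X, ∀ u ∈ C, ∀ w ∈ C, G.Adj x u → G.Adj x w → ¬ G.Adj u w

theorem IsSparse.degIn_eq_zero {C X A B : Finset V} {v : V} (h : IsSparse G C X) (hA : A ⊆ C)
    (hB : B ⊆ X) (hAB : ∀ a ∈ A, ∀ b ∈ B, G.Adj a b) (hv : v ∈ C) (hvB : v ∈ nbrsIn G B C) :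
    degIn G v A = 0 := by
  obtain ⟨-, b, hb, hbv⟩ := mem_nbrsIn.1 hvB
  exact _root_.degIn_eq_zero.2 fun a ha =>
    h.not_adj b (hB hb) v hv a (hA ha) hbv (hAB a ha b hb).symm

/-- A largest set `A ⊆ C`, disjoint from `X`, with more common neighbours in `X` than elements. -/
structure IsMaxJoin (G : SimpleGraph V) (C X A : Finset V) : Prop where
  subset : A ⊆ C
  notMem : ∀ a ∈ A, a ∉ X
  card_lt : #A < #(commonNbrs G X A)
  card_le : ∀ A' ⊆ C, (∀ a ∈ A', a ∉ X) → #A' < #(commonNbrs G X A') → #A' ≤ #A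

theorem exists_isMaxJoin {C X : Finset V} (hX : X.Nonempty) : ∃ A, IsMaxJoin G C X A := by
  obtain ⟨A, hA, hmax⟩ := exists_max_image
    {A ∈ C.powerset | (∀ a ∈ A, a ∉ X) ∧ #A < #(commonNbrs G X A)} card
    ⟨∅, mem_filter.2 ⟨empty_mem_powerset C, by simp, by simpa [commonNbrs, card_pos] using hX⟩⟩
  simp only [mem_filter, mem_powerset, and_imp] at hA hmax
  exact ⟨A, hA.1, hA.2.1, hA.2.2, hmax⟩

namespace IsMaxJoin

variable {k : ℕ} {v z : V} {C X Y A : Finset V}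

theorem adj (_ : IsMaxJoin G C X A) : ∀ a ∈ A, ∀ b ∈ commonNbrs G X A, G.Adj a b :=
  fun a ha _ hb => (mem_commonNbrs.1 hb).2 a ha

theorem disjoint (h : IsMaxJoin G C X A) : Disjoint A (commonNbrs G X A) :=
  disjoint_left.2 fun a ha ha' => h.notMem a ha (commonNbrs_subset ha')

theorem nonempty_commonNbrs (h : IsMaxJoin G C X A) : (commonNbrs G X A).Nonempty :=
  card_pos.1 (Nat.zero_lt_of_lt h.card_lt)

theorem degIn_commonNbrs_le (h : IsMaxJoin G C X A) (hv : v ∈ C) (hvA : v ∉ A) (hvX : v ∉ X) :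
    degIn G v (commonNbrs G X A) ≤ #A + 1 := by
  by_contra! hcon
  have hcard := card_insert_of_notMem hvA
  have hle := h.card_le (insert v A) (insert_subset hv h.subset)
    (forall_mem_insert _ _ _ |>.2 ⟨hvX, h.notMem⟩) (by rwa [commonNbrs_insert, hcard])
  omega

theorem degIn_lt (_ : IsMaxJoin G C X A) (hv : v ∈ X) (hvB : v ∉ commonNbrs G X A) :
    degIn G v A < #A := degIn_lt_card <| by
  by_contra! hcon
  exact hvB (mem_commonNbrs.2 ⟨hv, fun a ha => (hcon a ha).symm⟩)

theorem loss_commonNbrs (h : IsMaxJoin G C X A) (hX : IsSparse G C X) (hv : v ∈ C)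
    (hvH : v ∉ commonNbrs G X A ∪ A) :
    ind X v + degIn G v A + degIn G v (commonNbrs G X A) + 1 ≤
      #A + 1 + ind (nbrsIn G (commonNbrs G X A) C) v := by
  rw [mem_union, not_or] at hvH
  by_cases hvX : v ∈ X
  · rw [ind_of_mem hvX, degIn_eq_zero_of_isIndepSet hX.isIndepSet commonNbrs_subset hvX]
    have := h.degIn_lt hvX hvH.1
    omega
  rw [ind_of_notMem hvX]
  by_cases hvB : v ∈ nbrsIn G (commonNbrs G X A) C
  · have := h.degIn_commonNbrs_le hv hvH.2 hvX
    rw [hX.degIn_eq_zero h.subset commonNbrs_subset h.adj hv hvB, ind_of_mem hvB]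
    omega
  · have hle : degIn G v A ≤ #A := degIn_le_card
    rw [degIn_eq_zero_of_notMem_nbrsIn hv hvB]
    omega

theorem linked_even (h : IsMaxJoin G C X A) {i : ℕ} (hi : i ≤ #A) {e : V}
    (he : e ∈ commonNbrs G X A) : Linked G (commonNbrs G X A ∪ A) X {e} (2 * i) := by
  have hcard := h.card_lt
  cases i with
  | zero => exact ⟨e, commonNbrs_subset he, e, by simp, .refl (mem_union_left _ he)⟩
  | succ i =>
    obtain ⟨e', he', hee⟩ := exists_mem_ne (show 1 < #(commonNbrs G X A) by omega) e
    rw [union_comm]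
    exact ⟨e', commonNbrs_subset he', e, by simp,
      hasPathIn_of_bipartite_even h.disjoint h.adj he' he hee (by omega) (by omega)⟩

theorem linked_odd (h : IsMaxJoin G C X A) {i : ℕ} (hi : i < #A) {a : V} (ha : a ∈ A) :
    Linked G (commonNbrs G X A ∪ A) X {a} (2 * i + 1) := by
  obtain ⟨b, hb⟩ := h.nonempty_commonNbrs
  rw [union_comm]
  exact ⟨b, commonNbrs_subset hb, a, by simp,
    hasPathIn_of_bipartite_odd h.disjoint h.adj ha hb hi (hi.trans h.card_lt)⟩

theorem compensatesLeft (h : IsMaxJoin G C X A) (hA : #A ≠ 1) :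
    CompensatesLeft G z C X (commonNbrs G X A) A (max #A 1) := fun v hv hvH _ _ hvX => by
  have hlt := h.degIn_lt hvX fun hvB => hvH (mem_union_left _ hvB)
  by_cases hvA : v ∈ nbrsIn G A C
  · rw [ind_of_mem hvA]
    omega
  · rw [degIn_eq_zero_of_notMem_nbrsIn hv hvA] at hlt ⊢
    omega

theorem isCore (h : IsMaxJoin G C X A) (hX : IsSparse G C X) (hXC : X ⊆ C) :
    IsCore G z C X (commonNbrs G X A) A (#A + 1) (max #A 1) (fun t => ∃ i ≤ #A, t = 2 * i)
      (fun t => ∃ i < max #A 1, t = 2 * i + 1) where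
  subset_left := commonNbrs_subset.trans hXC
  subset_right := h.subset
  disjoint := h.disjoint.symm
  nonempty := h.nonempty_commonNbrs
  one_le := by omega
  admissible := .of_step_two (a := 0) fun i hi => ⟨i, by omega, by omega⟩
  linked_left := fun _ ⟨_, hi, ht⟩ _ he => ht ▸ h.linked_even hi he
  loss_left := fun _ hv hvH _ => h.loss_commonNbrs hX hv hvH
  one_le_fallback := le_max_right _ _
  admissible_fallback := .of_step_two (a := 1) fun i hi => ⟨i, hi, by omega⟩
  linked_right := by
    rintro t ⟨i, hi, rfl⟩ a ha
    have := card_pos.2 ⟨a, ha⟩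
    exact h.linked_odd (by omega) ha
  loss_right := fun v hv _ _ _ _ => by
    have hle : degIn G v A ≤ #A * _ := degIn_le_mul_ind hv degIn_le_card
    by_cases hvA : v ∈ nbrsIn G A C
    · rw [ind_of_mem hvA] at hle ⊢
      omega
    · rw [ind_of_notMem hvA] at hle ⊢
      omega
  compensatesLeft_or := by
    by_cases hA : #A = 1
    · have hcard := h.card_lt
      obtain ⟨a, rfl⟩ := card_eq_one.1 hA
      refine .inr ⟨a, rfl, .inr ⟨fun v _ hvH hvX hva => hvH (mem_union_left _ ?_), by omega⟩⟩
      exact mem_commonNbrs.2 ⟨hvX, by simpa using hva.symm⟩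
    · exact .inl (h.compensatesLeft hA)

theorem admissible_or_isTerminal (hA : IsMaxJoin G C X A) (h : IsReducedRooted G k z C X Y)
    (ih : AdmissibleBelow G #C) (hX : IsSparse G C X) :
    Admissible k (Linked G C X Y) ∨ Y ⊆ commonNbrs G X A ∪ A ∨
      ∃ c M, IsTerminal G z C Y (commonNbrs G X A) A c M ∧ (#A ≠ 1 ∨ (∀ u ∈ M, u ∉ X) →
        k ≤ #A + 2 ∧ ∀ i ≤ #A, Linked G C X Y (2 * i + 1)) := by
  have core := hA.isCore (z := z) hX h.subset_left
  rcases h.admissible_or_isTerminal ih core with hL | hYH | ⟨c, M, hT, hM⟩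
  · exact .inl hL
  · exact .inr (.inl hYH)
  · refine .inr (.inr ⟨c, M, hT, fun hor => ?_⟩)
    obtain rfl := hM (hor.imp_left hA.compensatesLeft)
    exact ⟨hT.le_succ h core, fun i hi => hT.linked core ⟨i, hi, rfl⟩⟩

end IsMaxJoin

theorem Admissible.of_zero_of_odd {k : ℕ} {P : ℕ → Prop} (h0 : P 0)
    (h : ∀ i < k, P (2 * i + 1)) : Admissible (k + 1) P := by
  refine ⟨fun i => 2 * i - 1, fun i hi => ?_, fun i _ => by dsimp only; omega⟩
  cases i with
  | zero => exact h0
  | succ i => exact h i (by omega)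

namespace IsMaxJoin

variable {c y u v z : V} {C X Y A M : Finset V}

theorem subset_commonNbrs (hA : IsMaxJoin G C X A) (hY : G.IsIndepSet (Y : Set V)) (hyX : y ∈ X)
    (hyY : y ∈ Y) (hYH : Y ⊆ commonNbrs G X A ∪ A) : Y ⊆ commonNbrs G X A := fun v hv => by
  refine (mem_union.1 (hYH hv)).resolve_right fun hvA => ?_
  have hyB := (mem_union.1 (hYH hyY)).resolve_right fun hyA => hA.notMem y hyA hyX
  exact not_adj_of_isIndepSet hY hv hyY (hA.adj v hvA y hyB)

theorem mem_commonNbrs_of_isTerminal (hA : IsMaxJoin G C X A) (hX : G.IsIndepSet (X : Set V))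
    (hyX : y ∈ X) (hyY : y ∈ Y) (hT : IsTerminal G z C Y (commonNbrs G X A) A c M) :
    y ∈ commonNbrs G X A := by
  obtain ⟨-, e, he, hec⟩ := mem_nbrsIn.1 hT.mem_nbrs
  rcases mem_insert.1 (hT.subset hyY) with rfl | hyH
  · exact absurd hec (not_adj_of_isIndepSet hX (commonNbrs_subset he) hyX)
  · exact (mem_union.1 hyH).resolve_right fun hyA => hA.notMem y hyA hyX

theorem subset_insert_commonNbrs_of_isTerminal (hA : IsMaxJoin G C X A)
    (hX : G.IsIndepSet (X : Set V)) (hY : G.IsIndepSet (Y : Set V)) (hyX : y ∈ X) (hyY : y ∈ Y)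
    (hT : IsTerminal G z C Y (commonNbrs G X A) A c M) : Y ⊆ insert c (commonNbrs G X A) := by
  have hyB := hA.mem_commonNbrs_of_isTerminal hX hyX hyY hT
  refine fun v hv => mem_insert.2 ((mem_insert.1 (hT.subset hv)).imp_right fun hvH => ?_)
  exact (mem_union.1 hvH).resolve_right fun hvA =>
    not_adj_of_isIndepSet hY hv hyY (hA.adj v hvA y hyB)

theorem notMem_of_isTerminal_of_isTerminal {c' : V} {A' M' : Finset V} (hA : IsMaxJoin G C X A)
    (hA' : IsMaxJoin G C Y A') (hX : G.IsIndepSet (X : Set V)) (hY : G.IsIndepSet (Y : Set V))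
    (hyX : y ∈ X) (hyY : y ∈ Y) (hT : IsTerminal G z C Y (commonNbrs G X A) A c M)
    (hT' : IsTerminal G z C X (commonNbrs G Y A') A' c' M') (hu : u ∈ M) (huX : u ∈ X)
    (hv : v ∈ M') : v ∉ Y := fun hvY => by
  have hYs := hA.subset_insert_commonNbrs_of_isTerminal hX hY hyX hyY hT
  have hXs := hA'.subset_insert_commonNbrs_of_isTerminal hY hX hyY hyX hT'
  obtain ⟨-, w, hw, hwc⟩ := mem_nbrsIn.1 hT'.mem_nbrs
  have huc : u = c' := (mem_insert.1 (hXs huX)).resolve_right fun huB =>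
    (hT.avoids u hu).1 (commonNbrs_subset huB)
  have hwc : w = c := (mem_insert.1 (hYs (commonNbrs_subset hw))).resolve_right fun hwB =>
    not_adj_of_isIndepSet hX (commonNbrs_subset hwB) (huc ▸ huX) hwc
  have hvc : v = c := (mem_insert.1 (hYs hvY)).resolve_right fun hvB =>
    (hT'.avoids v hv).1 (commonNbrs_subset hvB)
  have hvD : v ∈ componentIn G (C \ (commonNbrs G Y A' ∪ A')) z := by
    rw [hT'.componentIn_eq]
    exact mem_insert_of_mem hv
  exact (mem_componentIn_sdiff hvD).2 (mem_union_left _ (hvc ▸ hwc ▸ hw))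

theorem card_le_of_disjoint (hXY : Disjoint X Y) (hYH : Y ⊆ commonNbrs G X A ∪ A) :
    #Y ≤ #A :=
  card_le_card fun _ hv => (mem_union.1 (hYH hv)).resolve_left fun hvB =>
    disjoint_left.1 hXY (commonNbrs_subset hvB) hv

theorem subset_insert_of_isTerminal (hXY : Disjoint X Y)
    (hT : IsTerminal G z C Y (commonNbrs G X A) A c M) : Y ⊆ insert c A := fun _ hv =>
  mem_insert.2 ((mem_insert.1 (hT.subset hv)).imp_right fun hvH =>
    (mem_union.1 hvH).resolve_left fun hvB => disjoint_left.1 hXY (commonNbrs_subset hvB) hv)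

theorem mem_or_mem_of_adj_of_isTerminal {w : V} (hA : Y = insert c A)
    (hT : IsTerminal G z C Y (commonNbrs G X A) A c M) (hu : u ∈ M) (hw : w ∈ C)
    (huw : G.Adj u w) : w ∈ M ∨ w ∈ Y := by
  have huD : u ∈ componentIn G (C \ (commonNbrs G X A ∪ A)) z := by
    rw [hT.componentIn_eq]
    exact mem_insert_of_mem hu
  rcases mem_componentIn_or_mem_right_of_adj huD (hT.avoids u hu).2 hw huw with hwD | hwA
  · rw [hT.componentIn_eq] at hwD
    rcases mem_insert.1 hwD with rfl | hwM
    exacts [.inr hT.mem, .inl hwM]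
  · exact .inr (hA ▸ mem_insert_of_mem hwA)

theorem not_isTerminal_of_isTerminal_of_disjoint {c' : V} {A' M' : Finset V}
    (hA : IsMaxJoin G C X A) (hA' : IsMaxJoin G C Y A') (hC : ConnectedIn G C)
    (hYC : Y ⊆ C) (hXY : Disjoint X Y) (hT : IsTerminal G z C Y (commonNbrs G X A) A c M) :
    ¬ IsTerminal G z C X (commonNbrs G Y A') A' c' M' := fun hT' => by
  have hlt := hA.card_lt
  have hlt' := hA'.card_lt
  have hBX : #(commonNbrs G X A) ≤ #X := card_le_card commonNbrs_subset
  have hBY : #(commonNbrs G Y A') ≤ #Y := card_le_card commonNbrs_subset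
  have hYA := subset_insert_of_isTerminal hXY hT
  have hXA := subset_insert_of_isTerminal hXY.symm hT'
  have hYle := (card_le_card hYA).trans (card_insert_le c A)
  have hXle := (card_le_card hXA).trans (card_insert_le c' A')
  have hY := eq_of_subset_of_card_le hYA ((card_insert_le c A).trans (by omega))
  have hX := eq_of_subset_of_card_le hXA ((card_insert_le c' A').trans (by omega))
  have hX' : commonNbrs G X A = X := eq_of_subset_of_card_le commonNbrs_subset (by omega)
  have hY' : commonNbrs G Y A' = Y := eq_of_subset_of_card_le commonNbrs_subset (by omega)
  have hMC : M ⊆ C := fun u hu => componentIn_sdiff_subset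
    (hT.componentIn_eq ▸ mem_insert_of_mem hu)
  have hsub : C ⊆ M ∩ M' := hC.subset_of_closed (inter_subset_left.trans hMC)
    ⟨z, mem_inter.2 ⟨hT.exceptional_mem, hT'.exceptional_mem⟩⟩ fun u hu w hw huw => by
      obtain ⟨huM, huM'⟩ := mem_inter.1 hu
      refine mem_inter.2
        ⟨(mem_or_mem_of_adj_of_isTerminal hY hT huM hw huw).resolve_right fun hwY => ?_,
          (mem_or_mem_of_adj_of_isTerminal hX hT' huM' hw huw).resolve_right fun hwX => ?_⟩
      · exact (hT'.avoids u huM').2 (mem_nbrsIn.2 ⟨hMC huM, w, hY'.symm ▸ hwY, huw.symm⟩)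
      · exact (hT.avoids u huM).2 (mem_nbrsIn.2 ⟨hMC huM, w, hX'.symm ▸ hwX, huw.symm⟩)
  exact hT.notMem (mem_inter.1 (hsub (hYC hT.mem))).1

end IsMaxJoin

namespace IsReducedRooted

variable {k : ℕ} {c y z : V} {C X Y A A' M : Finset V}

theorem admissible_of_linked_odd (h : IsReducedRooted G k z C X Y) {m : ℕ} (hyX : y ∈ X)
    (hyY : y ∈ Y) (hm : k ≤ m + 2 ∧ ∀ i ≤ m, Linked G C X Y (2 * i + 1)) :
    Admissible k (Linked G C X Y) :=
  (Admissible.of_zero_of_odd ⟨y, hyX, y, hyY, .refl (h.subset_left hyX)⟩ fun i hi =>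
    hm.2 i (Nat.le_of_lt_succ hi)).mono hm.1

theorem admissible_of_isMaxJoin_of_isTerminal (h : IsReducedRooted G k z C X Y)
    (ih : AdmissibleBelow G #C) (hX : IsSparse G C X) (hY : IsSparse G C Y)
    (hA : IsMaxJoin G C X A) (hA' : IsMaxJoin G C Y A') (hyX : y ∈ X) (hyY : y ∈ Y)
    (hT : IsTerminal G z C Y (commonNbrs G X A) A c M)
    (hM : #A ≠ 1 ∨ (∀ u ∈ M, u ∉ X) → k ≤ #A + 2 ∧ ∀ i ≤ #A, Linked G C X Y (2 * i + 1)) :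
    Admissible k (Linked G C X Y) := by
  by_cases hfull : #A ≠ 1 ∨ ∀ u ∈ M, u ∉ X
  · exact h.admissible_of_linked_odd hyX hyY (hM hfull)
  push Not at hfull
  obtain ⟨-, u, hu, huX⟩ := hfull
  rcases hA'.admissible_or_isTerminal h.symm ih hY with hL | hXH | ⟨c', M', hT', hM'⟩
  · exact hL.linked_symm
  · exact absurd (commonNbrs_subset (hA'.subset_commonNbrs hX.isIndepSet hyY hyX hXH huX))
      (hT.avoids u hu).1
  · obtain ⟨hk, hlinked⟩ := hM' <| .inr fun v hv =>
      hA.notMem_of_isTerminal_of_isTerminal hA' hX.isIndepSet hY.isIndepSet hyX hyY hT hT' hu huX hv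
    exact h.admissible_of_linked_odd hyX hyY ⟨hk, fun i hi => (hlinked i hi).symm⟩

theorem admissible_or_eq_of_mem (h : IsReducedRooted G k z C X Y) (ih : AdmissibleBelow G #C)
    (hX : IsSparse G C X) (hY : IsSparse G C Y) (hA : IsMaxJoin G C X A)
    (hA' : IsMaxJoin G C Y A') (hyX : y ∈ X) (hyY : y ∈ Y) :
    Admissible k (Linked G C X Y) ∨ X = Y ∧ commonNbrs G X A = X := by
  rcases hA.admissible_or_isTerminal h ih hX with hL | hYH | ⟨c, M, hT, hM⟩
  · exact .inl hL
  · rcases hA'.admissible_or_isTerminal h.symm ih hY with hL | hXH | ⟨c, M, hT, hM⟩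
    · exact .inl hL.linked_symm
    · have hYB := hA.subset_commonNbrs hY.isIndepSet hyX hyY hYH
      have hXB := hA'.subset_commonNbrs hX.isIndepSet hyY hyX hXH
      obtain rfl := (hXB.trans commonNbrs_subset).antisymm (hYB.trans commonNbrs_subset)
      exact .inr ⟨rfl, commonNbrs_subset.antisymm hYB⟩
    · exact .inl (h.symm.admissible_of_isMaxJoin_of_isTerminal ih hY hX hA' hA hyY hyX hT
        hM).linked_symm
  · exact .inl (h.admissible_of_isMaxJoin_of_isTerminal ih hX hY hA hA' hyX hyY hT hM)

theorem admissible_of_disjoint (h : IsReducedRooted G k z C X Y) (ih : AdmissibleBelow G #C)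
    (hX : IsSparse G C X) (hY : IsSparse G C Y) (hA : IsMaxJoin G C X A)
    (hA' : IsMaxJoin G C Y A') (hXY : Disjoint X Y) : Admissible k (Linked G C X Y) := by
  have hlt := hA.card_lt
  have hlt' := hA'.card_lt
  have hBX : #(commonNbrs G X A) ≤ #X := card_le_card commonNbrs_subset
  have hBY : #(commonNbrs G Y A') ≤ #Y := card_le_card commonNbrs_subset
  rcases hA.admissible_or_isTerminal h ih hX with hL | hYH | ⟨c, M, hT, -⟩
  · exact hL
  all_goals rcases hA'.admissible_or_isTerminal h.symm ih hY with hL | hXH | ⟨c', M', hT', -⟩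
  case inr.inl.inl | inr.inr.inl => exact hL.linked_symm
  · have := IsMaxJoin.card_le_of_disjoint hXY hYH
    have := IsMaxJoin.card_le_of_disjoint hXY.symm hXH
    omega
  · have := IsMaxJoin.card_le_of_disjoint hXY hYH
    have := card_le_card (IsMaxJoin.subset_insert_of_isTerminal hXY.symm hT')
    have := card_insert_le c' A'
    omega
  · have := card_le_card (IsMaxJoin.subset_insert_of_isTerminal hXY hT)
    have := card_insert_le c A
    have := IsMaxJoin.card_le_of_disjoint hXY.symm hXH
    omega
  · exact absurd hT' (hA.not_isTerminal_of_isTerminal_of_disjoint hA' h.connected h.subset_right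
      hXY hT)

theorem admissible_or_eq (h : IsReducedRooted G k z C X Y) (ih : AdmissibleBelow G #C)
    (hX : IsSparse G C X) (hY : IsSparse G C Y) (hA : IsMaxJoin G C X A)
    (hA' : IsMaxJoin G C Y A') :
    Admissible k (Linked G C X Y) ∨ X = Y ∧ commonNbrs G X A = X := by
  by_cases hXY : Disjoint X Y
  · exact .inl (h.admissible_of_disjoint ih hX hY hA hA' hXY)
  · obtain ⟨y, hyX, hyY⟩ := not_disjoint_iff.1 hXY
    exact h.admissible_or_eq_of_mem ih hX hY hA hA' hyX hyY

end IsReducedRooted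

theorem IsFreeLobe.notMem_nbrsIn {B C D M : Finset V} {b c u : V}
    (hM : IsFreeLobe G D (nbrsIn G (B.erase b) D) (nbrsIn G {b} D) c M) (hu : u ∈ M) :
    u ∉ nbrsIn G B C := fun huB => by
  obtain ⟨-, b', hb', hbu⟩ := mem_nbrsIn.1 huB
  have huD := hM.1.subset hu
  by_cases hbb : b' = b
  · exact (hM.2 u hu).2 (mem_nbrsIn_singleton.2 ⟨huD, hbb ▸ hbu⟩)
  · exact (hM.2 u hu).1 (mem_nbrsIn.2 ⟨huD, b', mem_erase.2 ⟨hbb, hb'⟩, hbu⟩)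

/-- A complete bipartite join of `A` and the common root neighbourhood `B`, with `B` at least two
larger than `A` and few neighbours of other vertices in `B`. -/
structure IsJoin (G : SimpleGraph V) (C B A : Finset V) : Prop where
  isSparse : IsSparse G C B
  subset : A ⊆ C
  adj : ∀ a ∈ A, ∀ b ∈ B, G.Adj a b
  card_add_two_le : #A + 2 ≤ #B
  degIn_le : ∀ v ∈ C, v ∉ B ∪ A → degIn G v B ≤ #A + 2
  degIn_le_of_not_adj : ∀ v ∈ C, v ∉ B ∪ A → (∃ b ∈ B, ¬ G.Adj v b) → degIn G v B ≤ #A + 1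

namespace IsJoin

variable {k i s : ℕ} {a b b' c u v w z : V} {C D N Y B A : Finset V}

theorem disjoint (hJ : IsJoin G C B A) : Disjoint A B :=
  disjoint_left.2 fun a ha hb => G.loopless.irrefl a (hJ.adj a ha a hb)

theorem union_erase_subset (hJ : IsJoin G C B A) (hBC : B ⊆ C) : A ∪ B.erase b ⊆ C :=
  union_subset hJ.subset ((erase_subset _ _).trans hBC)

theorem disjoint_union_erase (hD : Disjoint (B ∪ A) D) : Disjoint (A ∪ B.erase b) D :=
  hD.mono_left (union_subset subset_union_right ((erase_subset _ _).trans subset_union_left))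

theorem notMem_union_erase (hJ : IsJoin G C B A) (hb : b ∈ B) : b ∉ A ∪ B.erase b := by
  simp [disjoint_right.1 hJ.disjoint hb]

theorem linked_odd (hJ : IsJoin G C B A) (hi : i < #A) (ha : a ∈ A) :
    Linked G (A ∪ B.erase b) B {a} (1 + 2 * i) := by
  have hcard := hJ.card_add_two_le
  have herase := pred_card_le_card_erase (s := B) (a := b)
  obtain ⟨b', hb'⟩ := card_pos.1 (show 0 < #(B.erase b) by omega)
  refine ⟨b', mem_of_mem_erase hb', a, mem_singleton_self a, ?_⟩
  rw [Nat.add_comm]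
  exact hasPathIn_of_bipartite_odd (hJ.disjoint.mono_right (erase_subset _ _))
    (fun a ha b hb => hJ.adj a ha b (mem_of_mem_erase hb)) ha hb' hi (by omega)

theorem linked_even (hJ : IsJoin G C B A) (hi : i ≤ #A) (hb' : b' ∈ B) (hbb : b' ≠ b) :
    Linked G (A ∪ B.erase b) {b'} B (2 * i) := by
  have hcard := hJ.card_add_two_le
  have herase := pred_card_le_card_erase (s := B) (a := b)
  have hb'e : b' ∈ B.erase b := mem_erase.2 ⟨hbb, hb'⟩
  cases i with
  | zero => exact ⟨b', mem_singleton_self b', b', hb', .refl (mem_union_right _ hb'e)⟩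
  | succ i =>
    obtain ⟨x, hx, hxb, hxb'⟩ := exists_mem_ne_ne (show 3 ≤ #B by omega) b b'
    exact ⟨b', mem_singleton_self b', x, hx,
      hasPathIn_of_bipartite_even (hJ.disjoint.mono_right (erase_subset _ _))
        (fun a ha b hb => hJ.adj a ha b (mem_of_mem_erase hb)) hb'e
        (mem_erase.2 ⟨hxb, hx⟩) hxb'.symm (by omega) (by omega)⟩

theorem linked_extend_odd (hJ : IsJoin G C B A) (hi : i < #A) (hD : Disjoint (B ∪ A) D)
    (hs : Linked G D (nbrsIn G A D) Y s) :
    Linked G (A ∪ B.erase b ∪ D) B Y (1 + 2 * i + s + 1) :=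
  hs.prepend (fun _ ha => hJ.linked_odd hi ha) (fun _ hu => (mem_nbrsIn.1 hu).2)
    (disjoint_union_erase hD)

theorem linked_extend_even (hJ : IsJoin G C B A) (hi : i ≤ #A) (hb : b ∈ B)
    (hD : Disjoint (B ∪ A) D) (hs : Linked G D (nbrsIn G (B.erase b) D) (nbrsIn G {b} D) s) :
    Linked G (B ∪ A ∪ D) B B (2 * i + s + 2) := by
  obtain ⟨u, hu, v, hv, p⟩ := hs
  obtain ⟨-, b', hb', hbu⟩ := mem_nbrsIn.1 hu
  obtain ⟨hbb, hb'⟩ := mem_erase.1 hb'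
  have hb'D := disjoint_left.1 hD (mem_union_left _ hb')
  have hstart : Linked G ({b'} ∪ D) {b'} {v} (0 + s + 1) :=
    .prepend (E := {b'}) (fun e he => by rw [mem_singleton.1 he]; exact .singleton b')
      ⟨u, mem_singleton_self u, v, mem_singleton_self v, p⟩
      (fun x hx => ⟨b', mem_singleton_self b', mem_singleton.1 hx ▸ hbu⟩)
      (disjoint_singleton_left.2 hb'D)
  have hlink := hstart.append (hJ.linked_even (b := b') hi hb hbb.symm)
    (fun x hx => mem_singleton.1 hx ▸ (mem_nbrsIn_singleton.1 hv).2.symm)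
    (disjoint_union_left.2 ⟨disjoint_singleton_left.2 (hJ.notMem_union_erase hb'),
      (disjoint_union_erase hD).symm⟩)
  rw [show 2 * i + s + 2 = 0 + s + 1 + 2 * i + 1 by omega]
  refine hlink.mono ?_ (singleton_subset_iff.2 hb') Subset.rfl
  grind

theorem degIn_eq_zero (hJ : IsJoin G C B A) (hv : v ∈ C) (hvB : v ∈ nbrsIn G B C) :
    degIn G v A = 0 :=
  hJ.isSparse.degIn_eq_zero hJ.subset Subset.rfl hJ.adj hv hvB

theorem disjoint_linked_odd (hJ : IsJoin G C B A) (hb : b ∈ B) (hD : Disjoint (B ∪ A) D)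
    (hND : N ⊆ D) : Disjoint (A ∪ B.erase b ∪ N) (D \ N ∪ {b}) := by
  have hHD := disjoint_union_erase (b := b) hD
  have hbN : b ∉ N := fun hbN => disjoint_left.1 hD (mem_union_left _ hb) (hND hbN)
  exact disjoint_union_left.2
    ⟨disjoint_union_right.2
      ⟨hHD.mono_right sdiff_subset, disjoint_singleton_right.2 (hJ.notMem_union_erase hb)⟩,
      disjoint_union_right.2 ⟨disjoint_sdiff, disjoint_singleton_right.2 hbN⟩⟩

end IsJoin

namespace IsReducedRooted

variable {k : ℕ} {b b' c u v w z : V} {C M N B A : Finset V}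

theorem le_degIn_componentIn (h : IsReducedRooted G k z C B B)
    (hv : v ∈ componentIn G (C \ (B ∪ A)) w) (hvz : v ≠ z) :
    k + 1 ≤ degIn G v (componentIn G (C \ (B ∪ A)) w) + degIn G v B + degIn G v A := by
  have hdeg := h.le_degIn v (componentIn_sdiff_subset hv) hvz
  have hD := degIn_le_componentIn_sdiff_union hv
  have hvB : v ∉ B := fun hvB => (mem_componentIn_sdiff hv).2 (mem_union_left _ hvB)
  rw [ind_of_notMem hvB] at hdeg
  omega

theorem le_degIn_componentIn_of_notMem (h : IsReducedRooted G k z C B B) (hA : A.Nonempty)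
    (hv : v ∈ componentIn G (C \ (B ∪ A)) w) (hvz : v ≠ z) (hvB : v ∉ nbrsIn G B C) :
    k + 2 ≤ degIn G v (componentIn G (C \ (B ∪ A)) w) + ind (nbrsIn G A C) v + #A := by
  have hvC := componentIn_sdiff_subset hv
  have hdeg := h.le_degIn_componentIn hv hvz
  have hB := degIn_eq_zero_of_notMem_nbrsIn hvC hvB
  have hA := hA.card_pos
  by_cases hvA : v ∈ nbrsIn G A C
  · have := degIn_le_card (G := G) (C := A) (v := v)
    rw [ind_of_mem hvA]
    omega
  · have := degIn_eq_zero_of_notMem_nbrsIn hvC hvA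
    omega

theorem exists_linked_componentIn_sdiff_lobe (hw : w ∈ C \ (B ∪ A))
    (hc : c ∈ componentIn G (C \ (B ∪ A)) w) (hN : IsLobe G (componentIn G (C \ (B ∪ A)) w) c N)
    (hu : u ∈ nbrsIn G B (componentIn G (C \ (B ∪ A)) w)) (huN : u ∉ N) :
    ∃ b ∈ B, ∃ t, Linked G (componentIn G (C \ (B ∪ A)) w \ N ∪ {b}) {c} B t := by
  obtain ⟨huD, b, hb, hbu⟩ := mem_nbrsIn.1 hu
  obtain ⟨t, ht⟩ := (hN.connectedIn_sdiff (connectedIn_componentIn hw) hc).exists_path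
    (mem_sdiff.2 ⟨hc, hN.notMem⟩) (mem_sdiff.2 ⟨huD, huN⟩)
  have hbD := disjoint_left.1 (disjoint_componentIn_sdiff (G := G) (C := C) (H := B ∪ A) (y := w))
    (mem_union_left _ hb)
  exact ⟨b, hb, t + 0 + 1, Linked.append ⟨c, mem_singleton_self c, u, mem_singleton_self u, ht⟩
    ((Linked.singleton b).mono Subset.rfl Subset.rfl (singleton_subset_iff.2 hb))
    (fun x hx => mem_singleton.1 hx ▸ hbu.symm)
    (disjoint_singleton_right.2 fun hbDN => hbD (mem_sdiff.1 hbDN).1)⟩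

theorem admissible_of_isJoin_of_connected_lobe (h : IsReducedRooted G k z C B B)
    (ih : AdmissibleBelow G #C) (hJ : IsJoin G C B A) (hw : w ∈ C \ (B ∪ A))
    (hc : c ∈ componentIn G (C \ (B ∪ A)) w)
    (hu : u ∈ nbrsIn G B (componentIn G (C \ (B ∪ A)) w))
    (hN : IsLobe G (componentIn G (C \ (B ∪ A)) w) c N) (hNc : ConnectedIn G N)
    (hav : ∀ v ∈ N, v ∉ nbrsIn G B C) (hz : ∃ v ∈ N, v ≠ z) :
    Admissible k (Linked G C B B) := by
  have hDC : componentIn G (C \ (B ∪ A)) w ⊆ C := componentIn_sdiff_subset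
  have hHD : Disjoint (B ∪ A) (componentIn G (C \ (B ∪ A)) w) := disjoint_componentIn_sdiff
  have hNC := hN.subset.trans hDC
  have havB : ∀ v ∈ N, v ∉ nbrsIn G B C ∧ v ∉ B := fun v hv =>
    ⟨hav v hv, fun hvB => disjoint_left.1 hHD (mem_union_left _ hvB) (hN.subset hv)⟩
  obtain ⟨b, hb, t, ht⟩ := exists_linked_componentIn_sdiff_lobe hw hc hN hu fun huN =>
    hav u huN (mem_nbrsIn.2 ⟨hNC huN, (mem_nbrsIn.1 hu).2⟩)
  have hatt := h.isAttached_of_isLobe_componentIn hw hc hN havB hNc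
  obtain ⟨_, hx⟩ := hatt.nonempty_left
  obtain ⟨-, a, ha, -⟩ := mem_nbrsIn.1 hx
  refine hatt.admissible_of_not_isFreeLobe (r := 1 + t + 1) ih
    (card_lt_card ⟨hNC, fun hs => hN.notMem (hs (hDC hc))⟩) hz (fun d hd M hM => ?_)
    (fun v hv hvz => ?_) (card_pos.2 ⟨a, ha⟩) (Admissible.of_step_two (a := 1)
      (P := fun t => ∃ i < #A, t = 1 + 2 * i) fun i hi => ⟨i, hi, rfl⟩) ?_
  · obtain ⟨v, hv, hvA⟩ := h.exists_mem_nbrsIn_right_of_isLobe (hNC hd)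
      (hN.trans hM.1 fun v hv => (hM.2 v hv).2) fun v hv => havB v (hM.1.subset hv)
    exact (hM.2 v hv).1 (mem_nbrsIn.2 ⟨hM.1.subset hv, (mem_nbrsIn.1 hvA).2⟩)
  · have hD := h.le_degIn_componentIn_of_notMem ⟨a, ha⟩ (hN.subset hv) hvz (hav v hv)
    have hdeg := hN.degIn_le hv
    rw [ind_nbrsIn_of_subset hv hNC] at hD
    omega
  · rintro _ s ⟨i, hi, rfl⟩ hs
    have hlink := (hJ.linked_extend_odd (b := b) hi (hHD.mono_right hN.subset) hs).append ht
      (fun v hv => (mem_nbrsIn_singleton.1 hv).2.symm) (hJ.disjoint_linked_odd hb hHD hN.subset)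
    rw [show 1 + 2 * i + s + (1 + t + 1) = 1 + 2 * i + s + 1 + t + 1 by omega]
    exact hlink.mono (union_subset (union_subset (hJ.union_erase_subset h.subset_left) hNC)
      (union_subset (sdiff_subset.trans hDC) (singleton_subset_iff.2 (h.subset_left hb))))
      Subset.rfl Subset.rfl

theorem admissible_of_isJoin_of_isLobe (h : IsReducedRooted G k z C B B)
    (ih : AdmissibleBelow G #C) (hJ : IsJoin G C B A) (hw : w ∈ C \ (B ∪ A))
    (hc : c ∈ componentIn G (C \ (B ∪ A)) w)
    (hu : u ∈ nbrsIn G B (componentIn G (C \ (B ∪ A)) w))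
    (hM : IsLobe G (componentIn G (C \ (B ∪ A)) w) c M) (hav : ∀ v ∈ M, v ∉ nbrsIn G B C)
    (hz : ∃ v ∈ M, v ≠ z) : Admissible k (Linked G C B B) := by
  obtain ⟨v, hv, hvz⟩ := hz
  have hvc : v ≠ c := ne_of_mem_of_not_mem hv hM.notMem
  have hvD : v ∈ componentIn G (C \ (B ∪ A)) w \ {c} := by simp [hM.subset hv, hvc]
  exact h.admissible_of_isJoin_of_connected_lobe ih hJ hw hc hu
    (.componentIn_sdiff (hM.subset hv) hvc) (connectedIn_componentIn hvD)
    (fun u hu => hav u (hM.componentIn_subset hv hu)) ⟨v, mem_componentIn_self hvD, hvz⟩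

theorem le_degIn_componentIn_of_isJoin (h : IsReducedRooted G k z C B B) (hJ : IsJoin G C B A)
    (hb : b ∈ B) (hv : v ∈ componentIn G (C \ (B ∪ A)) w) (hvz : v ≠ z) :
    k + 2 ≤ degIn G v (componentIn G (C \ (B ∪ A)) w) + ind (nbrsIn G (B.erase b) C) v +
      ind (nbrsIn G {b} C) v + (#A + 1) := by
  have hvC := componentIn_sdiff_subset hv
  have hvH := (mem_componentIn_sdiff hv).2
  have hdeg := h.le_degIn_componentIn hv hvz
  have hA : degIn G v A ≤ #A := degIn_le_card
  by_cases hvB : v ∈ nbrsIn G B C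
  · have hA := hJ.degIn_eq_zero hvC hvB
    have hB := hJ.degIn_le v hvC hvH
    have hBe : degIn G v B ≤ degIn G v (B.erase b) + degIn G v {b} :=
      degIn_le_add fun x hx _ => by by_cases hxb : x = b <;> simp [hxb, hx]
    have hb1 : degIn G v {b} ≤ 1 := degIn_le_card
    by_cases hvb : G.Adj v b
    · rw [ind_of_mem (mem_nbrsIn_singleton.2 ⟨hvC, hvb.symm⟩)]
      by_cases hve : v ∈ nbrsIn G (B.erase b) C
      · rw [ind_of_mem hve]
        omega
      · have := degIn_eq_zero_of_notMem_nbrsIn hvC hve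
        omega
    · have hB := hJ.degIn_le_of_not_adj v hvC hvH ⟨b, hb, hvb⟩
      obtain ⟨-, x, hx, hxv⟩ := mem_nbrsIn.1 hvB
      have hxb : x ≠ b := fun hxb => hvb (hxb ▸ hxv.symm)
      rw [ind_of_mem (mem_nbrsIn.2 ⟨hvC, x, mem_erase.2 ⟨hxb, hx⟩, hxv⟩)]
      omega
  · have hB := degIn_eq_zero_of_notMem_nbrsIn hvC hvB
    omega

theorem le_degIn_of_componentIn_eq_insert (h : IsReducedRooted G k z C B B)
    (hJ : IsJoin G C B A) (hw : w ∈ C \ (B ∪ A)) (hwz : w ≠ z) (hwB : w ∈ nbrsIn G B C)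
    (hM : ∀ v ∈ M, v = z) (hD : componentIn G (C \ (B ∪ A)) w = insert w M) :
    k ≤ degIn G w B := by
  have hdeg := h.le_degIn_componentIn (mem_componentIn_self hw) hwz
  have hA := hJ.degIn_eq_zero (mem_sdiff.1 hw).1 hwB
  have hle : degIn G w (insert w M) ≤ degIn G w {z} := degIn_le_of_forall_adj fun x hx hwx => by
    obtain rfl | hxM := mem_insert.1 hx
    · exact absurd hwx (G.loopless.irrefl _)
    · exact mem_singleton.2 (hM x hxM)
  have hz : degIn G w {z} ≤ 1 := degIn_le_card
  rw [hD] at hdeg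
  omega

theorem admissible_or_componentIn_eq_insert_of_isJoin (h : IsReducedRooted G k z C B B)
    (ih : AdmissibleBelow G #C) (hJ : IsJoin G C B A) (hw : w ∈ C \ (B ∪ A)) (hwz : w ≠ z)
    (hb : b ∈ B) (hb' : b' ∈ B) (hbb : b ≠ b')
    (hu : u ∈ nbrsIn G {b} (componentIn G (C \ (B ∪ A)) w))
    (hD' : (nbrsIn G {b'} (componentIn G (C \ (B ∪ A)) w)).Nonempty) :
    Admissible k (Linked G C B B) ∨ ∃ c M, (∀ v ∈ M, v = z ∧ v ∉ nbrsIn G B C) ∧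
      componentIn G (C \ (B ∪ A)) w = insert c M := by
  refine or_iff_not_imp_left.2 fun hcon => ?_
  have hDC : componentIn G (C \ (B ∪ A)) w ⊆ C := componentIn_sdiff_subset
  have hHD : Disjoint (B ∪ A) (componentIn G (C \ (B ∪ A)) w) := disjoint_componentIn_sdiff
  obtain ⟨huD, hbu⟩ := mem_nbrsIn_singleton.1 hu
  have hfree : ∀ c ∈ componentIn G (C \ (B ∪ A)) w, ∀ M,
      IsFreeLobe G (componentIn G (C \ (B ∪ A)) w)
        (nbrsIn G (B.erase b') (componentIn G (C \ (B ∪ A)) w))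
        (nbrsIn G {b'} (componentIn G (C \ (B ∪ A)) w)) c M → ∀ v ∈ M, v = z := by
    intro c hc M hM
    by_contra! hz
    exact hcon (h.admissible_of_isJoin_of_isLobe ih hJ hw hc (mem_nbrsIn.2 ⟨huD, b, hb, hbu⟩) hM.1
      (fun v hv => hM.notMem_nbrsIn hv) hz)
  have hatt : IsAttached G (componentIn G (C \ (B ∪ A)) w)
      (nbrsIn G (B.erase b') (componentIn G (C \ (B ∪ A)) w))
      (nbrsIn G {b'} (componentIn G (C \ (B ∪ A)) w)) :=
    ⟨connectedIn_componentIn hw, nbrsIn_subset, nbrsIn_subset,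
      ⟨u, mem_nbrsIn.2 ⟨huD, b, mem_erase.2 ⟨hbb, hb⟩, hbu⟩⟩, hD'⟩
  obtain ⟨c, hc, M, hM, -, hDM⟩ := (hatt.admissible_or_isFreeLobe (r := 2) (L := #A + 1)
    (P := fun t => ∃ i ≤ #A, t = 2 * i) ih
    (card_lt_card ⟨hDC, fun hs => disjoint_left.1 hHD (mem_union_left _ hb)
      (hs (h.subset_left hb))⟩) ⟨w, mem_componentIn_self hw, hwz⟩
    (fun c hc M hM => by
      obtain ⟨v, hv⟩ := hM.1.nonempty
      exact hfree c hc M hM v hv ▸ hv)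
    (fun v hv hvz => by
      rw [← ind_nbrsIn_of_subset hv hDC, ← ind_nbrsIn_of_subset hv hDC]
      exact h.le_degIn_componentIn_of_isJoin hJ hb' hv hvz) (Nat.le_add_left _ _)
    (.of_step_two (a := 0) fun i hi => ⟨i, by omega, by omega⟩) (by
      rintro _ s ⟨i, hi, rfl⟩ hs
      exact (hJ.linked_extend_even hi hb' hHD hs).mono (union_subset
        (union_subset h.subset_left hJ.subset) hDC) Subset.rfl Subset.rfl)).resolve_left hcon
  exact ⟨c, M, fun v hv => ⟨hfree c hc M hM v hv, hM.notMem_nbrsIn hv⟩, hDM⟩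

theorem admissible_of_isJoin_of_two (h : IsReducedRooted G k z C B B)
    (ih : AdmissibleBelow G #C) (hJ : IsJoin G C B A) (hw : w ∈ C \ (B ∪ A)) (hwz : w ≠ z)
    (hb : b ∈ B) (hb' : b' ∈ B) (hbb : b ≠ b')
    (hD : (nbrsIn G {b} (componentIn G (C \ (B ∪ A)) w)).Nonempty)
    (hD' : (nbrsIn G {b'} (componentIn G (C \ (B ∪ A)) w)).Nonempty) :
    Admissible k (Linked G C B B) ∨ k ≤ degIn G w B := by
  obtain ⟨u, hu⟩ := hD
  refine (h.admissible_or_componentIn_eq_insert_of_isJoin ih hJ hw hwz hb hb' hbb hu hD').imp_right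
    fun ⟨c, M, hM, hDM⟩ => ?_
  obtain ⟨huD, hbu⟩ := mem_nbrsIn_singleton.1 hu
  have huB : u ∈ nbrsIn G B C := mem_nbrsIn.2 ⟨componentIn_sdiff_subset huD, b, hb, hbu⟩
  obtain rfl := (mem_insert.1 (hDM.le (mem_componentIn_self hw))).resolve_right fun hwM =>
    hwz (hM w hwM).1
  obtain rfl := (mem_insert.1 (hDM.le huD)).resolve_right fun huM => (hM u huM).2 huB
  exact h.le_degIn_of_componentIn_eq_insert hJ hw hwz huB (fun v hv => (hM v hv).1) hDM

theorem mem_or_eq_of_adj_of_one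
    (hone : ∀ u ∈ componentIn G (C \ (B ∪ A)) w, ∀ b' ∈ B, G.Adj u b' → b' = b)
    (hu : u ∈ componentIn G (C \ (B ∪ A)) w) (hv : v ∈ C) (huv : G.Adj u v) :
    v ∈ componentIn G (C \ (B ∪ A)) w ∨ v ∈ A ∨ v = b :=
  (mem_componentIn_sdiff_or_of_adj hu hv huv).imp_right fun hvH =>
    (mem_union.1 hvH).symm.imp_right fun hvB => hone u hu v hvB huv

theorem exists_mem_nbrsIn_of_isLobe_of_one (h : IsReducedRooted G k z C B B)
    (hone : ∀ u ∈ componentIn G (C \ (B ∪ A)) w, ∀ b' ∈ B, G.Adj u b' → b' = b) (hc : c ∈ C)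
    (hM : M ⊆ componentIn G (C \ (B ∪ A)) w) (hcM : c ∉ M) (hne : M.Nonempty)
    (hclosed : ∀ u ∈ M, ∀ v ∈ componentIn G (C \ (B ∪ A)) w, G.Adj u v → v ∈ M ∨ v = c)
    (hav : ∀ u ∈ M, u ∉ nbrsIn G {b} (componentIn G (C \ (B ∪ A)) w) ∨ c = b) :
    ∃ u ∈ M, u ∈ nbrsIn G A (componentIn G (C \ (B ∪ A)) w) := by
  by_contra! hA
  obtain ⟨u, hu, huB⟩ := h.lobe_left c hc M ⟨hM.trans componentIn_sdiff_subset, hcM, hne,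
    fun u hu v hv huv => by
      rcases mem_or_eq_of_adj_of_one hone (hM hu) hv huv with hvD | hvA | rfl
      · exact hclosed u hu v hvD huv
      · exact absurd (mem_nbrsIn.2 ⟨hM hu, v, hvA, huv.symm⟩) (hA u hu)
      · exact .inr ((hav u hu).resolve_left
          (not_not_intro (mem_nbrsIn_singleton.2 ⟨hM hu, huv.symm⟩))).symm⟩
  exact (mem_componentIn_sdiff (hM hu)).2 (mem_union_left _ huB)

theorem le_degIn_componentIn_of_one (h : IsReducedRooted G k z C B B) (hJ : IsJoin G C B A)
    (hone : ∀ u ∈ componentIn G (C \ (B ∪ A)) w, ∀ b' ∈ B, G.Adj u b' → b' = b)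
    (hA : A.Nonempty) (hv : v ∈ componentIn G (C \ (B ∪ A)) w) (hvz : v ≠ z) :
    k + 2 ≤ degIn G v (componentIn G (C \ (B ∪ A)) w) + ind (nbrsIn G A C) v +
      ind (nbrsIn G {b} C) v + #A := by
  by_cases hvB : v ∈ nbrsIn G B C
  · obtain ⟨hvC, b', hb', hbv⟩ := mem_nbrsIn.1 hvB
    have hdeg := h.le_degIn_componentIn hv hvz
    have hle : degIn G v B ≤ degIn G v {b} :=
      degIn_le_of_forall_adj fun x hx hvx => mem_singleton.2 (hone v hv x hx hvx)
    have hb1 : degIn G v {b} ≤ 1 := degIn_le_card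
    have hA0 := hJ.degIn_eq_zero hvC hvB
    have := hA.card_pos
    obtain rfl := hone v hv b' hb' hbv.symm
    rw [ind_of_mem (mem_nbrsIn_singleton.2 ⟨hvC, hbv⟩)]
    omega
  · have := h.le_degIn_componentIn_of_notMem hA hv hvz hvB
    omega

theorem admissible_of_isJoin_of_one (h : IsReducedRooted G k z C B B)
    (ih : AdmissibleBelow G #C) (hJ : IsJoin G C B A) (hw : w ∈ C \ (B ∪ A)) (hwz : w ≠ z)
    (hb : b ∈ B) (hD : (nbrsIn G {b} (componentIn G (C \ (B ∪ A)) w)).Nonempty)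
    (hone : ∀ u ∈ componentIn G (C \ (B ∪ A)) w, ∀ b' ∈ B, G.Adj u b' → b' = b) :
    Admissible k (Linked G C B B) := by
  have hwD := mem_componentIn_self (G := G) hw
  have hDC : componentIn G (C \ (B ∪ A)) w ⊆ C := componentIn_sdiff_subset
  have hHD : Disjoint (B ∪ A) (componentIn G (C \ (B ∪ A)) w) := disjoint_componentIn_sdiff
  have hbC := h.subset_left hb
  have hbD := disjoint_left.1 hHD (mem_union_left _ hb)
  obtain ⟨x, -, hx⟩ := h.exists_mem_nbrsIn_of_isLobe_of_one hone hbC Subset.rfl hbD ⟨w, hwD⟩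
    (fun _ _ _ hv _ => .inl hv) fun _ _ => .inr rfl
  obtain ⟨-, a, ha, -⟩ := mem_nbrsIn.1 hx
  refine IsAttached.admissible_of_not_isFreeLobe (D := componentIn G (C \ (B ∪ A)) w)
    (r := 2) ⟨connectedIn_componentIn hw, nbrsIn_subset, nbrsIn_subset, ⟨x, hx⟩, hD⟩ ih
    (card_lt_card ⟨hDC, fun hs => hbD (hs hbC)⟩) ⟨w, hwD, hwz⟩ (fun c hc M hM => ?_)
    (fun v hv hvz => ?_) (card_pos.2 ⟨a, ha⟩) (Admissible.of_step_two (a := 1)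
      (P := fun t => ∃ i < #A, t = 1 + 2 * i) fun i hi => ⟨i, hi, rfl⟩) ?_
  · obtain ⟨u, hu, huA⟩ := h.exists_mem_nbrsIn_of_isLobe_of_one hone (hDC hc) hM.1.subset
      hM.1.notMem hM.1.nonempty hM.1.closed fun u hu => .inl (hM.2 u hu).2
    exact (hM.2 u hu).1 huA
  · rw [← ind_nbrsIn_of_subset hv hDC, ← ind_nbrsIn_of_subset hv hDC]
    exact h.le_degIn_componentIn_of_one hJ hone ⟨a, ha⟩ hv hvz
  · rintro _ s ⟨i, hi, rfl⟩ hs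
    have hlink := (hJ.linked_extend_odd (b := b) hi hHD hs).append (.singleton b)
      (fun v hv => (mem_nbrsIn_singleton.1 hv).2.symm)
      (disjoint_union_left.2 ⟨disjoint_singleton_right.2 (hJ.notMem_union_erase hb),
        disjoint_singleton_right.2 hbD⟩)
    exact hlink.mono (union_subset (union_subset (hJ.union_erase_subset h.subset_left) hDC)
      (singleton_subset_iff.2 hbC)) Subset.rfl (singleton_subset_iff.2 hb)

end IsReducedRooted

theorem IsMaxJoin.admissible_of_le {k : ℕ} {C X A : Finset V} (h : IsMaxJoin G C X A)
    (hXC : X ⊆ C) (hk : k ≤ #A + 1) : Admissible k (Linked G C X X) := by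
  obtain ⟨e, he⟩ := h.nonempty_commonNbrs
  refine .of_step_two (a := 0) fun i hi => ?_
  rw [Nat.zero_add]
  exact (h.linked_even (show i ≤ #A by omega) he).mono
    (union_subset (commonNbrs_subset.trans hXC) h.subset) Subset.rfl
    (singleton_subset_iff.2 (commonNbrs_subset he))

/-- If `A` is one smaller than `B`, then one vertex of `A` has to be dropped for `B` to be two
larger. -/
theorem IsMaxJoin.exists_isJoin {C B A : Finset V} (hA : IsMaxJoin G C B A) (hB : IsSparse G C B)
    (hAB : commonNbrs G B A = B) (htwo : 2 ≤ #B) :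
    ∃ A₀, IsJoin G C B A₀ ∧ (∀ v ∈ C, v ∉ B ∪ A₀ → degIn G v B ≤ #A + 1) ∧
      (#A₀ = #A ∨ #A₀ + 1 = #A) := by
  have hlt := hA.card_lt
  have hadj := hA.adj
  have hdeg := fun v hv hvA hvX => hA.degIn_commonNbrs_le (v := v) hv hvA hvX
  rw [hAB] at hlt hadj hdeg
  by_cases hcard : #A + 2 ≤ #B
  · have hdeg' : ∀ v ∈ C, v ∉ B ∪ A → degIn G v B ≤ #A + 1 := fun v hv hvH =>
      hdeg v hv (fun hvA => hvH (mem_union_right _ hvA)) fun hvB => hvH (mem_union_left _ hvB)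
    exact ⟨A, ⟨hB, hA.subset, hadj, hcard, fun v hv hvH => (hdeg' v hv hvH).trans (Nat.le_succ _),
      fun v hv hvH _ => hdeg' v hv hvH⟩, hdeg', .inl rfl⟩
  · obtain ⟨a, ha⟩ := card_pos.1 (show 0 < #A by omega)
    have herase := card_erase_of_mem ha
    have hle : ∀ v, degIn G v B ≤ #B := fun v => degIn_le_card
    refine ⟨A.erase a, ⟨hB, (erase_subset _ _).trans hA.subset,
      fun x hx => hadj x (mem_of_mem_erase hx), by omega, fun v _ _ => (hle v).trans (by omega),
      fun v _ _ hvb => ?_⟩, fun v _ _ => (hle v).trans (by omega), .inr (by omega)⟩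
    have := degIn_lt_card hvb
    omega

theorem exists_not_adj_of_degIn_lt_card {D : Finset V} {v : V} (h : degIn G v D < #D) :
    ∃ w ∈ D, ¬ G.Adj v w := by
  by_contra! hcon
  exact h.ne (congrArg card (filter_true_of_mem hcon))

namespace IsReducedRooted

variable {k : ℕ} {b z : V} {C X Y B A : Finset V}

theorem exists_adj_ne_of_isJoin (h : IsReducedRooted G k z C B B) (hJ : IsJoin G C B A)
    (hb : b ∈ B) (hk : #A + 2 ≤ k)
    (hz : #A + 3 ≤ k ∨ (z ∈ C \ (B ∪ A) → ¬ G.Adj b z)) :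
    ∃ w ∈ C \ (B ∪ A), G.Adj b w ∧ w ≠ z := by
  have hdeg := h.le_degIn b (h.subset_left hb) (ne_of_mem_of_not_mem hb h.notMem_left)
  have hA : degIn G b A ≤ #A := degIn_le_card
  have hsplit : degIn G b C ≤ degIn G b (C \ (B ∪ A)) + degIn G b A :=
    degIn_le_add fun x hx hbx => by
      have hxB : x ∉ B := fun hxB => not_adj_of_isIndepSet hJ.isSparse.isIndepSet hb hxB hbx
      by_cases hxA : x ∈ A <;> simp [hxA, hx, hxB]
  rw [ind_of_mem hb] at hdeg
  rcases hz with hk | hz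
  · obtain ⟨w, hw, hwz⟩ := exists_mem_ne
      (show 1 < #{w ∈ C \ (B ∪ A) | G.Adj b w} by unfold degIn at *; omega) z
    exact ⟨w, (mem_filter.1 hw).1, (mem_filter.1 hw).2, hwz⟩
  · obtain ⟨w, hw⟩ := card_pos.1
      (show 0 < #{w ∈ C \ (B ∪ A) | G.Adj b w} by unfold degIn at *; omega)
    obtain ⟨hwC, hbw⟩ := mem_filter.1 hw
    exact ⟨w, hwC, hbw, fun hwz => hz (hwz ▸ hwC) (hwz ▸ hbw)⟩

theorem admissible_of_commonNbrs_eq (h : IsReducedRooted G k z C B B)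
    (ih : AdmissibleBelow G #C) (hB : IsSparse G C B) (hA : IsMaxJoin G C B A)
    (hAB : commonNbrs G B A = B) : Admissible k (Linked G C B B) := by
  by_cases hk : k ≤ #A + 1
  · exact hA.admissible_of_le h.subset_left hk
  obtain ⟨A₀, hJ, hdeg, hcard⟩ := hA.exists_isJoin hB hAB h.two_le_card_left
  have hcardB := hJ.card_add_two_le
  obtain ⟨b, hb, w, hw, hbw, hwz⟩ :
      ∃ b ∈ B, ∃ w ∈ C \ (B ∪ A₀), G.Adj b w ∧ w ≠ z := by
    by_cases hz : z ∈ C \ (B ∪ A₀) ∧ #A₀ = #A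
    · obtain ⟨b, hb, hzb⟩ := exists_not_adj_of_degIn_lt_card (G := G) (v := z) (D := B) <| by
        have := hdeg z (mem_sdiff.1 hz.1).1 (mem_sdiff.1 hz.1).2
        omega
      exact ⟨b, hb, h.exists_adj_ne_of_isJoin hJ hb (by omega) (.inr fun _ hbz => hzb hbz.symm)⟩
    · obtain ⟨b, hb⟩ := card_pos.1 (show 0 < #B by omega)
      refine ⟨b, hb, h.exists_adj_ne_of_isJoin hJ hb (by omega) ?_⟩
      by_cases hzC : z ∈ C \ (B ∪ A₀)
      · have hne : #A₀ ≠ #A := fun e => hz ⟨hzC, e⟩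
        exact .inl (by omega)
      · exact .inr fun h => absurd h hzC
  have hne : (nbrsIn G {b} (componentIn G (C \ (B ∪ A₀)) w)).Nonempty :=
    ⟨w, mem_nbrsIn_singleton.2 ⟨mem_componentIn_self hw, hbw⟩⟩
  by_cases hone : ∀ u ∈ componentIn G (C \ (B ∪ A₀)) w, ∀ b' ∈ B, G.Adj u b' → b' = b
  · exact h.admissible_of_isJoin_of_one ih hJ hw hwz hb hne hone
  push Not at hone
  obtain ⟨u, hu, b', hb', hub, hbb⟩ := hone
  refine (h.admissible_of_isJoin_of_two ih hJ hw hwz hb hb' hbb.symm hne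
    ⟨u, mem_nbrsIn_singleton.2 ⟨hu, hub.symm⟩⟩).resolve_right fun hkw => ?_
  have := hdeg w (mem_sdiff.1 hw).1 (mem_sdiff.1 hw).2
  omega

theorem admissible (h : IsReducedRooted G k z C X Y) (ih : AdmissibleBelow G #C) :
    Admissible k (Linked G C X Y) := by
  by_contra hcon
  have hX : G.IsIndepSet (X : Set V) := fun x hx x' hx' _ hxx =>
    hcon (h.admissible_of_adj ih hx hx' hxx)
  have hY : G.IsIndepSet (Y : Set V) := fun y hy y' hy' _ hyy =>
    hcon (h.symm.admissible_of_adj ih hy hy' hyy).linked_symm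
  have htri : ∀ x ∈ C, x ∈ X ∨ x ∈ Y → ∀ u ∈ C, ∀ w ∈ C, G.Adj x u → G.Adj x w →
      ¬ G.Adj u w := fun x hxC hx u hu w hw hxu hxw huw =>
    hcon <| h.admissible_of_exists_isClique ih hX hY (K := {x, u, w})
      (by simp [insert_subset_iff, hxC, hu, hw]) (by simp [hxu, hxw, huw])
      (card_eq_three.2 ⟨x, u, w, hxu.ne, hxw.ne, huw.ne, rfl⟩).ge ⟨x, by simp, hx⟩
  have hsX : IsSparse G C X := ⟨hX, fun x hx => htri x (h.subset_left hx) (.inl hx)⟩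
  have hsY : IsSparse G C Y := ⟨hY, fun y hy => htri y (h.subset_right hy) (.inr hy)⟩
  obtain ⟨A, hA⟩ := exists_isMaxJoin (G := G) (C := C)
    (card_pos.1 (Nat.zero_lt_of_lt h.two_le_card_left))
  obtain ⟨A', hA'⟩ := exists_isMaxJoin (G := G) (C := C)
    (card_pos.1 (Nat.zero_lt_of_lt h.two_le_card_right))
  obtain ⟨rfl, hXA⟩ := (h.admissible_or_eq ih hsX hsY hA hA').resolve_left hcon
  exact hcon (h.admissible_of_commonNbrs_eq ih hsX hA hXA)

end IsReducedRooted

theorem admissibleBelow (n : ℕ) : AdmissibleBelow G n := by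
  induction n with
  | zero => exact fun _ _ _ _ _ h => absurd h (Nat.not_lt_zero _)
  | succ n ih =>
    intro k z C X Y hC h
    have ihC : AdmissibleBelow G #C := fun _ _ _ _ _ hD => ih (by omega)
    exact (h.admissible_or_isReducedRooted ihC).elim id fun hred =>
      (hred.admissible ihC).imp fun _ hn => hn.mono Subset.rfl sdiff_subset sdiff_subset

theorem IsRooted.admissible {k : ℕ} {z : V} {C X Y : Finset V} (h : IsRooted G k z C X Y) :
    Admissible k (Linked G C X Y) :=
  admissibleBelow (#C + 1) (Nat.lt_succ_self _) h

theorem HasPathIn.hasCycleLength {C : Finset V} {u v : V} {n : ℕ} (h : HasPathIn G C u v (n + 2))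
    (hvu : G.Adj v u) : HasCycleLength G (n + 3) := by
  obtain ⟨p, hp, -, hn⟩ := h
  refine ⟨v, .cons hvu p, (Walk.cons_isCycle_iff p hvu).2 ⟨hp, fun hmem => ?_⟩, by simp [hn]⟩
  have := hp.length_eq_one_of_mem_edges (Sym2.eq_swap ▸ hmem)
  omega

theorem Admissible.exists_forall_mem_window {k L : ℕ} {P : ℕ → Prop} (h : Admissible k P)
    (hk : 1 ≤ k) (hL : 2 ≤ L) :
    ∃ m, ∀ i, i + 1 < k + L → ∃ n, P n ∧ n ≤ m + i ∧ m + i < n + L := by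
  obtain ⟨f, hf, hstep⟩ := h
  have covered : ∀ j < k, f 0 + j ≤ f j ∧
      ∀ i, f 0 + i < f j + L → ∃ n, P n ∧ n ≤ f 0 + i ∧ f 0 + i < n + L := by
    intro j
    induction j with
    | zero => exact fun hj => ⟨le_rfl, fun i hi => ⟨f 0, hf 0 hj, by omega, hi⟩⟩
    | succ j ih =>
      intro hj
      obtain ⟨hle, hcov⟩ := ih (by omega)
      have := hstep j hj
      refine ⟨by omega, fun i hi => ?_⟩
      by_cases hij : f 0 + i < f j + L
      · exact hcov i hij
      · exact ⟨f (j + 1), hf _ hj, by omega, hi⟩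
  obtain ⟨hle, hcov⟩ := covered (k - 1) (by omega)
  exact ⟨f 0, fun i hi => hcov i (by omega)⟩

theorem degIn_univ [Fintype V] (v : V) : degIn G v univ = (G.neighborSet v).ncard := by
  have hcoe : G.neighborSet v = ({w | G.Adj v w} : Finset V) := by ext; simp
  rw [hcoe, Set.ncard_coe_finset, degIn]

/-! ### Cycles of consecutive lengths -/

/-- `G` is connected and has no cut vertex: a nonempty finite set that only `c` keeps from being
closed under adjacency misses no vertex but `c`. -/
def NoCutVertex (G : SimpleGraph V) : Prop :=
  ∀ (c : V) (M : Finset V), c ∉ M → M.Nonempty → (∀ u ∈ M, ∀ w, G.Adj u w → w ∈ M ∨ w = c) →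
    ∀ w, w ∈ M ∨ w = c

theorem KConnected.noCutVertex (h : KConnected G 2) : NoCutVertex G := by
  intro c M hc ⟨m, hm⟩ hM w
  by_cases hw : w = c
  · exact .inr hw
  obtain ⟨p⟩ := (h.2 {c} (Set.finite_singleton c) (by simp)).preconnected
    ⟨m, fun e => hc (e ▸ hm)⟩ ⟨w, hw⟩
  suffices ∀ x y : ({c}ᶜ : Set V), (G.induce ({c}ᶜ : Set V)).Walk x y →
      (x : V) ∈ M → (y : V) ∈ M from .inl (this _ _ p hm)
  intro x y p
  induction p with
  | nil => exact id
  | @cons x y _ hxy _ ih => exact fun hx => ih ((hM x hx y hxy).resolve_right y.2)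

theorem NoCutVertex.one_lt_card_nbrsIn [Fintype V] (h : NoCutVertex G) {H : Finset V} {w : V}
    (hH : 1 < #H) (hw : w ∉ H) :
    1 < #(nbrsIn G (componentIn G (univ \ H) w) H) := by
  by_contra! hcard
  obtain ⟨g, hg, hsub⟩ : ∃ g ∈ H, nbrsIn G (componentIn G (univ \ H) w) H ⊆ {g} := by
    rcases (nbrsIn G (componentIn G (univ \ H) w) H).eq_empty_or_nonempty with hempty | ⟨g, hg⟩
    · obtain ⟨g, hg⟩ := card_pos.1 (by omega : 0 < #H)
      exact ⟨g, hg, by simp [hempty]⟩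
    · exact ⟨g, nbrsIn_subset hg, fun x hx => mem_singleton.2 (card_le_one.1 hcard x hx g hg)⟩
  obtain ⟨x, hx, hxg⟩ := exists_mem_ne hH g
  refine (h g (componentIn G (univ \ H) w) (fun hg' => (mem_componentIn_sdiff hg').2 hg)
    ⟨w, mem_componentIn_self (by simp [hw])⟩ (fun u hu y huy => ?_) x).elim
    (fun hx' => (mem_componentIn_sdiff hx').2 hx) hxg
  exact (mem_componentIn_sdiff_or_of_adj hu (mem_univ y) huy).imp_right fun hy =>
    mem_singleton.1 (hsub (mem_nbrsIn.2 ⟨hy, u, hu, huy⟩))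

theorem NoCutVertex.not_isFreeLobe (h : NoCutVertex G) {C X Y M : Finset V} {c x : V}
    (hnbr : ∀ u ∈ C, ∀ v, G.Adj u v → v ∈ C ∨ v ∈ X ∪ Y) (hx : x ∉ C) (hc : c ∈ C) :
    ¬ IsFreeLobe G C (nbrsIn G X C) (nbrsIn G Y C) c M := by
  intro hM
  refine (h c M hM.1.notMem hM.1.nonempty (fun u hu v huv => ?_) x).elim
    (fun hxM => hx (hM.1.subset hxM)) (fun hxc => hx (hxc ▸ hc))
  have huC : u ∈ C := hM.1.subset hu
  rcases hnbr u huC v huv with hv | hv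
  · exact hM.1.closed u hu v hv huv
  · refine absurd (hM.2 u hu) fun hfree => (mem_union.1 hv).elim (fun hvX => ?_) fun hvY => ?_
    · exact hfree.1 (mem_nbrsIn.2 ⟨huC, v, hvX, huv.symm⟩)
    · exact hfree.2 (mem_nbrsIn.2 ⟨huC, v, hvY, huv.symm⟩)

/-- A set `H` in which every vertex of `X` is joined to every vertex of `Y` by paths of `L`
consecutive lengths, the least being `a + 1`, while a vertex outside `H` has fewer than `L`
neighbours in each of `X` and `Y`, and at most `L` in both together. -/
structure IsConnector (G : SimpleGraph V) (H X Y : Finset V) (L a : ℕ) : Prop where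
  two_le : 2 ≤ L
  subset_left : X ⊆ H
  degIn_left_lt : ∀ v ∉ H, degIn G v X < L
  degIn_right_lt : ∀ v ∉ H, degIn G v Y < L
  degIn_union_le : ∀ v ∉ H, degIn G v (X ∪ Y) ≤ L
  hasPathIn : ∀ x ∈ X, ∀ y ∈ Y, ∀ i < L, HasPathIn G H x y (a + 1 + i)

namespace IsConnector

variable {H X Y C : Finset V} {x y w : V} {k L a : ℕ}

theorem le_degIn_add_ind [Fintype V] (K : IsConnector G H X Y L a) {v : V}
    (hdeg : k ≤ degIn G v univ) (hL : L ≤ k) (hvH : v ∉ H) (hv : v ∈ C)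
    (hnbr : ∀ y, G.Adj v y → y ∈ C ∨ y ∈ X ∪ Y) :
    k - L + 1 + 1 ≤ degIn G v C + ind (nbrsIn G X C) v + ind (nbrsIn G Y C) v := by
  have hsplit := degIn_le_add (G := G) (C := univ) fun y _ => hnbr y
  have hunion := degIn_le_add (G := G) (v := v) fun y (hy : y ∈ X ∪ Y) _ => mem_union.1 hy
  have hX := degIn_le_mul_ind hv (Nat.le_sub_one_of_lt (K.degIn_left_lt v hvH))
  have hY := degIn_le_mul_ind hv (Nat.le_sub_one_of_lt (K.degIn_right_lt v hvH))
  have := K.two_le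
  have := K.degIn_union_le v hvH
  have := ind_le_one (X := nbrsIn G X C) (v := v)
  have := ind_le_one (X := nbrsIn G Y C) (v := v)
  interval_cases ind (nbrsIn G X C) v <;> interval_cases ind (nbrsIn G Y C) v <;> omega

theorem isRooted [Fintype V] (K : IsConnector G H X Y L a) (h : NoCutVertex G)
    (hdeg : ∀ v, k ≤ degIn G v univ) (hL : L ≤ k) (hC : ConnectedIn G C) (hCH : Disjoint C H)
    (hnbr : ∀ u ∈ C, ∀ v, G.Adj u v → v ∈ C ∨ v ∈ X ∪ Y) (hx : x ∈ X)
    (hX : (nbrsIn G X C).Nonempty) (hY : (nbrsIn G Y C).Nonempty) :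
    IsRooted G (k - L + 1) x C (nbrsIn G X C) (nbrsIn G Y C) where
  connected := hC
  subset_left := nbrsIn_subset
  subset_right := nbrsIn_subset
  nonempty_left := hX
  nonempty_right := hY
  not_isFreeLobe _ hc _ := h.not_isFreeLobe hnbr (disjoint_right.1 hCH (K.subset_left hx)) hc
  le_degIn v hv _ := K.le_degIn_add_ind (hdeg v) hL (disjoint_left.1 hCH hv) hv (hnbr v hv)
  exists_ne := hC.nonempty.imp fun _ hw =>
    ⟨hw, fun e => disjoint_left.1 hCH hw (e ▸ K.subset_left hx)⟩

theorem hasConsecCycles_of_admissible (K : IsConnector G H X Y L a) (hL : L ≤ k)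
    (hCH : Disjoint C H)
    (hadm : Admissible (k - L + 1) (Linked G C (nbrsIn G X C) (nbrsIn G Y C))) :
    HasConsecCycles G k := by
  obtain ⟨m, hm⟩ := hadm.exists_forall_mem_window (by omega) K.two_le
  refine ⟨m + a + 3, fun i hi => ?_⟩
  obtain ⟨n, ⟨u, hu, v, hv, hpath⟩, hle, hlt⟩ := hm i (by omega)
  obtain ⟨-, x, hx, hxu⟩ := mem_nbrsIn.1 hu
  obtain ⟨-, y, hy, hyv⟩ := mem_nbrsIn.1 hv
  have hcycle := hpath.append hyv.symm (K.hasPathIn x hx y hy (m + i - n) (by omega)).symm hCH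
  rw [show n + (a + 1 + (m + i - n)) + 1 = (m + a + i) + 2 by omega] at hcycle
  rw [show m + a + 3 + i = m + a + i + 3 by omega]
  exact hcycle.hasCycleLength hxu

theorem hasConsecCycles [Fintype V] (K : IsConnector G H X Y L a) (h : NoCutVertex G)
    (hdeg : ∀ v, k ≤ degIn G v univ) (hL : L ≤ k) (hw : w ∉ H)
    (hsub : nbrsIn G (componentIn G (univ \ H) w) H ⊆ X ∪ Y)
    (hx : x ∈ X) (hxC : x ∈ nbrsIn G (componentIn G (univ \ H) w) H)
    (hy : y ∈ Y) (hyC : y ∈ nbrsIn G (componentIn G (univ \ H) w) H) : HasConsecCycles G k := by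
  have hCH : Disjoint (componentIn G (univ \ H) w) H :=
    disjoint_left.2 fun u hu => (mem_componentIn_sdiff hu).2
  obtain ⟨-, u, hu, hux⟩ := mem_nbrsIn.1 hxC
  obtain ⟨-, v, hv, hvy⟩ := mem_nbrsIn.1 hyC
  refine K.hasConsecCycles_of_admissible hL hCH (K.isRooted h hdeg hL
    (connectedIn_componentIn (by simp [hw])) hCH (fun u hu v huv => ?_) hx
    ⟨u, mem_nbrsIn.2 ⟨hu, x, hx, hux.symm⟩⟩ ⟨v, mem_nbrsIn.2 ⟨hv, y, hy, hvy.symm⟩⟩).admissible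
  exact (mem_componentIn_sdiff_or_of_adj hu (mem_univ v) huv).imp_right fun hv =>
    hsub (mem_nbrsIn.2 ⟨hv, u, hu, huv⟩)

end IsConnector

namespace IsConnector

variable {H X : Finset V} {x y w : V} {k L a : ℕ}

theorem of_isClique (hH : G.IsClique H) (h3 : 3 ≤ #H) (hXH : X ⊆ H) (hX : #X + 1 < #H)
    (hdY : ∀ v ∉ H, degIn G v (H \ X) + 1 < #H) (hdH : ∀ v ∉ H, degIn G v H < #H) :
    IsConnector G H X (H \ X) (#H - 1) 0 where
  two_le := by omega
  subset_left := hXH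
  degIn_left_lt v _ := by
    have : degIn G v X ≤ #X := degIn_le_card
    omega
  degIn_right_lt v hv := by
    have := hdY v hv
    omega
  degIn_union_le v hv := by
    rw [union_sdiff_of_subset hXH]
    have := hdH v hv
    omega
  hasPathIn x hx y hy i hi := by
    obtain ⟨hyH, hyX⟩ := mem_sdiff.1 hy
    rw [Nat.zero_add, Nat.add_comm]
    exact hasPathIn_of_isClique hH (hXH hx) hyH (fun e => hyX (e ▸ hx)) (by omega)

theorem of_singleton (hx : x ∈ H) (hpath : ∀ i < 2, HasPathIn G H x y (a + 1 + i)) :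
    IsConnector G H {x} {y} 2 a where
  two_le := le_rfl
  subset_left := singleton_subset_iff.2 hx
  degIn_left_lt _ _ := Nat.lt_succ_of_le (degIn_le_card.trans (card_singleton _).le)
  degIn_right_lt _ _ := Nat.lt_succ_of_le (degIn_le_card.trans (card_singleton _).le)
  degIn_union_le _ _ := degIn_le_card.trans card_le_two
  hasPathIn x' hx' y' hy' := by
    rwa [mem_singleton.1 hx', mem_singleton.1 hy']

theorem hasConsecCycles_of_subset_pair [Fintype V] (K : IsConnector G H {x} {y} L a)
    (h : NoCutVertex G) (hdeg : ∀ v, k ≤ degIn G v univ) (hL : L ≤ k) (hH : 1 < #H) (hw : w ∉ H)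
    (hsub : nbrsIn G (componentIn G (univ \ H) w) H ⊆ {x, y}) : HasConsecCycles G k := by
  have heq := eq_of_subset_of_card_le hsub (card_le_two.trans (h.one_lt_card_nbrsIn hH hw))
  exact K.hasConsecCycles h hdeg hL hw hsub (mem_singleton_self x) (heq ▸ mem_insert_self x {y})
    (mem_singleton_self y) (heq ▸ mem_insert_of_mem (mem_singleton_self y))

end IsConnector

theorem hasConsecCycles_of_le_card_isClique {H : Finset V} {k : ℕ} (hH : G.IsClique H)
    (hkH : k + 2 ≤ #H) : HasConsecCycles G k := by
  obtain ⟨x, hx, y, hy, hxy⟩ := one_lt_card.1 (by omega : 1 < #H)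
  refine ⟨3, fun i hi => ?_⟩
  rw [Nat.add_comm]
  exact (hasPathIn_of_isClique (t := i + 1) hH hx hy hxy (by omega)).hasCycleLength
    (hH hy hx hxy.symm)

theorem NoCutVertex.hasConsecCycles_of_isClique [Fintype V] {K : Finset V} {k : ℕ}
    (h : NoCutVertex G) (hdeg : ∀ v, k ≤ degIn G v univ) (hcard : k + 2 ≤ Fintype.card V)
    (hK : G.IsClique K) (h4 : 4 ≤ #K) : HasConsecCycles G k := by
  obtain ⟨H, hH⟩ := G.maximumClique_exists
  have hH4 : 4 ≤ #H := h4.trans (hH.maximum K hK)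
  by_cases hkH : k + 2 ≤ #H
  · exact hasConsecCycles_of_le_card_isClique hH.isClique hkH
  obtain ⟨w, -, hw⟩ := exists_mem_notMem_of_card_lt_card (s := H) (t := univ)
    (by rw [card_univ]; omega)
  obtain ⟨x, hx, y, hy, hxy⟩ := one_lt_card.1 (h.one_lt_card_nbrsIn (by omega) hw)
  have hxH := nbrsIn_subset hx
  have hyH := nbrsIn_subset hy
  obtain ⟨x', hx', hxx, hxy'⟩ := exists_mem_ne_ne (by omega : 3 ≤ #H) x y
  have hX : #{x, x'} = 2 := card_pair hxx.symm
  have hXH : {x, x'} ⊆ H := insert_subset hxH (singleton_subset_iff.2 hx')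
  have K : IsConnector G H {x, x'} (H \ {x, x'}) (#H - 1) 0 := by
    refine .of_isClique hH.isClique (by omega) hXH (by omega) (fun v _ => ?_) fun v hv => ?_
    · have : degIn G v (H \ {x, x'}) ≤ #(H \ {x, x'}) := degIn_le_card
      rw [card_sdiff_of_subset hXH] at this
      omega
    · refine degIn_lt_card (by_contra fun hall => ?_)
      push Not at hall
      have := hH.maximum _ (isClique_insert_of_forall_adj hH.isClique hall)
      rw [card_insert_of_notMem hv] at this
      omega
  exact K.hasConsecCycles h hdeg (by omega) hw (by simp [union_sdiff_of_subset hXH, nbrsIn_subset])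
    (mem_insert_self x _) hx (by simp [hyH, hxy.symm, hxy'.symm]) hy

/-- The vertices `b`, `c`, `a`, `d` span a complete graph with the edge `ad` possibly missing. -/
structure IsDiamond (G : SimpleGraph V) (b c a d : V) : Prop where
  adj_mid : G.Adj b c
  adj_left : G.Adj b a
  adj_left' : G.Adj c a
  adj_right : G.Adj b d
  adj_right' : G.Adj c d
  ne : a ≠ d

theorem degIn_sdiff_singleton_lt_two {T : Finset V} {x v : V} (hT : G.IsNClique 3 T)
    (hfree : ∀ b c a d, ¬ IsDiamond G b c a d) (hx : x ∈ T) (hv : v ∉ T) :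
    degIn G v (T \ {x}) < 2 := by
  have hY : #(T \ {x}) = 2 := by
    rw [card_sdiff_of_subset (singleton_subset_iff.2 hx), hT.card_eq, card_singleton]
  obtain ⟨p, q, hpq, hpqT⟩ := card_eq_two.1 hY
  have hp : p ∈ T \ {x} := by simp [hpqT]
  have hq : q ∈ T \ {x} := by simp [hpqT]
  rw [← hY]
  refine degIn_lt_card (by_contra fun hall => ?_)
  push Not at hall
  obtain ⟨hpT, hpx⟩ := mem_sdiff.1 hp
  obtain ⟨hqT, hqx⟩ := mem_sdiff.1 hq
  rw [mem_singleton] at hpx hqx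
  exact hfree p q v x ⟨hT.1 hpT hqT hpq, (hall p hp).symm, (hall q hq).symm,
    hT.1 hpT hx hpx, hT.1 hqT hx hqx, fun e => hv (e ▸ hx)⟩

theorem NoCutVertex.hasConsecCycles_of_isNClique_three [Fintype V] {T : Finset V} {k : ℕ}
    (h : NoCutVertex G) (hdeg : ∀ v, k ≤ degIn G v univ) (hcard : k + 2 ≤ Fintype.card V)
    (hk : 2 ≤ k) (hT : G.IsNClique 3 T) (hfree : ∀ b c a d, ¬ IsDiamond G b c a d) :
    HasConsecCycles G k := by
  have hT3 := hT.card_eq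
  obtain ⟨w, -, hw⟩ := exists_mem_notMem_of_card_lt_card (s := T) (t := univ)
    (by rw [card_univ]; omega)
  obtain ⟨x, hx, y, hy, hxy⟩ := one_lt_card.1 (h.one_lt_card_nbrsIn (by omega) hw)
  have hxT := nbrsIn_subset hx
  have hyT := nbrsIn_subset hy
  have hXT : {x} ⊆ T := singleton_subset_iff.2 hxT
  have K : IsConnector G T {x} (T \ {x}) (#T - 1) 0 := by
    refine .of_isClique hT.1 (by omega) hXT (by simp [hT3]) (fun v hv => ?_) fun v hv => ?_
    · have := degIn_sdiff_singleton_lt_two hT hfree hxT hv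
      omega
    · have hsplit : degIn G v T ≤ degIn G v {x} + degIn G v (T \ {x}) :=
        degIn_le_add (by grind)
      have hdX : degIn G v {x} ≤ 1 := degIn_le_card
      have := degIn_sdiff_singleton_lt_two hT hfree hxT hv
      omega
  exact K.hasConsecCycles h hdeg (by omega) hw (by simp [union_sdiff_of_subset hXT, nbrsIn_subset])
    (mem_singleton_self x) hx (by simp [hyT, hxy.symm]) hy

namespace IsDiamond

variable {H : Finset V} {a b c d v : V} {k : ℕ}

theorem swap_mid (h : IsDiamond G b c a d) : IsDiamond G c b a d :=
  ⟨h.adj_mid.symm, h.adj_left', h.adj_left, h.adj_right', h.adj_right, h.ne⟩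

theorem swap_tips (h : IsDiamond G b c a d) : IsDiamond G b c d a :=
  ⟨h.adj_mid, h.adj_right, h.adj_right', h.adj_left, h.adj_left', h.ne.symm⟩

theorem hasPathIn_mid_mid (h : IsDiamond G b c a d) (hb : b ∈ H) (hc : c ∈ H) (ha : a ∈ H)
    {i : ℕ} (hi : i < 2) : HasPathIn G H b c (0 + 1 + i) := by
  interval_cases i
  · exact .of_adj hb hc h.adj_mid
  · exact .of_adj_adj hb ha hc h.adj_left h.adj_left'.symm h.adj_mid.ne

theorem hasPathIn_tip_tip (h : IsDiamond G b c a d) (hb : b ∈ H) (hc : c ∈ H) (ha : a ∈ H)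
    (hd : d ∈ H) {i : ℕ} (hi : i < 2) : HasPathIn G H a d (1 + 1 + i) := by
  interval_cases i
  · exact .of_adj_adj ha hb hd h.adj_left.symm h.adj_right h.ne
  · exact .cons ha h.adj_left.symm (.of_adj_adj (by simp [hb, h.adj_left.ne])
      (by simp [hc, h.adj_left'.ne]) (by simp [hd, h.ne.symm]) h.adj_mid h.adj_right'
      h.adj_right.ne)

theorem hasPathIn_mid_tip (h : IsDiamond G b c a d) (hb : b ∈ H) (hc : c ∈ H) (ha : a ∈ H)
    (hd : d ∈ H) {i : ℕ} (hi : i < 3) : HasPathIn G H b a (0 + 1 + i) := by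
  interval_cases i
  · exact .of_adj hb ha h.adj_left
  · exact .of_adj_adj hb hc ha h.adj_mid h.adj_left' h.adj_left.ne
  · exact .cons hb h.adj_right (.of_adj_adj (by simp [hd, h.adj_right.ne'])
      (by simp [hc, h.adj_mid.ne']) (by simp [ha, h.adj_left.ne']) h.adj_right'.symm h.adj_left'
      h.ne.symm)

theorem degIn_lt_four (h : IsDiamond G b c a d) (hK : G.CliqueFree 4) :
    degIn G v {b, c, a, d} < 4 := by
  refine (degIn_lt_card (by_contra fun hall => ?_)).trans_le card_le_four
  push Not at hall
  have hbca : G.IsNClique 3 {b, c, a} :=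
    is3Clique_triple_iff.2 ⟨h.adj_mid, h.adj_left, h.adj_left'⟩
  exact hK _ (hbca.insert fun t ht => hall t (by
    simp only [mem_insert, mem_singleton] at ht ⊢; tauto))

theorem isConnector (h : IsDiamond G b c a d) (hK : G.CliqueFree 4) :
    IsConnector G {b, c, a, d} {b, c} {a, d} 3 0 where
  two_le := by omega
  subset_left := by grind
  degIn_left_lt _ _ := Nat.lt_succ_of_le (degIn_le_card.trans card_le_two)
  degIn_right_lt _ _ := Nat.lt_succ_of_le (degIn_le_card.trans card_le_two)
  degIn_union_le v _ := by
    rw [insert_union, ← insert_eq]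
    exact Nat.le_of_lt_succ (h.degIn_lt_four hK)
  hasPathIn x hx y hy i hi := by
    simp only [mem_insert, mem_singleton] at hx hy
    rcases hx with rfl | rfl <;> rcases hy with rfl | rfl
    · exact h.hasPathIn_mid_tip (by simp) (by simp) (by simp) (by simp) hi
    · exact h.swap_tips.hasPathIn_mid_tip (by simp) (by simp) (by simp) (by simp) hi
    · exact h.swap_mid.hasPathIn_mid_tip (by simp) (by simp) (by simp) (by simp) hi
    · exact h.swap_mid.swap_tips.hasPathIn_mid_tip (by simp) (by simp) (by simp) (by simp) hi

theorem hasConsecCycles_of_le_two (h : IsDiamond G b c a d) (hk : k ≤ 2) :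
    HasConsecCycles G k := by
  refine ⟨3, fun i hi => ?_⟩
  have := h.hasPathIn_mid_tip (H := {b, c, a, d}) (i := i + 1) (by simp) (by simp) (by simp)
    (by simp) (by omega)
  rw [show 0 + 1 + (i + 1) = i + 2 by omega] at this
  rw [Nat.add_comm]
  exact this.hasCycleLength h.adj_left.symm

theorem hasConsecCycles [Fintype V] (h : IsDiamond G b c a d) (hcut : NoCutVertex G)
    (hdeg : ∀ v, k ≤ degIn G v univ) (hcard : k + 2 ≤ Fintype.card V) (hK : G.CliqueFree 4) :
    HasConsecCycles G k := by
  by_cases hk : k ≤ 2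
  · exact h.hasConsecCycles_of_le_two hk
  set H : Finset V := {b, c, a, d} with hH
  have hH4 : #H ≤ 4 := card_le_four
  have hH1 : 1 < #H := one_lt_card.2 ⟨b, by simp [hH], c, by simp [hH], h.adj_mid.ne⟩
  obtain ⟨w, -, hw⟩ := exists_mem_notMem_of_card_lt_card (s := H) (t := univ)
    (by rw [card_univ]; omega)
  have hsub : nbrsIn G (componentIn G (univ \ H) w) H ⊆ {b, c} ∪ {a, d} :=
    nbrsIn_subset.trans (by grind)
  by_cases hmid : ∃ x ∈ nbrsIn G (componentIn G (univ \ H) w) H, x ∈ ({b, c} : Finset V)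
  · by_cases htip : ∃ y ∈ nbrsIn G (componentIn G (univ \ H) w) H, y ∈ ({a, d} : Finset V)
    · obtain ⟨x, hxN, hx⟩ := hmid
      obtain ⟨y, hyN, hy⟩ := htip
      exact (h.isConnector hK).hasConsecCycles hcut hdeg (by omega) hw hsub hx hxN hy hyN
    · have K : IsConnector G H {b} {c} 2 0 := .of_singleton (by simp [hH]) fun i hi =>
        h.hasPathIn_mid_mid (by simp [hH]) (by simp [hH]) (by simp [hH]) hi
      exact K.hasConsecCycles_of_subset_pair hcut hdeg (by omega) hH1 hw (by grind)
  · have K : IsConnector G H {a} {d} 2 1 := .of_singleton (by simp [hH]) fun i hi =>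
      h.hasPathIn_tip_tip (by simp [hH]) (by simp [hH]) (by simp [hH]) (by simp [hH]) hi
    exact K.hasConsecCycles_of_subset_pair hcut hdeg (by omega) hH1 hw (by grind)

end IsDiamond

end Development

/-- Gao–Huo–Ma: a 2-connected graph with a triangle, minimum degree at least `k ≥ 2`
and order at least `k + 2` contains `k` cycles of consecutive lengths. -/
theorem consec_cycles_of_triangle {V : Type*} [Fintype V] (G : SimpleGraph V) (k : ℕ)
    (hk : 2 ≤ k) (h2 : KConnected G 2) (htri : ¬ G.CliqueFree 3)
    (hdeg : ∀ v, k ≤ (G.neighborSet v).ncard) (hcard : k + 2 ≤ Nat.card V) :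
    HasConsecCycles G k := by
  rw [Nat.card_eq_fintype_card] at hcard
  have hcut : NoCutVertex G := h2.noCutVertex
  have hdegIn : ∀ v, k ≤ degIn G v Finset.univ := fun v => degIn_univ (G := G) v ▸ hdeg v
  by_cases hK : G.CliqueFree 4
  · by_cases hfree : ∀ b c a d, ¬ IsDiamond G b c a d
    · obtain ⟨T, hT⟩ : ∃ T, G.IsNClique 3 T := by simpa only [CliqueFree, not_forall_not] using htri
      exact hcut.hasConsecCycles_of_isNClique_three hdegIn hcard hk hT hfree
    · push Not at hfree
      obtain ⟨b, c, a, d, h⟩ := hfree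
      exact h.hasConsecCycles hcut hdegIn hcard hK
  · obtain ⟨K, hK⟩ : ∃ K, G.IsNClique 4 K := by simpa only [CliqueFree, not_forall_not] using hK
    exact hcut.hasConsecCycles_of_isClique hdegIn hcard hK.1 hK.card_eq.ge
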